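/- Let 𝔐 be an R-regular weight matrix of R-moderate growth containing at least one non-quasianalytic weight sequence, and let d ≥ 1. Then the ring of germs at 0 ∈ ℝ^d of complex-valued E^{𝔐}-functions (Roumieu) has property (D): for every function f defined on an open neighborhood of 0 in ℝ^d and every integer j ≥ 1, if f^j and f^{j+1} are of class E^{𝔐} on some open neighborhood of 0, then f is of class E^{𝔐} on some open neighborhood of 0. -/

import Mathlib

open Filter Set Asymptotics MeasureTheory

noncomputable section

/-- `M` is a weight sequence: `M 0 = 1`, positive, `M 1 ≥ 1`, log-convex and
`M k ^ (1/k) → ∞`. -/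
def IsWeightSeq (M : ℕ → ℝ) : Prop :=
  M 0 = 1 ∧ (∀ k, 0 < M k) ∧ 1 ≤ M 1 ∧
    (∀ k : ℕ, 1 ≤ k → M k ^ 2 ≤ M (k - 1) * M (k + 1)) ∧
    Tendsto (fun k : ℕ => M k ^ (1 / (k : ℝ))) atTop atTop

/-- The sequence `m k = M k / k!`. -/
def mseq (M : ℕ → ℝ) : ℕ → ℝ := fun k => M k / (Nat.factorial k : ℝ)

/-- Log-convexity of a sequence. -/
def LogConvexSeq (m : ℕ → ℝ) : Prop := ∀ k : ℕ, 1 ≤ k → m k ^ 2 ≤ m (k - 1) * m (k + 1)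

/-- `m k ^ (1/k) → ∞`. -/
def RootTendsToInfty (m : ℕ → ℝ) : Prop :=
  Tendsto (fun k : ℕ => m k ^ (1 / (k : ℝ))) atTop atTop

/-- Moderate growth of a sequence. -/
def ModerateGrowth (M : ℕ → ℝ) : Prop :=
  ∃ C : ℝ, 0 < C ∧ ∀ j k : ℕ, M (j + k) ≤ C ^ (j + k) * M j * M k

/-- Derivation closedness of a sequence. -/
def DerivClosed (M : ℕ → ℝ) : Prop :=
  ∃ C : ℝ, 0 < C ∧ ∀ k : ℕ, M (k + 1) ≤ C ^ (k + 1) * M k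

/-- Non-quasianalyticity: `∑_{k≥1} M (k-1) / M k = ∑_{k≥1} 1/μ_k < ∞`. -/
def NonQuasianalytic (M : ℕ → ℝ) : Prop := Summable fun k : ℕ => M k / M (k + 1)

/-- Quasianalyticity: `∑_{k≥1} 1/μ_k = ∞`. -/
def Quasianalytic (M : ℕ → ℝ) : Prop := ¬ NonQuasianalytic M

/-- The associated function `h_m (t) = inf_k m k * t ^ k`. -/
def hFun (m : ℕ → ℝ) (t : ℝ) : ℝ := ⨅ k : ℕ, m k * t ^ k

/-- `Γ̄_m (t) = min {k | h_m t = m k * t ^ k}`. -/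
def GammaBar (m : ℕ → ℝ) (t : ℝ) : ℕ := sInf {k : ℕ | hFun m t = m k * t ^ k}

/-- `Γ̲_m (t) = min {k | m (k+1) / m k ≥ 1 / t}`. -/
def GammaLow (m : ℕ → ℝ) (t : ℝ) : ℕ := sInf {k : ℕ | 1 / t ≤ m (k + 1) / m k}

/-- The set whose supremum is `mg (M, N)`. -/
def mgSet (M N : ℕ → ℝ) : Set ℝ :=
  {x | ∃ j k : ℕ, 1 ≤ j + k ∧ x = (M (j + k) / (N j * N k)) ^ (1 / (j + k : ℝ))}

/-- `mg (M, N) = sup_{j+k ≥ 1} (M (j+k) / (N j * N k)) ^ (1/(j+k))`. -/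
def mg (M N : ℕ → ℝ) : ℝ := sSup (mgSet M N)

/-- `mg (M, N) < ∞`. -/
def MgFinite (M N : ℕ → ℝ) : Prop := BddAbove (mgSet M N)

/-- A weight sequence is regular: `m k ^ (1/k) → ∞`, derivation closed, and
`Γ̄_m (C t) ≤ Γ̲_m t` for some `C ≥ 1`. -/
def RegularWS (M : ℕ → ℝ) : Prop :=
  RootTendsToInfty (mseq M) ∧ DerivClosed M ∧
    ∃ C : ℝ, 1 ≤ C ∧ ∀ t : ℝ, 0 < t → GammaBar (mseq M) (C * t) ≤ GammaLow (mseq M) t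

/-- `f` is of class `E^{M}` (Roumieu) on the open set `U`. -/
def RoumieuOn {E : Type*} [NormedAddCommGroup E] [NormedSpace ℝ E]
    (M : ℕ → ℝ) (f : E → ℂ) (U : Set E) : Prop :=
  ContDiffOn ℝ (⊤ : ℕ∞) f U ∧
    ∀ V : Set E, IsOpen V → IsCompact (closure V) → closure V ⊆ U →
      ∃ C σ : ℝ, 0 < C ∧ 0 < σ ∧
        ∀ x ∈ V, ∀ k : ℕ, ‖iteratedFDerivWithin ℝ k f U x‖ ≤ C * σ ^ k * M k

/-- `f` is of class `E^{(M)}` (Beurling) on the open set `U`. -/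
def BeurlingOn {E : Type*} [NormedAddCommGroup E] [NormedSpace ℝ E]
    (M : ℕ → ℝ) (f : E → ℂ) (U : Set E) : Prop :=
  ContDiffOn ℝ (⊤ : ℕ∞) f U ∧
    ∀ V : Set E, IsOpen V → IsCompact (closure V) → closure V ⊆ U →
      ∀ σ : ℝ, 0 < σ → ∃ C : ℝ, 0 < C ∧
        ∀ x ∈ V, ∀ k : ℕ, ‖iteratedFDerivWithin ℝ k f U x‖ ≤ C * σ ^ k * M k

/-- A weight matrix: a nonempty, pointwise totally ordered family of weight sequences. -/
def IsWeightMatrix (W : Set (ℕ → ℝ)) : Prop :=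
  W.Nonempty ∧ (∀ M ∈ W, IsWeightSeq M) ∧
    ∀ M ∈ W, ∀ N ∈ W, (∀ k, M k ≤ N k) ∨ (∀ k, N k ≤ M k)

/-- R-regularity of a weight matrix. -/
def RRegular (W : Set (ℕ → ℝ)) : Prop :=
  (∀ M ∈ W, RootTendsToInfty (mseq M)) ∧
    (∀ M ∈ W, ∃ N ∈ W, ∃ C : ℝ, 1 ≤ C ∧ ∀ j : ℕ, M (j + 1) ≤ C ^ (j + 1) * N j) ∧
    (∀ M ∈ W, ∃ N ∈ W, ∃ C : ℝ, 1 ≤ C ∧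
      ∀ t : ℝ, 0 < t → GammaBar (mseq N) (C * t) ≤ GammaLow (mseq M) t)

/-- B-regularity of a weight matrix. -/
def BRegular (W : Set (ℕ → ℝ)) : Prop :=
  (∀ M ∈ W, RootTendsToInfty (mseq M)) ∧
    (∀ M ∈ W, ∃ N ∈ W, ∃ C : ℝ, 1 ≤ C ∧ ∀ j : ℕ, N (j + 1) ≤ C ^ j * M j) ∧
    (∀ M ∈ W, ∃ N ∈ W, ∃ C : ℝ, 1 ≤ C ∧
      ∀ t : ℝ, 0 < t → GammaBar (mseq M) (C * t) ≤ GammaLow (mseq N) t)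

/-- R-moderate growth of a weight matrix. -/
def RModerateGrowth (W : Set (ℕ → ℝ)) : Prop := ∀ M ∈ W, ∃ N ∈ W, MgFinite M N

/-- B-moderate growth of a weight matrix. -/
def BModerateGrowth (W : Set (ℕ → ℝ)) : Prop := ∀ M ∈ W, ∃ N ∈ W, MgFinite N M

/-- `f` is of class `E^{W}` (Roumieu, weight matrix) on the open set `U`. -/
def MatrixRoumieuOn {E : Type*} [NormedAddCommGroup E] [NormedSpace ℝ E]
    (W : Set (ℕ → ℝ)) (f : E → ℂ) (U : Set E) : Prop :=
  ContDiffOn ℝ (⊤ : ℕ∞) f U ∧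
    ∀ V : Set E, IsOpen V → IsCompact (closure V) → closure V ⊆ U →
      ∃ M ∈ W, ∃ C σ : ℝ, 0 < C ∧ 0 < σ ∧
        ∀ x ∈ V, ∀ k : ℕ, ‖iteratedFDerivWithin ℝ k f U x‖ ≤ C * σ ^ k * M k

/-- `f` is of class `E^{(W)}` (Beurling, weight matrix) on the open set `U`. -/
def MatrixBeurlingOn {E : Type*} [NormedAddCommGroup E] [NormedSpace ℝ E]
    (W : Set (ℕ → ℝ)) (f : E → ℂ) (U : Set E) : Prop :=
  ContDiffOn ℝ (⊤ : ℕ∞) f U ∧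
    ∀ V : Set E, IsOpen V → IsCompact (closure V) → closure V ⊆ U →
      ∀ M ∈ W, ∀ σ : ℝ, 0 < σ → ∃ C : ℝ, 0 < C ∧
        ∀ x ∈ V, ∀ k : ℕ, ‖iteratedFDerivWithin ℝ k f U x‖ ≤ C * σ ^ k * M k

/-- `ω` is a weight function. -/
def IsWeightFunction (ω : ℝ → ℝ) : Prop :=
  ContinuousOn ω (Ici 0) ∧ MonotoneOn ω (Ici 0) ∧ (∀ t ∈ Ici (0 : ℝ), 0 ≤ ω t) ∧
    ((fun t => ω (2 * t)) =O[atTop] ω) ∧ (ω =o[atTop] fun t : ℝ => t) ∧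
    ((fun t => Real.log t) =o[atTop] ω) ∧ ConvexOn ℝ (Ici 0) fun t => ω (Real.exp t)

/-- The Young conjugate `φ*_ω (s) = sup_{t ≥ 0} (s t - ω (e^t))`. -/
def phiStar (ω : ℝ → ℝ) (s : ℝ) : ℝ := sSup ((fun t => s * t - ω (Real.exp t)) '' Ici 0)

/-- Non-quasianalyticity of a weight function. -/
def NonQuasianalyticW (ω : ℝ → ℝ) : Prop := IntegrableOn (fun t => ω t / t ^ 2) (Ici 1)

/-- `f` is of class `E^{ω}` (Roumieu) on the open set `U`. -/
def OmegaRoumieuOn {E : Type*} [NormedAddCommGroup E] [NormedSpace ℝ E]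
    (ω : ℝ → ℝ) (f : E → ℂ) (U : Set E) : Prop :=
  ContDiffOn ℝ (⊤ : ℕ∞) f U ∧
    ∀ V : Set E, IsOpen V → IsCompact (closure V) → closure V ⊆ U →
      ∃ C ρ : ℝ, 0 < C ∧ 0 < ρ ∧
        ∀ x ∈ V, ∀ k : ℕ,
          ‖iteratedFDerivWithin ℝ k f U x‖ ≤ C * Real.exp (phiStar ω (ρ * k) / ρ)

/-- `f` is of class `E^{(ω)}` (Beurling) on the open set `U`. -/
def OmegaBeurlingOn {E : Type*} [NormedAddCommGroup E] [NormedSpace ℝ E]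
    (ω : ℝ → ℝ) (f : E → ℂ) (U : Set E) : Prop :=
  ContDiffOn ℝ (⊤ : ℕ∞) f U ∧
    ∀ V : Set E, IsOpen V → IsCompact (closure V) → closure V ⊆ U →
      ∀ ρ : ℝ, 0 < ρ → ∃ C : ℝ, 0 < C ∧
        ∀ x ∈ V, ∀ k : ℕ,
          ‖iteratedFDerivWithin ℝ k f U x‖ ≤ C * Real.exp (phiStar ω (ρ * k) / ρ)

/-- The open ellipse `Ω_ε` with vertices `± cosh ε` and co-vertices `± i sinh ε`. -/
def OmegaE (ε : ℝ) : Set ℂ :=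
  {z : ℂ | (z.re / Real.cosh ε) ^ 2 + (z.im / Real.sinh ε) ^ 2 < 1}

/-- The sequence space `Λ^{M}`. -/
def Lambda (M : ℕ → ℝ) : Set (ℕ → ℂ) :=
  {c | ∃ ρ : ℝ, 0 < ρ ∧ ∃ C : ℝ, ∀ k, ‖c k‖ ≤ C * ρ ^ k * M k}

/-- `L(M)`: all non-quasianalytic weight sequences `N ≥ M` with `n = N/k!` log-convex. -/
def LM (M : ℕ → ℝ) : Set (ℕ → ℝ) :=
  {N | IsWeightSeq N ∧ NonQuasianalytic N ∧ (∀ k, M k ≤ N k) ∧ LogConvexSeq (mseq N)}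

/-- A quasianalytic weight sequence `M` is intersectable if `Λ^{M} = ⋂_{N ∈ L(M)} Λ^{N}`. -/
def Intersectable (M : ℕ → ℝ) : Prop := Lambda M = ⋂ N ∈ LM M, Lambda N

/-!
Restrict `f` to a line, obtaining `φ`; then `φ ^ j` and `φ ^ (j + 1)` satisfy the Taylor bounds of
the class. At scale `t` truncate their Taylor series at order `Γ̄_n(C t)`, where the remainder is
of size `h_n(C t)`. For the Taylor polynomials `P` of `φ ^ j` and `Q` of `φ ^ (j + 1)`, the
polynomial `P ^ (j + 1) - Q ^ j` is tiny on a real interval, hence, by a Bernstein–Walsh inequality,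
on a complex disc of radius proportional to `t`. So there `|Q| ≲ |P| ^ (1 + 1 / j)` up to a small
error `r`, and the regularized quotient `Q * conj P / (|P| ^ 2 + r ^ 2)` has a small `∂̄`: the
exponent `1 + 1 / j > 1` beats the logarithmic derivative `P' / P`. Subtracting a Cauchy transform
makes the quotient holomorphic, so `φ` is approximated on a disc of radius proportional to `t` with
an error that is a power of `h`, which R-moderate growth turns into `A * h_l(D t)` for another
sequence of the matrix.

Telescoping over dyadic scales and Cauchy-type estimates on each scale bound the iterated
differences, `|Δ_s^n φ(0)| ≤ s ^ n * (A * τ ^ n * N n + O(s))`, uniformly in the base point and the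
direction of the line. By mollification and polarization, such bounds imply that `f` is smooth
with derivatives bounded by the weights `N n`.
-/

section AssociatedFunction

variable {m n : ℕ → ℝ} {s t C : ℝ}

lemma tendsto_mul_pow_atTop (hn : ∀ k, 0 < n k) (hroot : RootTendsToInfty n) (ht : 0 < t) :
    Tendsto (fun k => n k * t ^ k) atTop atTop := by
  refine tendsto_atTop_mono' _ ?_ (tendsto_pow_atTop_atTop_of_one_lt (one_lt_two (α := ℝ)))
  filter_upwards [hroot.eventually_ge_atTop (2 / t), eventually_gt_atTop 0] with k hk hk0
  have hpow : (2 / t) ^ k ≤ n k := by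
    have := pow_le_pow_left₀ (by positivity) hk k
    rwa [one_div, Real.rpow_inv_natCast_pow (hn k).le hk0.ne'] at this
  calc (2 : ℝ) ^ k = (2 / t) ^ k * t ^ k := by rw [← mul_pow, div_mul_cancel₀ _ ht.ne']
    _ ≤ n k * t ^ k := by gcongr

lemma hFun_nonneg (hn : ∀ k, 0 < n k) (ht : 0 < t) : 0 ≤ hFun n t :=
  Real.iInf_nonneg fun k => (mul_pos (hn k) (pow_pos ht k)).le

lemma hFun_le_mul_pow (hn : ∀ k, 0 < n k) (ht : 0 < t) (k : ℕ) : hFun n t ≤ n k * t ^ k :=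
  ciInf_le ⟨0, by rintro _ ⟨k, rfl⟩; exact (mul_pos (hn k) (pow_pos ht k)).le⟩ k

lemma exists_hFun_eq (hn : ∀ k, 0 < n k) (hroot : RootTendsToInfty n) (ht : 0 < t) :
    ∃ k, hFun n t = n k * t ^ k := by
  obtain ⟨k, hk⟩ := (continuous_of_discreteTopology (f := fun k => n k * t ^ k)).exists_forall_le
    (by simpa only [cocompact_eq_atTop] using tendsto_mul_pow_atTop hn hroot ht)
  exact ⟨k, (hFun_le_mul_pow hn ht k).antisymm (le_ciInf hk)⟩

lemma hFun_eq_gammaBar (hn : ∀ k, 0 < n k) (hroot : RootTendsToInfty n) (ht : 0 < t) :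
    hFun n t = n (GammaBar n t) * t ^ GammaBar n t :=
  Nat.sInf_mem (s := {k | hFun n t = n k * t ^ k}) (exists_hFun_eq hn hroot ht)

lemma hFun_pos (hn : ∀ k, 0 < n k) (hroot : RootTendsToInfty n) (ht : 0 < t) : 0 < hFun n t := by
  rw [hFun_eq_gammaBar hn hroot ht]
  exact mul_pos (hn _) (pow_pos ht _)

lemma hFun_le_hFun (hn : ∀ k, 0 < n k) (hs : 0 < s) (hst : s ≤ t) : hFun n s ≤ hFun n t := by
  refine le_ciInf fun k => (hFun_le_mul_pow hn hs k).trans ?_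
  have := (hn k).le
  gcongr

lemma hFun_lt_of_lt_gammaBar (hn : ∀ k, 0 < n k) (ht : 0 < t) {k : ℕ} (hk : k < GammaBar n t) :
    hFun n t < n k * t ^ k :=
  (hFun_le_mul_pow hn ht k).lt_of_ne (Nat.notMem_of_lt_sInf hk)

lemma gammaBar_le_gammaBar (hn : ∀ k, 0 < n k) (hroot : RootTendsToInfty n) (hs : 0 < s)
    (hst : s ≤ t) : GammaBar n t ≤ GammaBar n s := by
  by_contra! hlt
  have ht := hs.trans_le hst
  have hmin_t := hFun_eq_gammaBar hn hroot ht ▸ hFun_lt_of_lt_gammaBar hn ht hlt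
  have hmin_s := hFun_eq_gammaBar hn hroot hs ▸ hFun_le_mul_pow hn hs (GammaBar n t)
  obtain ⟨d, hd⟩ := Nat.exists_eq_add_of_le hlt.le
  rw [hd] at hmin_t hmin_s
  generalize GammaBar n s = q at *
  have hnq := hn q
  have hnp := hn (q + d)
  have hpow : s ^ d ≤ t ^ d := pow_le_pow_left₀ hs.le hst d
  refine lt_irrefl (n (q + d) * t ^ (q + d) * (n q * s ^ q)) ?_
  calc n (q + d) * t ^ (q + d) * (n q * s ^ q)
      < n q * t ^ q * (n (q + d) * s ^ (q + d)) :=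
        mul_lt_mul hmin_t hmin_s (by positivity) (by positivity)
    _ = n q * t ^ q * n (q + d) * s ^ q * s ^ d := by ring
    _ ≤ n q * t ^ q * n (q + d) * s ^ q * t ^ d := by gcongr
    _ = n (q + d) * t ^ (q + d) * (n q * s ^ q) := by ring

lemma exists_gammaBar_eq_zero (hn : ∀ k, 0 < n k) (hroot : RootTendsToInfty n) (s : ℝ) :
    ∃ t, s ≤ t ∧ GammaBar n t = 0 := by
  have hbig : ∀ᶠ t : ℝ in atTop, ∀ k ∈ Finset.range (GammaBar n 1 + 1), n 0 ≤ n k * t :=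
    (Finset.eventually_all _).2 fun k _ =>
      (tendsto_id.const_mul_atTop (hn k)).eventually_ge_atTop (n 0)
  obtain ⟨t, ht, hst, ht1⟩ :=
    (hbig.and ((eventually_ge_atTop s).and (eventually_ge_atTop 1))).exists
  refine ⟨t, hst, by_contra fun hne => ?_⟩
  have htpos : 0 < t := one_pos.trans_le ht1
  have hlt := hFun_eq_gammaBar hn hroot htpos ▸
    hFun_lt_of_lt_gammaBar hn htpos (Nat.pos_of_ne_zero hne)
  have hle := ht _ (Finset.mem_range_succ_iff.2 (gammaBar_le_gammaBar hn hroot one_pos ht1))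
  have := le_self_pow₀ ht1 hne
  have := hn (GammaBar n t)
  rw [pow_zero, mul_one] at hlt
  nlinarith

lemma mul_le_of_lt_gammaLow (hm : ∀ k, 0 < m k) (ht : 0 < t) {k : ℕ} (hk : k < GammaLow m t) :
    m (k + 1) * t ≤ m k := by
  have h : ¬1 / t ≤ m (k + 1) / m k := Nat.notMem_of_lt_sInf hk
  rw [not_le, div_lt_div_iff₀ (hm k) ht, one_mul] at h
  exact h.le

end AssociatedFunction

/-- A pair of positive sequences normalized by `m 0 = n 0 = 1` which satisfies the last condition
in the definition of R-regularity with constant `C`. It is applied to `m = mseq M`,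
`n = mseq N`. -/
structure IsRegularPair (m n : ℕ → ℝ) (C : ℝ) : Prop where
  pos_left : ∀ k, 0 < m k
  pos_right : ∀ k, 0 < n k
  zero_left : m 0 = 1
  zero_right : n 0 = 1
  rootTendsToInfty : RootTendsToInfty n
  one_le : 1 ≤ C
  gammaBar_le_gammaLow : ∀ t : ℝ, 0 < t → GammaBar n (C * t) ≤ GammaLow m t

namespace IsRegularPair

variable {m n : ℕ → ℝ} {C s t : ℝ}

lemma pos (h : IsRegularPair m n C) : 0 < C := one_pos.trans_le h.one_le

lemma mul_le (h : IsRegularPair m n C) (ht : 0 < t) {k : ℕ} (hk : k < GammaBar n (C * t)) :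
    m (k + 1) * t ≤ m k :=
  mul_le_of_lt_gammaLow h.pos_left ht (hk.trans_le (h.gammaBar_le_gammaLow t ht))

lemma mul_pow_le_mul_pow (h : IsRegularPair m n C) (ht : 0 < t) {k l : ℕ} (hkl : k ≤ l)
    (hl : l ≤ GammaBar n (C * t)) : m l * t ^ l ≤ m k * t ^ k := by
  induction l, hkl using Nat.le_induction with
  | base => rfl
  | succ l _ ih =>
    calc m (l + 1) * t ^ (l + 1) = m (l + 1) * t * t ^ l := by ring
      _ ≤ m l * t ^ l := by gcongr; exact h.mul_le ht hl
      _ ≤ m k * t ^ k := ih (by lia)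

lemma mul_pow_le_one (h : IsRegularPair m n C) (ht : 0 < t) {k : ℕ}
    (hk : k ≤ GammaBar n (C * t)) : m k * t ^ k ≤ 1 := by
  simpa [h.zero_left] using h.mul_pow_le_mul_pow ht k.zero_le hk

/-- The quotient of `m p` and `C ^ p * n p` at the vertex `p = GammaBar n t` of the convex hull
of `n` that belongs to `t`. -/
def vertexRatio (m n : ℕ → ℝ) (C t : ℝ) : ℝ :=
  m (GammaBar n t) / (C ^ GammaBar n t * n (GammaBar n t))

lemma vertexRatio_pos (h : IsRegularPair m n C) : 0 < vertexRatio m n C t :=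
  div_pos (h.pos_left _) (mul_pos (pow_pos h.pos _) (h.pos_right _))

lemma vertexRatio_mul_pow_le (h : IsRegularPair m n C) {x : ℝ} (hs : 0 < s) (hx : 1 ≤ x) :
    vertexRatio m n C s * x ^ GammaBar n (s * x) ≤
      vertexRatio m n C (s * x) * x ^ GammaBar n s := by
  have hC := h.pos
  have hx0 : 0 < x := one_pos.trans_le hx
  have hle : GammaBar n (s * x) ≤ GammaBar n s :=
    gammaBar_le_gammaBar h.pos_right h.rootTendsToInfty hs (le_mul_of_one_le_right hs.le hx)
  have hm := h.mul_pow_le_mul_pow (t := s / C) (by positivity) hle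
    (by rw [mul_div_cancel₀ _ hC.ne'])
  have hn := hFun_eq_gammaBar h.pos_right h.rootTendsToInfty (mul_pos hs hx0) ▸
    hFun_le_mul_pow h.pos_right (mul_pos hs hx0) (GammaBar n s)
  have hnp := h.pos_right (GammaBar n (s * x))
  have hmp := h.pos_left (GammaBar n (s * x))
  have hnq := h.pos_right (GammaBar n s)
  unfold vertexRatio
  generalize GammaBar n (s * x) = p at *
  generalize GammaBar n s = q at *
  rw [div_pow, div_pow, mul_div_assoc', mul_div_assoc', div_le_div_iff₀ (by positivity)
    (by positivity)] at hm
  rw [div_mul_eq_mul_div, div_mul_eq_mul_div, div_le_div_iff₀ (by positivity) (by positivity)]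
  refine le_of_mul_le_mul_right ?_ (by positivity : 0 < s ^ q * s ^ p)
  calc m q * x ^ p * (C ^ p * n p) * (s ^ q * s ^ p)
      = m q * s ^ q * C ^ p * (n p * (s * x) ^ p) := by ring
    _ ≤ m p * s ^ p * C ^ q * (n q * (s * x) ^ q) := by gcongr
    _ = m p * x ^ q * (C ^ q * n q) * (s ^ q * s ^ p) := by ring

lemma vertexRatio_mul_pow_le_iterate (h : IsRegularPair m n C) {x : ℝ} (hs : 0 < s) (hx : 1 ≤ x)
    (i : ℕ) :
    vertexRatio m n C s * x ^ GammaBar n (s * x ^ i) ≤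
      vertexRatio m n C (s * x ^ i) * x ^ GammaBar n s := by
  have : 0 < x := one_pos.trans_le hx
  induction i with
  | zero => simp
  | succ i ih =>
    have hstep := h.vertexRatio_mul_pow_le (s := s * x ^ i) (by positivity) hx
    rw [mul_assoc, ← pow_succ] at hstep
    have := h.vertexRatio_pos (t := s * x ^ i)
    have := h.vertexRatio_pos (t := s * x ^ (i + 1))
    refine le_of_mul_le_mul_right (a := vertexRatio m n C (s * x ^ i) * x ^ GammaBar n (s * x ^ i))
      ?_ (by positivity)
    calc _ = vertexRatio m n C s * x ^ GammaBar n (s * x ^ i) *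
          (vertexRatio m n C (s * x ^ i) * x ^ GammaBar n (s * x ^ (i + 1))) := by ring
      _ ≤ vertexRatio m n C (s * x ^ i) * x ^ GammaBar n s *
          (vertexRatio m n C (s * x ^ (i + 1)) * x ^ GammaBar n (s * x ^ i)) := by
        gcongr
      _ = _ := by ring

/- Follow the vertices along a geometric grid from `s` up to a point `t` with `GammaBar n t = 0`.
The errors telescope to `x ^ GammaBar n s`, where `x` is the ratio of the grid, and `x` may be
taken arbitrarily close to `1`. -/
lemma vertexRatio_le_one (h : IsRegularPair m n C) (hs : 0 < s) : vertexRatio m n C s ≤ 1 := by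
  obtain ⟨t, hst, ht0⟩ := exists_gammaBar_eq_zero h.pos_right h.rootTendsToInfty s
  have hgrid : ∀ᶠ i : ℕ in atTop,
      vertexRatio m n C s ≤ ((t / s) ^ (1 / (i : ℝ))) ^ GammaBar n s := by
    filter_upwards [eventually_ne_atTop 0] with i hi
    have hx : 1 ≤ (t / s) ^ (1 / (i : ℝ)) :=
      Real.one_le_rpow ((one_le_div hs).2 hst) (by positivity)
    have hit := h.vertexRatio_mul_pow_le_iterate hs hx i
    rw [one_div, Real.rpow_inv_natCast_pow (div_pos (hs.trans_le hst) hs).le hi,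
      mul_div_cancel₀ _ hs.ne', ht0, pow_zero, mul_one] at hit
    simpa [vertexRatio, ht0, h.zero_left, h.zero_right] using hit
  have hlim : Tendsto (fun i : ℕ => ((t / s) ^ (1 / (i : ℝ))) ^ GammaBar n s) atTop (nhds 1) := by
    simpa using ((Real.continuousAt_const_rpow (div_pos (hs.trans_le hst) hs).ne').tendsto.comp
      tendsto_one_div_atTop_nhds_zero_nat).pow (GammaBar n s)
  exact ge_of_tendsto hlim hgrid

lemma mul_pow_gammaBar_le_hFun (h : IsRegularPair m n C) (ht : 0 < t) :
    m (GammaBar n (C * t)) * t ^ GammaBar n (C * t) ≤ hFun n (C * t) := by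
  have hCt : 0 < C * t := mul_pos h.pos ht
  have hratio := h.vertexRatio_le_one hCt
  rw [vertexRatio, div_le_one (mul_pos (pow_pos h.pos _) (h.pos_right _))] at hratio
  calc m (GammaBar n (C * t)) * t ^ GammaBar n (C * t)
      ≤ C ^ GammaBar n (C * t) * n (GammaBar n (C * t)) * t ^ GammaBar n (C * t) := by gcongr
    _ = hFun n (C * t) := by rw [hFun_eq_gammaBar h.pos_right h.rootTendsToInfty hCt]; ring

lemma hFun_le_one (h : IsRegularPair m n C) (ht : 0 < t) : hFun n t ≤ 1 := by
  simpa [h.zero_right] using hFun_le_mul_pow h.pos_right ht 0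

lemma hFun_pos (h : IsRegularPair m n C) (ht : 0 < t) : 0 < hFun n t :=
  _root_.hFun_pos h.pos_right h.rootTendsToInfty ht

end IsRegularPair

section ModerateGrowth

variable {M N : ℕ → ℝ}

lemma IsWeightSeq.pos (hM : IsWeightSeq M) (k : ℕ) : 0 < M k := hM.2.1 k

lemma IsWeightSeq.mseq_pos (hM : IsWeightSeq M) (k : ℕ) : 0 < mseq M k :=
  div_pos (hM.pos k) (by positivity)

lemma IsWeightSeq.mseq_zero (hM : IsWeightSeq M) : mseq M 0 = 1 := by
  simp [mseq, hM.1]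

lemma exists_le_pow_mul_of_mgFinite (hM : IsWeightSeq M) (hN : IsWeightSeq N)
    (h : MgFinite M N) : ∃ C : ℝ, 0 < C ∧ ∀ j k, M (j + k) ≤ C ^ (j + k) * (N j * N k) := by
  obtain ⟨B, hB⟩ := h
  refine ⟨max B 1, by positivity, fun j k => ?_⟩
  rcases Nat.eq_zero_or_pos (j + k) with hjk | hjk
  · obtain ⟨rfl, rfl⟩ := Nat.add_eq_zero_iff.1 hjk
    simp [hM.1, hN.1]
  have hNN : 0 < N j * N k := mul_pos (hN.pos j) (hN.pos k)
  have hroot : (M (j + k) / (N j * N k)) ^ (1 / (j + k : ℝ)) ≤ max B 1 :=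
    (hB ⟨j, k, hjk, rfl⟩).trans (le_max_left _ _)
  have hpow := pow_le_pow_left₀ (Real.rpow_nonneg (div_pos (hM.pos _) hNN).le _) hroot (j + k)
  rwa [← Nat.cast_add, one_div, Real.rpow_inv_natCast_pow (div_pos (hM.pos _) hNN).le hjk.ne',
    div_le_iff₀ hNN] at hpow

lemma exists_hFun_le_sq (hM : IsWeightSeq M) (hN : IsWeightSeq N)
    (hroot : RootTendsToInfty (mseq N)) (h : MgFinite M N) :
    ∃ C : ℝ, 0 < C ∧ ∀ t, 0 < t → hFun (mseq M) t ≤ hFun (mseq N) (C * t) ^ 2 := by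
  obtain ⟨C, hC, hMN⟩ := exists_le_pow_mul_of_mgFinite hM hN h
  refine ⟨C, hC, fun t ht => ?_⟩
  obtain ⟨k, hk⟩ := exists_hFun_eq hN.mseq_pos hroot (mul_pos hC ht)
  have hfact : (k.factorial * k.factorial : ℝ) ≤ (k + k).factorial := by
    exact_mod_cast Nat.le_of_dvd (Nat.factorial_pos _)
      (Nat.factorial_mul_factorial_dvd_factorial_add k k)
  have hm : mseq M (k + k) ≤ C ^ (k + k) * (mseq N k * mseq N k) := by
    have := hN.pos k
    rw [mseq, mseq, div_mul_div_comm, ← mul_div_assoc]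
    exact div_le_div₀ (by positivity) (hMN k k) (by positivity) hfact
  calc hFun (mseq M) t ≤ mseq M (k + k) * t ^ (k + k) := hFun_le_mul_pow hM.mseq_pos ht _
    _ ≤ C ^ (k + k) * (mseq N k * mseq N k) * t ^ (k + k) := by gcongr
    _ = hFun (mseq N) (C * t) ^ 2 := by rw [hk]; ring

variable {W : Set (ℕ → ℝ)}

lemma exists_hFun_le_pow_two_pow (hW : IsWeightMatrix W)
    (hroot : ∀ M ∈ W, RootTendsToInfty (mseq M)) (hmg : RModerateGrowth W) (hM : M ∈ W) (q : ℕ) :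
    ∃ N ∈ W, ∃ C : ℝ, 0 < C ∧
      ∀ t, 0 < t → hFun (mseq M) t ≤ hFun (mseq N) (C * t) ^ 2 ^ q := by
  induction q with
  | zero => exact ⟨M, hM, 1, one_pos, fun _ _ => by simp⟩
  | succ q ih =>
    obtain ⟨N, hN, C, hC, hMN⟩ := ih
    obtain ⟨L, hL, hNL⟩ := hmg N hN
    obtain ⟨D, hD, hNL⟩ := exists_hFun_le_sq (hW.2.1 N hN) (hW.2.1 L hL) (hroot L hL) hNL
    refine ⟨L, hL, D * C, mul_pos hD hC, fun t ht => ?_⟩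
    have hCt := mul_pos hC ht
    have := hFun_nonneg (hW.2.1 N hN).mseq_pos hCt
    calc hFun (mseq M) t ≤ hFun (mseq N) (C * t) ^ 2 ^ q := hMN t ht
      _ ≤ (hFun (mseq L) (D * (C * t)) ^ 2) ^ 2 ^ q := by gcongr; exact hNL _ hCt
      _ = hFun (mseq L) (D * C * t) ^ 2 ^ (q + 1) := by rw [← pow_mul, mul_assoc, pow_succ' 2 q]

lemma exists_hFun_rpow_le (hW : IsWeightMatrix W)
    (hroot : ∀ M ∈ W, RootTendsToInfty (mseq M)) (hmg : RModerateGrowth W) (hM : M ∈ W)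
    {θ : ℝ} (hθ : 0 < θ) :
    ∃ N ∈ W, ∃ C : ℝ, 0 < C ∧ ∀ t, 0 < t → hFun (mseq M) t ^ θ ≤ hFun (mseq N) (C * t) := by
  obtain ⟨q, hq⟩ := pow_unbounded_of_one_lt θ⁻¹ one_lt_two
  obtain ⟨N, hN, C, hC, hMN⟩ := exists_hFun_le_pow_two_pow hW hroot hmg hM q
  refine ⟨N, hN, C, hC, fun t ht => ?_⟩
  have hCt := mul_pos hC ht
  have hpos := hFun_pos (hW.2.1 N hN).mseq_pos (hroot N hN) hCt
  have hle_one : hFun (mseq N) (C * t) ≤ 1 := by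
    simpa [(hW.2.1 N hN).mseq_zero] using hFun_le_mul_pow (hW.2.1 N hN).mseq_pos hCt 0
  calc hFun (mseq M) t ^ θ ≤ (hFun (mseq N) (C * t) ^ 2 ^ q) ^ θ :=
        Real.rpow_le_rpow (hFun_nonneg (hW.2.1 M hM).mseq_pos ht) (hMN t ht) hθ.le
    _ = hFun (mseq N) (C * t) ^ (2 ^ q * θ) := by
        rw [← Real.rpow_natCast, ← Real.rpow_mul hpos.le]; norm_num
    _ ≤ hFun (mseq N) (C * t) ^ (1 : ℝ) :=
        Real.rpow_le_rpow_of_exponent_ge hpos hle_one ((inv_le_iff_one_le_mul₀ hθ).1 hq.le)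
    _ = hFun (mseq N) (C * t) := Real.rpow_one _

end ModerateGrowth

section Polynomials

open Polynomial

lemma norm_pow_sub_pow_le {R : Type*} [NormedCommRing R] [NormOneClass R] {B : ℝ} {x y : R}
    (hx : ‖x‖ ≤ B) (hy : ‖y‖ ≤ B) (n : ℕ) :
    ‖x ^ n - y ^ n‖ ≤ n * B ^ (n - 1) * ‖x - y‖ := by
  rw [← geom_sum₂_mul]
  refine (norm_mul_le _ _).trans (mul_le_mul_of_nonneg_right ?_ (norm_nonneg _))
  refine (norm_sum_le_of_le _ fun i hi => ?_).trans_eq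
    (show ∑ _i ∈ Finset.range n, B ^ (n - 1) = n * B ^ (n - 1) by simp)
  have hin : i ≤ n - 1 := by have := Finset.mem_range.1 hi; omega
  have hB : 0 ≤ B := (norm_nonneg x).trans hx
  calc ‖x ^ i * y ^ (n - 1 - i)‖ ≤ ‖x‖ ^ i * ‖y‖ ^ (n - 1 - i) :=
        (norm_mul_le _ _).trans (by gcongr <;> exact norm_pow_le _ _)
    _ ≤ B ^ i * B ^ (n - 1 - i) := by gcongr
    _ = B ^ (n - 1) := by rw [← pow_add, Nat.add_sub_cancel' hin]

lemma X_pow_dvd_of_norm_eval_le {E : ℂ[X]} {p : ℕ} {A δ : ℝ} (hδ : 0 < δ)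
    (h : ∀ s : ℝ, 0 < s → s ≤ δ → ‖E.eval (s : ℂ)‖ ≤ A * s ^ p) : X ^ p ∣ E := by
  suffices H : ∀ q ≤ p, X ^ q ∣ E from H p le_rfl
  intro q
  induction q with
  | zero => simp
  | succ q ih =>
    intro hqp
    obtain ⟨G, rfl⟩ := ih (by omega)
    rw [pow_succ]
    refine mul_dvd_mul_left _ (X_dvd_iff.2 ?_)
    rw [coeff_zero_eq_eval_zero, ← norm_le_zero_iff]
    have hG : Continuous fun s : ℝ => ‖G.eval (s : ℂ)‖ := by fun_prop
    have hA : Continuous fun s : ℝ => A * s ^ (p - q) := by fun_prop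
    have hlim : ∀ {φ : ℝ → ℝ}, Continuous φ → Tendsto φ (nhdsWithin 0 (Ioi 0)) (nhds (φ 0)) :=
      fun hφ => hφ.continuousAt.mono_left nhdsWithin_le_nhds
    have hle := le_of_tendsto_of_tendsto (hlim hG) (hlim hA) (by
      filter_upwards [Ioo_mem_nhdsGT hδ] with s hs
      have hs' := h s hs.1 hs.2.le
      rw [eval_mul, eval_pow, eval_X, norm_mul, norm_pow, Complex.norm_real,
        Real.norm_of_nonneg hs.1.le, ← Nat.add_sub_of_le (show q ≤ p by omega), pow_add,
        mul_left_comm] at hs'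
      simpa using le_of_mul_le_mul_left hs' (pow_pos hs.1 q))
    simpa [show p - q ≠ 0 by omega] using hle

lemma prod_abs_sub_erase_range {n i : ℕ} (hi : i ≤ n) :
    ∏ k ∈ (Finset.range (n + 1)).erase i, |(i : ℝ) - k| = i.factorial * (n - i).factorial := by
  induction n, hi using Nat.le_induction with
  | base =>
    rw [Finset.range_add_one, Finset.erase_insert Finset.notMem_range_self, Nat.sub_self,
      Nat.factorial_zero, Nat.cast_one, mul_one, ← Finset.prod_range_add_one_eq_factorial,
      ← Finset.prod_range_reflect, Nat.cast_prod]
    refine Finset.prod_congr rfl fun k hk => ?_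
    have hki : k + 1 ≤ i := Finset.mem_range.1 hk
    rw [Nat.sub_sub, Nat.cast_add, Nat.cast_sub (by omega), abs_of_nonneg] <;> push_cast
    · ring
    · have : (k : ℝ) + 1 ≤ i := by exact_mod_cast hki
      linarith
  | succ n hin ih =>
    rw [Finset.range_add_one, Finset.erase_insert_of_ne (by omega),
      Finset.prod_insert (by simp), ih, Nat.succ_sub hin, Nat.factorial_succ, abs_sub_comm,
      abs_of_nonneg] <;> push_cast [Nat.cast_sub hin]
    · ring
    · have : (i : ℝ) ≤ n := by exact_mod_cast hin
      linarith

lemma norm_eval_lagrangeBasis_le {n i : ℕ} (hi : i ≤ n) {z : ℂ} (hz : ‖z‖ ≤ 1) :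
    ‖(Lagrange.basis (Finset.range (n + 1)) (fun k => ((k + 1 : ℕ) : ℂ) / (n + 1 : ℕ)) i).eval z‖
      ≤ (2 * (n + 1)) ^ n / (i.factorial * (n - i).factorial) := by
  rw [Lagrange.basis, eval_prod, norm_prod, ← prod_abs_sub_erase_range hi]
  have hcard : ((Finset.range (n + 1)).erase i).card = n := by
    rw [Finset.card_erase_of_mem (by simp; omega), Finset.card_range, Nat.add_sub_cancel]
  calc _ ≤ ∏ k ∈ (Finset.range (n + 1)).erase i, 2 * ((n : ℝ) + 1) / |(i : ℝ) - k| := by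
        refine Finset.prod_le_prod (fun _ _ => norm_nonneg _) fun k hk => ?_
        obtain ⟨hki, hkn⟩ := Finset.mem_erase.1 hk
        have hdist : ‖z - ((k + 1 : ℕ) : ℂ) / (n + 1 : ℕ)‖ ≤ 2 := by
          have hnode : ‖((k + 1 : ℕ) : ℂ) / (n + 1 : ℕ)‖ ≤ 1 := by
            rw [norm_div, Complex.norm_natCast, Complex.norm_natCast]
            exact div_le_one_of_le₀ (by exact_mod_cast Finset.mem_range.1 hkn) (Nat.cast_nonneg _)
          linarith [norm_sub_le z (((k + 1 : ℕ) : ℂ) / (n + 1 : ℕ))]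
        have hgap : ‖(((i + 1 : ℕ) : ℂ) / (n + 1 : ℕ) - ((k + 1 : ℕ) : ℂ) / (n + 1 : ℕ))‖
            = |(i : ℝ) - k| / (n + 1) := by
          rw [← sub_div, norm_div, Complex.norm_natCast]
          push_cast
          rw [add_sub_add_right_eq_sub, ← Complex.ofReal_natCast, ← Complex.ofReal_natCast,
            ← Complex.ofReal_sub, Complex.norm_real, Real.norm_eq_abs]
        have hpos : 0 < |(i : ℝ) - k| :=
          abs_pos.2 (sub_ne_zero.2 (by exact_mod_cast (Ne.symm hki)))
        simp only [Lagrange.basisDivisor, eval_mul, eval_C, eval_sub, eval_X]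
        rw [norm_mul, norm_inv, hgap, inv_div, div_mul_eq_mul_div, mul_comm]
        gcongr
    _ = _ := by rw [Finset.prod_div_distrib, Finset.prod_const, hcard]

lemma sum_range_div_factorial_mul_factorial (a : ℝ) (n : ℕ) :
    ∑ i ∈ Finset.range (n + 1), a / (i.factorial * (n - i).factorial) =
      a * 2 ^ n / n.factorial := by
  have hchoose : ∀ i ∈ Finset.range (n + 1),
      a / (i.factorial * (n - i).factorial) = a / n.factorial * n.choose i := fun i hi => by
    rw [Nat.cast_choose ℝ (Nat.lt_succ_iff.1 (Finset.mem_range.1 hi))]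
    field_simp
  rw [Finset.sum_congr rfl hchoose, ← Finset.mul_sum, ← Nat.cast_sum, Nat.sum_range_choose]
  push_cast
  ring

/-- A weak form of the Bernstein–Walsh inequality, proved by interpolating at the points
`1 / (n + 1), …, 1`. -/
lemma norm_eval_le_exp_mul {q : ℂ[X]} {n : ℕ} (hq : q.natDegree ≤ n) {A : ℝ}
    (h : ∀ s : ℝ, 0 < s → s ≤ 1 → ‖q.eval (s : ℂ)‖ ≤ A) {z : ℂ} (hz : ‖z‖ ≤ 1) :
    ‖q.eval z‖ ≤ A * Real.exp (4 * (n + 1)) := by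
  set v : ℕ → ℂ := fun k => ((k + 1 : ℕ) : ℂ) / (n + 1 : ℕ)
  have hA : 0 ≤ A := (norm_nonneg _).trans (h 1 one_pos le_rfl)
  have hv : Set.InjOn v (Finset.range (n + 1)) := fun a _ b _ hab => by
    have := (div_left_inj' (by exact_mod_cast n.succ_ne_zero)).1 hab
    exact Nat.succ_injective (by exact_mod_cast this)
  have hnode : ∀ i ∈ Finset.range (n + 1), ‖q.eval (v i)‖ ≤ A := fun i hi => by
    have := h ((i + 1 : ℕ) / (n + 1 : ℕ)) (by positivity)
      (div_le_one_of_le₀ (by exact_mod_cast Finset.mem_range.1 hi) (by positivity))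
    simpa [v] using this
  have hdeg : q.degree < (Finset.range (n + 1)).card := by
    rw [Finset.card_range]
    exact degree_le_natDegree.trans_lt (by exact_mod_cast Nat.lt_succ_of_le hq)
  rw [Lagrange.eq_interpolate hv hdeg, Lagrange.interpolate_apply, eval_finsetSum]
  calc _ ≤ ∑ i ∈ Finset.range (n + 1),
        A * ((2 * (n + 1)) ^ n / (i.factorial * (n - i).factorial)) := by
        refine norm_sum_le_of_le _ fun i hi => ?_
        rw [eval_mul, eval_C, norm_mul]
        gcongr
        · exact hnode i hi
        · exact norm_eval_lagrangeBasis_le (Nat.lt_succ_iff.1 (Finset.mem_range.1 hi)) hz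
    _ = A * ((4 * (n + 1)) ^ n / n.factorial) := by
        rw [← Finset.mul_sum, sum_range_div_factorial_mul_factorial, ← mul_pow]
        ring
    _ ≤ _ := by
        gcongr
        exact Real.pow_div_factorial_le_exp _ (by positivity) n

lemma norm_eval_le_pow_mul_exp {E : ℂ[X]} {p n : ℕ} (hdeg : E.natDegree ≤ p + n) {A : ℝ}
    (h : ∀ s : ℝ, 0 < s → s ≤ 1 → ‖E.eval (s : ℂ)‖ ≤ A * s ^ p) {z : ℂ} (hz : ‖z‖ ≤ 1) :
    ‖E.eval z‖ ≤ ‖z‖ ^ p * (A * Real.exp (4 * (n + 1))) := by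
  obtain ⟨q, rfl⟩ := X_pow_dvd_of_norm_eval_le one_pos h
  rw [eval_mul, eval_pow, eval_X, norm_mul, norm_pow]
  refine mul_le_mul_of_nonneg_left (norm_eval_le_exp_mul ?_ (fun s hs hs1 => ?_) hz) (by positivity)
  · rcases eq_or_ne q 0 with rfl | hq
    · simp
    · rw [natDegree_X_pow_mul _ hq] at hdeg
      omega
  · have := h s hs hs1
    rw [eval_mul, eval_pow, eval_X, norm_mul, norm_pow, Complex.norm_real,
      Real.norm_of_nonneg hs.le, mul_comm A] at this
    exact le_of_mul_le_mul_left this (pow_pos hs p)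

lemma norm_sum_Ico_mul_pow_le {c : ℕ → ℂ} {a b : ℕ} {A : ℝ} (hA : 0 ≤ A)
    (hc : ∀ k ∈ Finset.Ico a b, ‖c k‖ ≤ A) {z : ℂ} (hz : ‖z‖ ≤ 1 / 2) :
    ‖∑ k ∈ Finset.Ico a b, c k * z ^ k‖ ≤ 2 * A * ‖z‖ ^ a := by
  calc _ ≤ ∑ k ∈ Finset.Ico a b, A * ‖z‖ ^ k :=
        norm_sum_le_of_le _ fun k hk => by
          rw [norm_mul, norm_pow]
          exact mul_le_mul_of_nonneg_right (hc k hk) (by positivity)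
    _ = A * ‖z‖ ^ a * ∑ k ∈ Finset.range (b - a), ‖z‖ ^ k := by
        simp only [Finset.sum_Ico_eq_sum_range, pow_add, Finset.mul_sum, mul_assoc]
    _ ≤ A * ‖z‖ ^ a * ∑ k ∈ Finset.range (b - a), (1 / 2) ^ k := by gcongr
    _ ≤ A * ‖z‖ ^ a * 2 := by gcongr; exact sum_geometric_two_le _
    _ = _ := by ring

end Polynomials

section Taylor

open Polynomial

variable {m n : ℕ → ℝ} {B C b t : ℝ} {F G : ℝ → ℂ} {c d : ℕ → ℂ} {j : ℕ}

/-- `F` has at `0` the Taylor coefficients `c`, and the coefficients and all remainders of the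
Taylor expansion on `[-b, b]` are controlled by `B * m`. -/
structure HasTaylorBounds (m : ℕ → ℝ) (B b : ℝ) (F : ℝ → ℂ) (c : ℕ → ℂ) : Prop where
  norm_coeff_le : ∀ k, ‖c k‖ ≤ B * m k
  norm_sub_sum_le : ∀ (p : ℕ) (s : ℝ), |s| ≤ b →
    ‖F s - ∑ k ∈ Finset.range p, c k * (s : ℂ) ^ k‖ ≤ B * m p * |s| ^ p

/-- The Taylor polynomial of degree less than `p` of `s ↦ F (t * s)`, for a function `F` with
Taylor coefficients `c`. -/
def scaledTaylor (c : ℕ → ℂ) (t : ℝ) (p : ℕ) : ℂ[X] :=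
  ∑ k ∈ Finset.range p, monomial k (c k * (t : ℂ) ^ k)

lemma coeff_scaledTaylor (c : ℕ → ℂ) (t : ℝ) (p k : ℕ) :
    (scaledTaylor c t p).coeff k = if k < p then c k * (t : ℂ) ^ k else 0 := by
  simp [scaledTaylor, finsetSum_coeff, coeff_monomial]

lemma eval_scaledTaylor (c : ℕ → ℂ) (t : ℝ) (p : ℕ) (z : ℂ) :
    (scaledTaylor c t p).eval z = ∑ k ∈ Finset.range p, c k * (t : ℂ) ^ k * z ^ k := by
  simp [scaledTaylor, eval_finsetSum]

lemma natDegree_scaledTaylor_le (c : ℕ → ℂ) (t : ℝ) (p : ℕ) : (scaledTaylor c t p).natDegree ≤ p :=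
  natDegree_sum_le_of_forall_le _ _ fun _ hk =>
    (natDegree_monomial_le _).trans (Finset.mem_range.1 hk).le

/-- The size `r` of the error at scale `t`, measured so that `r ^ (j + 1)` bounds the Taylor
remainders of order `GammaBar n (C * t)`. -/
def scaleRadius (n : ℕ → ℝ) (C : ℝ) (j : ℕ) (t : ℝ) : ℝ :=
  ((1 / 4) ^ GammaBar n (C * t) * hFun n (C * t)) ^ (1 / ((j : ℝ) + 1))

namespace IsRegularPair

lemma scaleRadius_pos (h : IsRegularPair m n C) (j : ℕ) (ht : 0 < t) : 0 < scaleRadius n C j t := by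
  have := h.hFun_pos (mul_pos h.pos ht)
  unfold scaleRadius
  positivity

lemma scaleRadius_pow (h : IsRegularPair m n C) (j : ℕ) (ht : 0 < t) :
    scaleRadius n C j t ^ (j + 1) = (1 / 4) ^ GammaBar n (C * t) * hFun n (C * t) := by
  have := h.hFun_pos (mul_pos h.pos ht)
  rw [scaleRadius, one_div ((j : ℝ) + 1), ← Nat.cast_add_one,
    Real.rpow_inv_natCast_pow (by positivity) j.succ_ne_zero]

lemma scaleRadius_le_one (h : IsRegularPair m n C) (j : ℕ) (ht : 0 < t) :
    scaleRadius n C j t ≤ 1 := by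
  have hCt := mul_pos h.pos ht
  have := h.hFun_pos hCt
  refine Real.rpow_le_one (by positivity) ?_ (by positivity)
  exact mul_le_one₀ (pow_le_one₀ (by norm_num) (by norm_num)) this.le (h.hFun_le_one hCt)

lemma gammaBar_le_gammaBar_half (h : IsRegularPair m n C) (ht : 0 < t) :
    GammaBar n (C * t) ≤ GammaBar n (C * (t / 2)) :=
  gammaBar_le_gammaBar h.pos_right h.rootTendsToInfty (mul_pos h.pos (half_pos ht))
    (mul_le_mul_of_nonneg_left (half_le_self ht.le) h.pos.le)

lemma scaleRadius_half_le (h : IsRegularPair m n C) (j : ℕ) (ht : 0 < t) :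
    scaleRadius n C j (t / 2) ≤ scaleRadius n C j t := by
  have hCt := mul_pos h.pos (half_pos ht)
  have := h.hFun_pos hCt
  have hle := hFun_le_hFun h.pos_right hCt
    (mul_le_mul_of_nonneg_left (half_le_self ht.le) h.pos.le)
  have hpow : ((1 : ℝ) / 4) ^ GammaBar n (C * (t / 2)) ≤ (1 / 4) ^ GammaBar n (C * t) :=
    pow_le_pow_of_le_one (by norm_num) (by norm_num) (h.gammaBar_le_gammaBar_half ht)
  unfold scaleRadius
  gcongr

lemma mul_pow_mul_pow_le_scaleRadius_pow (h : IsRegularPair m n C) (j : ℕ) (ht : 0 < t) {x : ℝ}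
    (hx : 0 ≤ x) (hx4 : x ≤ 1 / 4) :
    m (GammaBar n (C * t)) * t ^ GammaBar n (C * t) * x ^ GammaBar n (C * t) ≤
      scaleRadius n C j t ^ (j + 1) := by
  have := h.hFun_pos (mul_pos h.pos ht)
  have := h.pos_left (GammaBar n (C * t))
  rw [h.scaleRadius_pow j ht, mul_comm ((1 / 4 : ℝ) ^ _)]
  gcongr
  exact h.mul_pow_gammaBar_le_hFun ht

end IsRegularPair

namespace HasTaylorBounds

lemma nonneg (hF : HasTaylorBounds m B b F c) (hm : 0 < m 0) : 0 ≤ B :=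
  nonneg_of_mul_nonneg_left ((norm_nonneg _).trans (hF.norm_coeff_le 0)) hm

lemma norm_coeff_scaledTaylor_le (hF : HasTaylorBounds m B b F c) (h : IsRegularPair m n C)
    (ht : 0 < t) (k : ℕ) : ‖(scaledTaylor c t (GammaBar n (C * t))).coeff k‖ ≤ B := by
  have hB := hF.nonneg (h.pos_left 0)
  rw [coeff_scaledTaylor]
  split_ifs with hk
  · calc ‖c k * (t : ℂ) ^ k‖ = ‖c k‖ * t ^ k := by
          rw [norm_mul, norm_pow, Complex.norm_real, Real.norm_of_nonneg ht.le]
      _ ≤ B * m k * t ^ k := by gcongr; exact hF.norm_coeff_le k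
      _ ≤ B * 1 := by rw [mul_assoc]; gcongr; exact h.mul_pow_le_one ht hk.le
      _ = B := mul_one B
  · simpa using hB

lemma norm_eval_scaledTaylor_le (hF : HasTaylorBounds m B b F c) (h : IsRegularPair m n C)
    (ht : 0 < t) {z : ℂ} (hz : ‖z‖ ≤ 1 / 2) :
    ‖(scaledTaylor c t (GammaBar n (C * t))).eval z‖ ≤ 2 * B := by
  rw [eval_scaledTaylor, Finset.range_eq_Ico]
  refine (norm_sum_Ico_mul_pow_le (hF.nonneg (h.pos_left 0)) (fun k hk => ?_) hz).trans_eq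
    (by rw [pow_zero, mul_one])
  simpa [coeff_scaledTaylor, (Finset.mem_Ico.1 hk).2] using hF.norm_coeff_scaledTaylor_le h ht k

lemma norm_sub_eval_scaledTaylor_le (hF : HasTaylorBounds m B b F c) (ht : 0 < t) (htb : t ≤ b)
    (p : ℕ) {s : ℝ} (hs : |s| ≤ 1) :
    ‖F (t * s) - (scaledTaylor c t p).eval (s : ℂ)‖ ≤ B * (m p * t ^ p) * |s| ^ p := by
  have hts : |t * s| = t * |s| := by rw [abs_mul, abs_of_pos ht]
  have := hF.norm_sub_sum_le p (t * s)
    (by rw [hts]; exact (mul_le_of_le_one_right ht.le hs).trans htb)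
  rw [hts] at this
  simpa only [eval_scaledTaylor, Complex.ofReal_mul, mul_pow, ← mul_assoc] using this

lemma norm_sub_eval_scaledTaylor_le_scaleRadius (hF : HasTaylorBounds m B b F c)
    (h : IsRegularPair m n C) (j : ℕ) (ht : 0 < t) (htb : t ≤ b) {s : ℝ} (hs : |s| ≤ 1 / 4) :
    ‖F (t * s) - (scaledTaylor c t (GammaBar n (C * t))).eval (s : ℂ)‖ ≤
      B * scaleRadius n C j t ^ (j + 1) := by
  refine (hF.norm_sub_eval_scaledTaylor_le ht htb _ (by linarith)).trans ?_
  rw [mul_assoc]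
  exact mul_le_mul_of_nonneg_left
    (h.mul_pow_mul_pow_le_scaleRadius_pow j ht (abs_nonneg s) hs) (hF.nonneg (h.pos_left 0))

lemma norm_pow_sub_pow_eval_le (hF : HasTaylorBounds m B b F c) (h : IsRegularPair m n C)
    (ht : 0 < t) (htb : t ≤ b) (k : ℕ) {s : ℝ} (hs : |s| ≤ 1) :
    ‖F (t * s) ^ k - (scaledTaylor c t (GammaBar n (C * t))).eval (s : ℂ) ^ k‖ ≤
      k * (2 * B) ^ (k - 1) *
        (B * (m (GammaBar n (C * t)) * t ^ GammaBar n (C * t)) * |s| ^ GammaBar n (C * t)) := by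
  have hB := hF.nonneg (h.pos_left 0)
  have hval : ‖F (t * s)‖ ≤ B := by
    simpa [scaledTaylor, h.zero_left] using hF.norm_sub_eval_scaledTaylor_le ht htb 0 hs
  have hdiff := hF.norm_sub_eval_scaledTaylor_le ht htb (GammaBar n (C * t)) hs
  have hdiff_le : B * (m (GammaBar n (C * t)) * t ^ GammaBar n (C * t)) *
      |s| ^ GammaBar n (C * t) ≤ B * 1 * 1 := by
    gcongr
    · exact h.mul_pow_le_one ht le_rfl
    · exact pow_le_one₀ (abs_nonneg s) hs
  refine (norm_pow_sub_pow_le (B := 2 * B) (by linarith) ?_ k).trans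
    (mul_le_mul_of_nonneg_left hdiff (by positivity))
  linarith [norm_le_norm_add_norm_sub (F (t * s))
    ((scaledTaylor c t (GammaBar n (C * t))).eval (s : ℂ))]

lemma norm_pow_succ_sub_pow_eval_ofReal_le (hF : HasTaylorBounds m B b F c)
    (hG : HasTaylorBounds m B b G d) (h : IsRegularPair m n C) (hB : 1 ≤ B)
    (hFG : ∀ s, F s ^ (j + 1) = G s ^ j) (ht : 0 < t) (htb : t ≤ b) {s : ℝ} (hs : |s| ≤ 1) :
    ‖(scaledTaylor c t (GammaBar n (C * t))).eval (s : ℂ) ^ (j + 1) -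
        (scaledTaylor d t (GammaBar n (C * t))).eval (s : ℂ) ^ j‖ ≤
      (2 * j + 1) * (2 * B) ^ (j + 1) * (m (GammaBar n (C * t)) * t ^ GammaBar n (C * t)) *
        |s| ^ GammaBar n (C * t) := by
  set p := GammaBar n (C * t)
  set P := scaledTaylor c t p
  set Q := scaledTaylor d t p
  set D := m p * t ^ p
  have hD : 0 < D := mul_pos (h.pos_left p) (pow_pos ht p)
  have hP := hF.norm_pow_sub_pow_eval_le h ht htb (j + 1) hs
  have hQ := hG.norm_pow_sub_pow_eval_le h ht htb j hs
  have hmono : (2 * B) ^ (j - 1) ≤ (2 * B) ^ j := pow_le_pow_right₀ (by linarith) (Nat.sub_le j 1)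
  calc ‖P.eval (s : ℂ) ^ (j + 1) - Q.eval (s : ℂ) ^ j‖
      = ‖(G (t * s) ^ j - Q.eval (s : ℂ) ^ j) - (F (t * s) ^ (j + 1) -
          P.eval (s : ℂ) ^ (j + 1))‖ := by rw [hFG]; congr 1; ring
    _ ≤ j * (2 * B) ^ (j - 1) * (B * D * |s| ^ p) +
        (j + 1 : ℕ) * (2 * B) ^ (j + 1 - 1) * (B * D * |s| ^ p) :=
        (norm_sub_le _ _).trans (add_le_add hQ hP)
    _ ≤ j * (2 * B) ^ j * (2 * B * D * |s| ^ p) +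
        (j + 1 : ℕ) * (2 * B) ^ j * (2 * B * D * |s| ^ p) := by
        rw [Nat.add_sub_cancel]
        gcongr <;> linarith
    _ = _ := by push_cast; ring

/-- The polynomial `P ^ (j + 1) - Q ^ j` vanishes to order `p` at `0` because
`F ^ (j + 1) = G ^ j`, and it has degree at most `(j + 1) p`; so it is bounded on a complex disc
of radius independent of `p` by its values on `[0, 1]`. -/
lemma norm_pow_succ_sub_pow_eval_le (hF : HasTaylorBounds m B b F c)
    (hG : HasTaylorBounds m B b G d) (h : IsRegularPair m n C) (hB : 1 ≤ B)
    (hFG : ∀ s, F s ^ (j + 1) = G s ^ j) (ht : 0 < t) (htb : t ≤ b) {z : ℂ}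
    (hz : ‖z‖ ≤ Real.exp (-(4 * j)) / 4) :
    ‖(scaledTaylor c t (GammaBar n (C * t))).eval z ^ (j + 1) -
        (scaledTaylor d t (GammaBar n (C * t))).eval z ^ j‖ ≤
      Real.exp 4 * (2 * j + 1) * (2 * B) ^ (j + 1) * scaleRadius n C j t ^ (j + 1) := by
  have hreal := fun s => norm_pow_succ_sub_pow_eval_ofReal_le hF hG h hB hFG ht htb (s := s)
  have hscale := h.mul_pow_mul_pow_le_scaleRadius_pow j ht (x := 1 / 4) (by norm_num) le_rfl
  set p := GammaBar n (C * t)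
  set E := scaledTaylor c t p ^ (j + 1) - scaledTaylor d t p ^ j with hE
  set D := m p * t ^ p
  have hD : 0 < D := mul_pos (h.pos_left p) (pow_pos ht p)
  have hdeg : E.natDegree ≤ p + j * p := by
    refine (natDegree_sub_le _ _).trans (max_le ?_ ?_)
    · exact (natDegree_pow_le_of_le _ (natDegree_scaledTaylor_le c t p)).trans_eq (by ring)
    · exact (natDegree_pow_le_of_le _ (natDegree_scaledTaylor_le d t p)).trans (by omega)
  have hz1 : ‖z‖ ≤ 1 := hz.trans (by
    have : Real.exp (-(4 * j)) ≤ 1 := Real.exp_le_one_iff.2 (by linarith [j.cast_nonneg (α := ℝ)])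
    linarith)
  have hexp : ‖z‖ ^ p * Real.exp (4 * ((j * p : ℕ) + 1)) ≤ (1 / 4) ^ p * Real.exp 4 := by
    calc _ ≤ (Real.exp (-(4 * j)) / 4) ^ p * Real.exp (4 * ((j * p : ℕ) + 1)) := by gcongr
      _ = (1 / 4) ^ p * Real.exp 4 := by
        rw [div_pow, div_pow, one_pow, ← Real.exp_nat_mul, div_mul_eq_mul_div, ← Real.exp_add,
          div_mul_eq_mul_div, one_mul]
        push_cast
        ring_nf
  calc _ = ‖E.eval z‖ := by rw [hE, eval_sub, eval_pow, eval_pow]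
    _ ≤ ‖z‖ ^ p * ((2 * j + 1) * (2 * B) ^ (j + 1) * D * Real.exp (4 * ((j * p : ℕ) + 1))) :=
        norm_eval_le_pow_mul_exp hdeg (fun s hs hs1 => by
          simpa [hE, abs_of_pos hs] using hreal s (by rwa [abs_of_pos hs])) hz1
    _ = (2 * j + 1) * (2 * B) ^ (j + 1) * D *
          (‖z‖ ^ p * Real.exp (4 * ((j * p : ℕ) + 1))) := by ring
    _ ≤ (2 * j + 1) * (2 * B) ^ (j + 1) * D * ((1 / 4) ^ p * Real.exp 4) := by gcongr
    _ = Real.exp 4 * (2 * j + 1) * (2 * B) ^ (j + 1) * (D * (1 / 4) ^ p) := by ring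
    _ ≤ _ := by gcongr

lemma norm_eval_scaledTaylor_pow_le (hF : HasTaylorBounds m B b F c)
    (hG : HasTaylorBounds m B b G d) (h : IsRegularPair m n C) (hB : 1 ≤ B)
    (hFG : ∀ s, F s ^ (j + 1) = G s ^ j) (ht : 0 < t) (htb : t ≤ b) {z : ℂ}
    (hz : ‖z‖ ≤ Real.exp (-(4 * j)) / 4) :
    ‖(scaledTaylor d t (GammaBar n (C * t))).eval z‖ ^ j ≤
      (1 + Real.exp 4 * (2 * j + 1) * (2 * B) ^ (j + 1)) *
        max ‖(scaledTaylor c t (GammaBar n (C * t))).eval z‖ (scaleRadius n C j t) ^ (j + 1) := by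
  have hdiff := norm_pow_succ_sub_pow_eval_le hF hG h hB hFG ht htb hz
  set x := (scaledTaylor c t (GammaBar n (C * t))).eval z
  set y := (scaledTaylor d t (GammaBar n (C * t))).eval z
  set r := scaleRadius n C j t
  have hr : 0 < r := h.scaleRadius_pos j ht
  calc ‖y‖ ^ j = ‖y ^ j‖ := (norm_pow _ _).symm
    _ ≤ ‖x ^ (j + 1)‖ + ‖x ^ (j + 1) - y ^ j‖ := norm_le_norm_add_norm_sub _ _
    _ ≤ ‖x‖ ^ (j + 1) + Real.exp 4 * (2 * j + 1) * (2 * B) ^ (j + 1) * r ^ (j + 1) :=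
        add_le_add (norm_pow _ _).le hdiff
    _ ≤ max ‖x‖ r ^ (j + 1) +
          Real.exp 4 * (2 * j + 1) * (2 * B) ^ (j + 1) * max ‖x‖ r ^ (j + 1) := by
        gcongr
        exacts [le_max_left _ _, le_max_right _ _]
    _ = _ := by ring

lemma norm_eval_scaledTaylor_sub_half_le (hF : HasTaylorBounds m B b F c)
    (h : IsRegularPair m n C) (j : ℕ) (ht : 0 < t) {z : ℂ} (hz : ‖z‖ ≤ t / 8) :
    ‖(scaledTaylor c t (GammaBar n (C * t))).eval (z / t) -
        (scaledTaylor c (t / 2) (GammaBar n (C * (t / 2)))).eval (z / (t / 2 : ℝ))‖ ≤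
      2 * B * scaleRadius n C j t ^ (j + 1) := by
  have hB := hF.nonneg (h.pos_left 0)
  have ht2 := half_pos ht
  have hpq := h.gammaBar_le_gammaBar_half ht
  have hscale := fun {x} => h.mul_pow_mul_pow_le_scaleRadius_pow j ht (x := x)
  have hanti := fun {k} => h.mul_pow_le_mul_pow ht2 (k := GammaBar n (C * t)) (l := k)
  set p := GammaBar n (C * t)
  set q := GammaBar n (C * (t / 2))
  set w := z / ((t / 2 : ℝ) : ℂ) with hw
  have hw4 : ‖w‖ ≤ 1 / 4 := by
    rw [hw, norm_div, Complex.norm_real, Real.norm_of_nonneg ht2.le, div_le_iff₀ ht2]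
    linarith
  have hrescale : (scaledTaylor c t p).eval (z / t) = (scaledTaylor c (t / 2) p).eval w := by
    have ht0 : (t : ℂ) ≠ 0 := by exact_mod_cast ht.ne'
    have ht20 : ((t / 2 : ℝ) : ℂ) ≠ 0 := by exact_mod_cast ht2.ne'
    simp only [eval_scaledTaylor, mul_assoc, ← mul_pow, hw, mul_div_cancel₀ _ ht0,
      mul_div_cancel₀ _ ht20]
  have hpos : 0 < m p := h.pos_left p
  have htail : ∀ k ∈ Finset.Ico p q, ‖c k * ((t / 2 : ℝ) : ℂ) ^ k‖ ≤ B * (m p * t ^ p) := by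
    intro k hk
    obtain ⟨hpk, hkq⟩ := Finset.mem_Ico.1 hk
    rw [norm_mul, norm_pow, Complex.norm_real, Real.norm_of_nonneg ht2.le]
    calc ‖c k‖ * (t / 2) ^ k ≤ B * m k * (t / 2) ^ k := by gcongr; exact hF.norm_coeff_le k
      _ = B * (m k * (t / 2) ^ k) := by ring
      _ ≤ B * (m p * (t / 2) ^ p) := mul_le_mul_of_nonneg_left (hanti hpk hkq.le) hB
      _ ≤ B * (m p * t ^ p) := by gcongr; linarith
  rw [hrescale, norm_sub_rev, eval_scaledTaylor, eval_scaledTaylor,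
    ← Finset.sum_Ico_eq_sub _ hpq]
  calc _ ≤ 2 * (B * (m p * t ^ p)) * ‖w‖ ^ p :=
        norm_sum_Ico_mul_pow_le (by positivity) htail (hw4.trans (by norm_num))
    _ = 2 * B * (m p * t ^ p * ‖w‖ ^ p) := by ring
    _ ≤ _ := by gcongr; exact hscale (norm_nonneg w) hw4

end HasTaylorBounds

end Taylor

section RegularizedQuotient

variable {j : ℕ} {K L r r' x : ℝ} {P Q P' Q' : ℂ}

/-- The quotient `Q / P`, regularized at scale `r` so that it stays defined and smooth where `P`
vanishes. -/
def regQuotient (P Q : ℂ) (r : ℝ) : ℂ := Q * (starRingEnd ℂ) P / ((‖P‖ ^ 2 + r ^ 2 : ℝ) : ℂ)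

lemma norm_regQuotient (P Q : ℂ) (r : ℝ) :
    ‖regQuotient P Q r‖ = ‖Q‖ * ‖P‖ / (‖P‖ ^ 2 + r ^ 2) := by
  rw [regQuotient, norm_div, norm_mul, RCLike.norm_conj, Complex.norm_real,
    Real.norm_of_nonneg (by positivity)]

lemma regQuotient_pow_pow_succ (j : ℕ) (f : ℂ) : regQuotient (f ^ j) (f ^ (j + 1)) 0 = f := by
  rcases eq_or_ne f 0 with rfl | hf
  · simp [regQuotient]
  · have hfj : f ^ j ≠ 0 := pow_ne_zero j hf
    rw [regQuotient, zero_pow two_ne_zero, add_zero, ← Complex.normSq_eq_norm_sq,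
      ← Complex.mul_conj, pow_succ', mul_assoc, mul_div_cancel_right₀]
    exact mul_ne_zero hfj ((map_ne_zero _).2 hfj)

lemma sq_max_le_add_sq (a b : ℝ) : max a b ^ 2 ≤ a ^ 2 + b ^ 2 := by
  rcases max_choice a b with h | h <;> rw [h]
  · exact le_add_of_nonneg_right (sq_nonneg b)
  · exact le_add_of_nonneg_left (sq_nonneg a)

lemma norm_regQuotient_le_div_max (P Q : ℂ) (r : ℝ) :
    ‖regQuotient P Q r‖ ≤ ‖Q‖ / max ‖P‖ r := by
  rw [norm_regQuotient]
  rcases (norm_nonneg P).eq_or_lt with hP | hP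
  · rw [← hP, mul_zero, zero_div]
    positivity
  · have hmax : 0 < max ‖P‖ r := lt_max_of_lt_left hP
    rw [div_le_div_iff₀ (by positivity) hmax]
    calc ‖Q‖ * ‖P‖ * max ‖P‖ r ≤ ‖Q‖ * max ‖P‖ r * max ‖P‖ r := by
          gcongr
          exact le_max_left _ _
      _ = ‖Q‖ * max ‖P‖ r ^ 2 := by ring
      _ ≤ ‖Q‖ * (‖P‖ ^ 2 + r ^ 2) := by
          gcongr
          exact sq_max_le_add_sq _ _

lemma le_mul_of_pow_le_mul_pow_succ {y z : ℝ} (hj : j ≠ 0) (hz : 0 ≤ z) (hL : 1 ≤ L)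
    (hzL : K * z ≤ L) (h : y ^ j ≤ K * z ^ (j + 1)) : y ≤ L * z := by
  refine le_of_pow_le_pow_left₀ hj (by positivity) ?_
  calc y ^ j ≤ K * z * z ^ j := h.trans_eq (by ring)
    _ ≤ L ^ j * z ^ j := by gcongr; exact hzL.trans (le_self_pow₀ hL hj)
    _ = (L * z) ^ j := (mul_pow _ _ _).symm

lemma norm_regQuotient_le {ν : ℝ} (hj : j ≠ 0) (hK : 1 ≤ K) (hν : 0 ≤ ν)
    (hQ : ‖Q‖ ^ j ≤ K * max ‖P‖ r ^ (j + 1)) (hmax : max ‖P‖ r ≤ ν ^ j) :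
    ‖regQuotient P Q r‖ ≤ K * ν := by
  refine (norm_regQuotient_le_div_max P Q r).trans ?_
  refine div_le_of_le_mul₀ (by positivity) (by positivity)
    (le_of_pow_le_pow_left₀ hj (by positivity) ?_)
  calc ‖Q‖ ^ j ≤ K * max ‖P‖ r * max ‖P‖ r ^ j := hQ.trans_eq (by ring)
    _ ≤ K ^ j * ν ^ j * max ‖P‖ r ^ j := by
      gcongr
      exact le_self_pow₀ hK hj
    _ = (K * ν * max ‖P‖ r) ^ j := by rw [mul_pow, mul_pow]

lemma norm_regQuotient_sub_div_le (hP : P ≠ 0) (hQP : ‖Q‖ ≤ K * ‖P‖) (hr : 0 ≤ r)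
    (hrP : r ≤ ‖P‖ ^ 2) : ‖regQuotient P Q r - Q / P‖ ≤ K * r := by
  have hP0 : 0 < ‖P‖ := norm_pos_iff.2 hP
  have hS : 0 < ‖P‖ ^ 2 + r ^ 2 := by positivity
  have hdiff : regQuotient P Q r - Q / P =
      -(Q / P) * ((r ^ 2 / (‖P‖ ^ 2 + r ^ 2) : ℝ) : ℂ) := by
    have hSne : ((‖P‖ ^ 2 + r ^ 2 : ℝ) : ℂ) ≠ 0 := by exact_mod_cast hS.ne'
    have hconj : P * (starRingEnd ℂ) P = ((‖P‖ ^ 2 : ℝ) : ℂ) := by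
      rw [Complex.mul_conj, Complex.normSq_eq_norm_sq]
    rw [regQuotient, Complex.ofReal_div]
    field_simp
    rw [mul_comm _ P, hconj]
    push_cast
    ring
  rw [hdiff, norm_mul, norm_neg, norm_div, Complex.norm_real, Real.norm_of_nonneg (by positivity)]
  have hQP' : ‖Q‖ / ‖P‖ ≤ K := by rwa [div_le_iff₀ hP0]
  have hfrac : r ^ 2 / (‖P‖ ^ 2 + r ^ 2) ≤ r := by
    rw [div_le_iff₀ hS]
    nlinarith [pow_nonneg hr 3]
  exact mul_le_mul hQP' hfrac (by positivity) ((by positivity : 0 ≤ ‖Q‖ / ‖P‖).trans hQP')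

lemma norm_div_sub_div_le (hP : P ≠ 0) (hP' : P' ≠ 0) (hQP : ‖Q‖ ≤ K * ‖P‖)
    (hPP : ‖P - P'‖ ≤ x * ‖P'‖) (hQQ : ‖Q - Q'‖ ≤ x * ‖P'‖) :
    ‖Q / P - Q' / P'‖ ≤ (K + 1) * x := by
  have hQP' : ‖Q‖ / ‖P‖ ≤ K := by rwa [div_le_iff₀ (norm_pos_iff.2 hP)]
  have hPP' : ‖P - P'‖ / ‖P'‖ ≤ x := by rwa [div_le_iff₀ (norm_pos_iff.2 hP')]
  have hQQ' : ‖Q - Q'‖ / ‖P'‖ ≤ x := by rwa [div_le_iff₀ (norm_pos_iff.2 hP')]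
  calc ‖Q / P - Q' / P'‖ = ‖(Q - Q') / P' - Q / P * ((P - P') / P')‖ := by
        congr 1
        field_simp
        ring
    _ ≤ ‖Q - Q'‖ / ‖P'‖ + ‖Q‖ / ‖P‖ * (‖P - P'‖ / ‖P'‖) := by
        simpa only [norm_div, norm_mul] using norm_sub_le ((Q - Q') / P') (Q / P * ((P - P') / P'))
    _ ≤ x + K * x := add_le_add hQQ' (mul_le_mul hQP' hPP' (by positivity)
        ((by positivity : 0 ≤ ‖Q‖ / ‖P‖).trans hQP'))
    _ = (K + 1) * x := by ring

/-- Both regularized quotients are compared with the quotients `Q / P` and `Q' / P'`. -/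
lemma norm_regQuotient_sub_le_of_le_norm (hj : j ≠ 0) (hK : 1 ≤ K) (hx : 0 < x) (hx1 : x ≤ 1)
    (hr : 0 ≤ r) (hrx : r ≤ x ^ 2) (hr' : 0 ≤ r') (hrx' : r' ≤ x ^ 2) (hPK : ‖P‖ ≤ K)
    (hPx : 2 * K * x ≤ ‖P‖) (hPP : ‖P - P'‖ ≤ K * x ^ 2) (hQQ : ‖Q - Q'‖ ≤ K * x ^ 2)
    (hQ : ‖Q‖ ^ j ≤ K * max ‖P‖ r ^ (j + 1)) (hQ' : ‖Q'‖ ^ j ≤ K * max ‖P'‖ r' ^ (j + 1)) :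
    ‖regQuotient P Q r - regQuotient P' Q' r'‖ ≤ (6 * K ^ 2 + 1) * x := by
  have hxx : x ^ 2 ≤ x := pow_le_of_le_one hx.le hx1 two_ne_zero
  have hKx : x ≤ K * x := le_mul_of_one_le_left hx.le hK
  have hKxx : K * x ^ 2 ≤ K * x := by gcongr
  have hP'le := norm_le_norm_add_norm_sub P P'
  have hPle := norm_le_norm_add_norm_sub' P P'
  have hP'x : K * x ≤ ‖P'‖ := by linarith
  have hP : P ≠ 0 := norm_pos_iff.1 (by linarith)
  have hP' : P' ≠ 0 := norm_pos_iff.1 (by linarith)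
  rw [max_eq_left (by linarith)] at hQ hQ'
  have hL : 1 ≤ 2 * K ^ 2 := by nlinarith
  have hQP : ‖Q‖ ≤ 2 * K ^ 2 * ‖P‖ :=
    le_mul_of_pow_le_mul_pow_succ hj (norm_nonneg P) hL (by nlinarith) hQ
  have hQP' : ‖Q'‖ ≤ 2 * K ^ 2 * ‖P'‖ :=
    le_mul_of_pow_le_mul_pow_succ hj (norm_nonneg P') hL (by nlinarith) hQ'
  have hreg := norm_regQuotient_sub_div_le hP hQP hr (hrx.trans (by gcongr; linarith))
  have hreg' := norm_regQuotient_sub_div_le hP' hQP' hr' (hrx'.trans (by gcongr; linarith))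
  have hquot : ‖Q / P - Q' / P'‖ ≤ (2 * K ^ 2 + 1) * x :=
    norm_div_sub_div_le hP hP' hQP (by nlinarith) (by nlinarith)
  calc ‖regQuotient P Q r - regQuotient P' Q' r'‖
      = ‖(regQuotient P Q r - Q / P) + (Q / P - Q' / P') - (regQuotient P' Q' r' - Q' / P')‖ := by
        congr 1
        ring
    _ ≤ ‖regQuotient P Q r - Q / P‖ + ‖Q / P - Q' / P'‖ + ‖regQuotient P' Q' r' - Q' / P'‖ :=
        (norm_sub_le _ _).trans (by gcongr; exact norm_add_le _ _)
    _ ≤ 2 * K ^ 2 * x + (2 * K ^ 2 + 1) * x + 2 * K ^ 2 * x := by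
        gcongr
        · exact hreg.trans (by gcongr; linarith)
        · exact hreg'.trans (by gcongr; linarith)
    _ = (6 * K ^ 2 + 1) * x := by ring

lemma norm_regQuotient_sub_le {ρ : ℝ} (hj : j ≠ 0) (hK : 1 ≤ K) (hρ : 0 < ρ) (hρ1 : ρ ≤ 1)
    (hr : r = ρ ^ (2 * j)) (hr' : 0 ≤ r') (hrr' : r' ≤ r) (hPK : ‖P‖ ≤ K)
    (hPP : ‖P - P'‖ ≤ K * r ^ (j + 1)) (hQQ : ‖Q - Q'‖ ≤ K * r ^ (j + 1))
    (hQ : ‖Q‖ ^ j ≤ K * max ‖P‖ r ^ (j + 1)) (hQ' : ‖Q'‖ ^ j ≤ K * max ‖P'‖ r' ^ (j + 1)) :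
    ‖regQuotient P Q r - regQuotient P' Q' r'‖ ≤ 10 * K ^ 2 * ρ := by
  obtain ⟨x, hxdef⟩ : ∃ x, x = ρ ^ j := ⟨_, rfl⟩
  have hx : 0 < x := hxdef ▸ pow_pos hρ j
  have hx1 : x ≤ 1 := hxdef ▸ pow_le_one₀ hρ.le hρ1
  have hxρ : x ≤ ρ := hxdef ▸ pow_le_of_le_one hρ.le hρ1 hj
  have hrx : r = x ^ 2 := by rw [hr, hxdef, ← pow_mul, mul_comm]
  have hxx : x ^ 2 ≤ x := pow_le_of_le_one hx.le hx1 two_ne_zero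
  have hr0 : 0 ≤ r := hr'.trans hrr'
  have hrpow : r ^ (j + 1) ≤ x ^ 2 := hrx ▸ pow_le_of_le_one (by positivity) (by linarith) (by simp)
  have hPP' : ‖P - P'‖ ≤ K * x ^ 2 := hPP.trans (by gcongr)
  have hQQ' : ‖Q - Q'‖ ≤ K * x ^ 2 := hQQ.trans (by gcongr)
  rcases lt_or_ge ‖P‖ (2 * K * x) with hsmall | hlarge
  · have hKx : x ≤ K * x := le_mul_of_one_le_left hx.le hK
    have hKxx : K * x ^ 2 ≤ K * x := by gcongr
    have hν : 3 * K * x ≤ (3 * K * ρ) ^ j := by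
      rw [mul_pow, hxdef]
      gcongr
      exact le_self_pow₀ (by linarith) hj
    have hP'le := norm_le_norm_add_norm_sub P P'
    have hU := norm_regQuotient_le hj hK (by positivity) hQ
      ((max_le (by linarith) (by linarith)).trans hν)
    have hU' := norm_regQuotient_le hj hK (by positivity) hQ'
      ((max_le (by linarith) (by linarith)).trans hν)
    calc _ ≤ K * (3 * K * ρ) + K * (3 * K * ρ) := (norm_sub_le _ _).trans (add_le_add hU hU')
      _ = 6 * K ^ 2 * ρ := by ring
      _ ≤ 10 * K ^ 2 * ρ := by gcongr; norm_num
  · calc _ ≤ (6 * K ^ 2 + 1) * x := norm_regQuotient_sub_le_of_le_norm hj hK hx hx1 hr0 hrx.le hr'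
          (hrr'.trans_eq hrx) hPK hlarge hPP' hQQ' hQ hQ'
      _ ≤ 10 * K ^ 2 * ρ := by gcongr; nlinarith

end RegularizedQuotient

section CauchyPompeiu

/-- The Wirtinger derivative `∂φ/∂z̄`. -/
def dbar (φ : ℂ → ℂ) (z : ℂ) : ℂ :=
  (1 / 2) * (fderiv ℝ φ z 1 + Complex.I * fderiv ℝ φ z Complex.I)

variable {f g φ : ℂ → ℂ} {z c : ℂ}

lemma dbar_add (hf : DifferentiableAt ℝ f z) (hg : DifferentiableAt ℝ g z) :
    dbar (fun z => f z + g z) z = dbar f z + dbar g z := by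
  unfold dbar
  rw [fderiv_fun_add hf hg]
  simp only [add_apply]
  ring

lemma dbar_mul (hf : DifferentiableAt ℝ f z) (hg : DifferentiableAt ℝ g z) :
    dbar (fun z => f z * g z) z = f z * dbar g z + g z * dbar f z := by
  unfold dbar
  rw [fderiv_fun_mul hf hg]
  simp only [add_apply, smul_apply, smul_eq_mul]
  ring

lemma dbar_eq_zero_of_hasDerivAt (hf : HasDerivAt f c z) : dbar f z = 0 := by
  unfold dbar
  rw [(hf.hasFDerivAt.restrictScalars ℝ).fderiv]
  simp only [ContinuousLinearMap.coe_restrictScalars', ContinuousLinearMap.toSpanSingleton_apply,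
    smul_eq_mul, one_mul]
  linear_combination (c / 2) * Complex.I_mul_I

lemma dbar_conj (hf : HasDerivAt f c z) :
    dbar (fun z => (starRingEnd ℂ) (f z)) z = (starRingEnd ℂ) c := by
  have h : HasFDerivAt (fun z => (starRingEnd ℂ) (f z)) _ z :=
    Complex.conjCLE.toContinuousLinearMap.hasFDerivAt.comp z (hf.hasFDerivAt.restrictScalars ℝ)
  unfold dbar
  rw [h.fderiv]
  simp only [ContinuousLinearMap.comp_apply, ContinuousLinearMap.coe_restrictScalars',
    ContinuousLinearMap.toSpanSingleton_apply, smul_eq_mul, one_mul, ContinuousLinearEquiv.coe_coe,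
    ContinuousAlgEquiv.coeCLE_apply, Complex.conjCAE_apply, map_mul, Complex.conj_I]
  linear_combination (-(1 / 2) * (starRingEnd ℂ) c) * Complex.I_mul_I

lemma continuous_dbar (hf : ContDiff ℝ 1 f) : Continuous (dbar f) := by
  have := hf.continuous_fderiv one_ne_zero
  unfold dbar
  fun_prop

lemma tsupport_dbar_subset (f : ℂ → ℂ) : tsupport (dbar f) ⊆ tsupport f := by
  refine (closure_mono fun z hz => ?_).trans (tsupport_fderiv_subset ℝ (f := f))
  contrapose! hz
  simp [dbar, Function.notMem_support.1 hz]

lemma dbar_comp_add_left (f : ℂ → ℂ) (z ζ : ℂ) :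
    dbar (fun ζ => f (z + ζ)) ζ = dbar f (z + ζ) := by
  unfold dbar
  rw [fderiv_comp_add_left]

lemma fderiv_add_I_mul_fderiv (φ : ℂ → ℂ) (z v : ℂ) :
    fderiv ℝ φ z v + Complex.I * fderiv ℝ φ z (Complex.I * v) =
      2 * (starRingEnd ℂ) v * dbar φ z := by
  have hv : v = v.re • (1 : ℂ) + v.im • Complex.I := by simp
  have hIv : Complex.I * v = v.re • Complex.I - v.im • (1 : ℂ) := by
    apply Complex.ext <;> simp
  have hconj : (starRingEnd ℂ) v = v.re - v.im * Complex.I := by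
    apply Complex.ext <;> simp
  have hLv := congrArg (fderiv ℝ φ z) hv
  rw [map_add, (fderiv ℝ φ z).map_smul, (fderiv ℝ φ z).map_smul] at hLv
  rw [hIv, hconj, hLv, map_sub, (fderiv ℝ φ z).map_smul, (fderiv ℝ φ z).map_smul]
  simp only [Complex.real_smul, dbar]
  linear_combination (v.im : ℂ) * fderiv ℝ φ z Complex.I * Complex.I_sq

lemma integral_Ioi_fderiv_ray (hφ : ContDiff ℝ 1 φ) (hs : HasCompactSupport φ) {v : ℂ}
    (hv : v ≠ 0) : ∫ ρ : ℝ in Ioi 0, fderiv ℝ φ (ρ * v) v = -φ 0 := by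
  have hray : HasCompactSupport fun ρ : ℝ => φ (ρ * v) :=
    hs.comp_isClosedEmbedding ((Homeomorph.mulRight₀ v hv).isClosedEmbedding.comp
      Complex.isometry_ofReal.isClosedEmbedding)
  have hderiv : deriv (fun ρ : ℝ => φ (ρ * v)) = fun ρ : ℝ => fderiv ℝ φ (ρ * v) v := by
    ext ρ
    have hline : HasDerivAt (fun ρ : ℝ => (ρ : ℂ) * v) v ρ := by
      simpa using (Complex.ofRealCLM.hasDerivAt (x := ρ)).mul_const v
    exact ((hφ.differentiable one_ne_zero _).hasFDerivAt.comp_hasDerivAt ρ hline).deriv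
  have hφray : ContDiff ℝ 1 fun ρ : ℝ => φ (ρ * v) :=
    hφ.comp (Complex.ofRealCLM.contDiff.mul contDiff_const)
  simpa [hderiv] using hray.integral_Ioi_deriv_eq hφray 0

lemma integral_fderiv_circle (hφ : ContDiff ℝ 1 φ) {ρ : ℝ} (hρ : ρ ≠ 0) :
    ∫ θ in (-Real.pi)..Real.pi, fderiv ℝ φ (ρ * Complex.exp (θ * Complex.I))
      (Complex.I * Complex.exp (θ * Complex.I)) = 0 := by
  have := hφ.continuous_fderiv one_ne_zero
  have hderiv : ∀ θ : ℝ, HasDerivAt (fun θ => φ (circleMap 0 ρ θ))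
      (ρ • fderiv ℝ φ (ρ * Complex.exp (θ * Complex.I))
        (Complex.I * Complex.exp (θ * Complex.I))) θ := fun θ => by
    refine ((hφ.differentiable one_ne_zero _).hasFDerivAt.comp_hasDerivAt θ
      (hasDerivAt_circleMap 0 ρ θ)).congr_deriv ?_
    rw [circleMap_zero, ← (fderiv ℝ φ _).map_smul, Complex.real_smul]
    ring_nf
  have hint := intervalIntegral.integral_eq_sub_of_hasDerivAt (fun θ _ => hderiv θ)
    (Continuous.intervalIntegrable (by fun_prop) (-Real.pi) Real.pi)
  have hper : circleMap 0 ρ Real.pi = circleMap 0 ρ (-Real.pi) := by simp [circleMap]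
  rw [intervalIntegral.integral_smul, hper, sub_self] at hint
  exact (smul_eq_zero.1 hint).resolve_left hρ

lemma integrableOn_polar {G : ℝ × ℝ → ℂ} (hG : Continuous G) {A : ℝ}
    (h : ∀ p, A < p.1 → G p = 0) : IntegrableOn G (Ioi 0 ×ˢ Ioo (-Real.pi) Real.pi) := by
  have hbdd : IntegrableOn G (Ioc 0 A ×ˢ Ioo (-Real.pi) Real.pi) :=
    (hG.continuousOn.integrableOn_compact (isCompact_Icc.prod isCompact_Icc)).mono_set
      (prod_mono Ioc_subset_Icc_self Ioo_subset_Icc_self)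
  refine hbdd.of_forall_sdiff_eq_zero (measurableSet_Ioi.prod measurableSet_Ioo) ?_
  rintro ⟨ρ, θ⟩ ⟨⟨hρ, hθ⟩, hout⟩
  exact h _ (not_le.1 fun hle => hout ⟨⟨hρ, hle⟩, hθ⟩)

lemma integrableOn_polar_fderiv (hφ : ContDiff ℝ 1 φ) (hs : HasCompactSupport φ) (w : ℂ) :
    IntegrableOn (fun p : ℝ × ℝ => fderiv ℝ φ (p.1 * Complex.exp (p.2 * Complex.I))
      (w * Complex.exp (p.2 * Complex.I))) (Ioi 0 ×ˢ Ioo (-Real.pi) Real.pi) := by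
  have := hφ.continuous_fderiv one_ne_zero
  obtain ⟨A, hA0, hA⟩ := hs.isCompact.isBounded.subset_ball_lt 0 0
  refine integrableOn_polar (A := A) (by fun_prop) fun p hp => ?_
  rw [image_eq_zero_of_notMem_tsupport (f := fderiv ℝ φ), zero_apply]
  intro hmem
  have hlt := mem_ball_zero_iff.1 (hA (tsupport_fderiv_subset ℝ hmem))
  rw [norm_mul, Complex.norm_exp_ofReal_mul_I, mul_one, Complex.norm_real,
    Real.norm_of_nonneg (hA0.trans hp).le] at hlt
  exact hp.not_gt hlt

/-- In polar coordinates `∂̄φ / ζ` times the Jacobian `ρ` is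
`(∂φ/∂ρ + (i / ρ) ∂φ/∂θ) / 2`; the second term integrates to zero over circles. -/
lemma integral_dbar_div (hφ : ContDiff ℝ 1 φ) (hs : HasCompactSupport φ) :
    ∫ ζ, dbar φ ζ / ζ = -(Real.pi * φ 0) := by
  set radial : ℝ × ℝ → ℂ := fun p => fderiv ℝ φ (p.1 * Complex.exp (p.2 * Complex.I))
    (1 * Complex.exp (p.2 * Complex.I)) with hradial
  set angular : ℝ × ℝ → ℂ := fun p => fderiv ℝ φ (p.1 * Complex.exp (p.2 * Complex.I))
    (Complex.I * Complex.exp (p.2 * Complex.I)) with hangular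
  have hintr : IntegrableOn radial _ := integrableOn_polar_fderiv hφ hs 1
  have hinta : IntegrableOn angular _ := integrableOn_polar_fderiv hφ hs Complex.I
  have hpi : -Real.pi ≤ Real.pi := by linarith [Real.pi_pos]
  have hradial_eq : ∫ p in Ioi 0 ×ˢ Ioo (-Real.pi) Real.pi, radial p = -(2 * Real.pi * φ 0) := by
    rw [Measure.volume_eq_prod] at hintr ⊢
    rw [← setIntegral_prod_swap, setIntegral_prod (fun z => radial z.swap) hintr.swap]
    simp only [hradial, Prod.fst_swap, Prod.snd_swap, one_mul,
      integral_Ioi_fderiv_ray hφ hs (Complex.exp_ne_zero _)]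
    rw [setIntegral_const, Real.volume_real_Ioo_of_le hpi, Complex.real_smul]
    push_cast
    ring
  have hangular_eq : ∫ p in Ioi 0 ×ˢ Ioo (-Real.pi) Real.pi, angular p = 0 := by
    rw [Measure.volume_eq_prod] at hinta ⊢
    rw [setIntegral_prod _ hinta, setIntegral_congr_fun (g := 0) measurableSet_Ioi fun ρ hρ => ?_]
    · simp
    · rw [← integral_Ioc_eq_integral_Ioo, ← intervalIntegral.integral_of_le hpi]
      exact integral_fderiv_circle hφ (ne_of_gt hρ)
  rw [← Complex.integral_comp_polarCoord_symm, polarCoord_target,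
    setIntegral_congr_fun (g := fun p => (1 / 2 : ℂ) * (radial p + Complex.I * angular p))
      (measurableSet_Ioi.prod measurableSet_Ioo) fun p hp => ?_]
  · rw [integral_const_mul, integral_add hintr (hinta.const_mul _), integral_const_mul,
      hradial_eq, hangular_eq]
    ring
  · have hρ : (p.1 : ℂ) ≠ 0 := by exact_mod_cast ne_of_gt hp.1
    have hconj : (starRingEnd ℂ) (Complex.exp (p.2 * Complex.I)) * Complex.exp (p.2 * Complex.I)
        = 1 := by
      rw [Complex.conj_mul', Complex.norm_exp_ofReal_mul_I, Complex.ofReal_one, one_pow]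
    have hexp := Complex.exp_ne_zero (p.2 * Complex.I)
    simp only [hradial, hangular, one_mul, fderiv_add_I_mul_fderiv, Complex.polarCoord_symm_apply,
      Complex.ofReal_cos, Complex.ofReal_sin, ← Complex.exp_mul_I, Complex.real_smul]
    field_simp
    linear_combination -dbar φ (p.1 * Complex.exp (p.2 * Complex.I)) * hconj

/-- The Cauchy transform of `g`, without the customary factor `1 / π`. -/
def cauchyTransform (g : ℂ → ℂ) (z : ℂ) : ℂ := ∫ ζ, g ζ / (ζ - z)

lemma integrable_div_sub (hg : Continuous g) (hs : HasCompactSupport g) (z : ℂ) :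
    Integrable fun ζ => g ζ / (ζ - z) := by
  have hgz : Continuous fun ζ => g (ζ + z) := by fun_prop
  have hsz : HasCompactSupport fun ζ => g (ζ + z) := hs.comp_homeomorph (Homeomorph.addRight z)
  suffices h : Integrable fun ζ => g (ζ + z) / ζ by simpa using h.comp_sub_right z
  obtain ⟨A, -, hA⟩ := hsz.isCompact.isBounded.subset_ball_lt 0 0
  obtain ⟨B, hB⟩ := hgz.bounded_above_of_compact_support hsz
  have hball : IntegrableOn (fun ζ => g (ζ + z) / ζ) (Metric.ball 0 A) := by
    refine integrableOn_ball_of_norm_le_rpow (C := B) (α := 1) (by simp) (by simp) ?_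
      (hgz.measurable.div measurable_id).aestronglyMeasurable
    refine Eventually.of_forall fun ζ => ?_
    rw [norm_div, Real.rpow_neg_one, div_eq_mul_inv]
    gcongr
    exact hB ζ
  rw [← integrableOn_univ]
  refine hball.of_forall_sdiff_eq_zero MeasurableSet.univ fun ζ hζ => ?_
  rw [image_eq_zero_of_notMem_tsupport (f := fun ζ => g (ζ + z)) fun h => hζ.2 (hA h), zero_div]

lemma cauchyTransform_add (hf : Continuous f) (hfs : HasCompactSupport f) (hg : Continuous g)
    (hgs : HasCompactSupport g) (z : ℂ) :
    cauchyTransform (fun ζ => f ζ + g ζ) z = cauchyTransform f z + cauchyTransform g z := by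
  simp only [cauchyTransform, add_div]
  exact integral_add (integrable_div_sub hf hfs z) (integrable_div_sub hg hgs z)

lemma cauchyTransform_dbar (hφ : ContDiff ℝ 1 φ) (hs : HasCompactSupport φ) (z : ℂ) :
    cauchyTransform (dbar φ) z = -(Real.pi * φ z) := by
  have h := integral_dbar_div (φ := fun ζ => φ (z + ζ)) (hφ.comp (by fun_prop))
    (hs.comp_homeomorph (Homeomorph.addLeft z))
  simp only [dbar_comp_add_left, add_zero] at h
  rw [← h, cauchyTransform, ← integral_add_left_eq_self _ z]
  simp

lemma hasDerivAt_div_sub {a ζ z : ℂ} (h : ζ ≠ z) :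
    HasDerivAt (fun z => a / (ζ - z)) (a / (ζ - z) ^ 2) z := by
  have hsub : HasDerivAt (fun z => ζ - z) (-1) z := by simpa using (hasDerivAt_id z).const_sub ζ
  exact ((hasDerivAt_const z a).div hsub (sub_ne_zero.2 h)).congr_deriv (by simp)

lemma differentiableOn_cauchyTransform (hg : Continuous g) (hs : HasCompactSupport g) :
    DifferentiableOn ℂ (cauchyTransform g) (tsupport g)ᶜ := by
  intro z₀ hz₀
  obtain ⟨δ, hδ, hball⟩ := Metric.isOpen_iff.1 (isClosed_tsupport g).isOpen_compl z₀ hz₀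
  have hsep : ∀ ζ, g ζ ≠ 0 → ∀ z ∈ Metric.ball z₀ (δ / 2), δ / 2 ≤ ‖ζ - z‖ := fun ζ hζ z hz => by
    have hζ₀ : δ ≤ dist ζ z₀ := not_lt.1 fun h => hball h (subset_tsupport g hζ)
    have := dist_triangle ζ z z₀
    rw [Metric.mem_ball] at hz
    rw [← dist_eq_norm]
    linarith
  refine (hasDerivAt_integral_of_dominated_loc_of_deriv_le (μ := volume) (𝕜 := ℂ)
    (F := fun z ζ => g ζ / (ζ - z)) (F' := fun z ζ => g ζ / (ζ - z) ^ 2)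
    (bound := fun ζ => ‖g ζ‖ * (2 / δ) ^ 2) (Metric.ball_mem_nhds z₀ (half_pos hδ))
    (Eventually.of_forall fun z => (integrable_div_sub hg hs z).aestronglyMeasurable)
    (integrable_div_sub hg hs z₀) (hg.measurable.div (by fun_prop)).aestronglyMeasurable
    (Eventually.of_forall fun ζ z hz => ?_)
    ((hg.integrable_of_hasCompactSupport hs).norm.mul_const _)
    (Eventually.of_forall fun ζ z hz => ?_)).2.differentiableAt.differentiableWithinAt
  · rcases eq_or_ne (g ζ) 0 with h0 | h0
    · simp [h0]
    · rw [norm_div, norm_pow, div_eq_mul_inv, ← inv_pow]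
      have := hsep ζ h0 z hz
      gcongr
      rw [inv_le_comm₀ (by linarith) (by positivity), inv_div]
      exact this
  · rcases eq_or_ne (g ζ) 0 with h0 | h0
    · simpa only [h0, zero_div] using hasDerivAt_const z (0 : ℂ)
    · refine hasDerivAt_div_sub fun h => ?_
      have := hsep ζ h0 z hz
      rw [h, sub_self, norm_zero] at this
      linarith

lemma exists_differentiableOn_sub_eq_cauchyTransform (hf : ContDiff ℝ 1 f) {a : ℝ} (ha : 0 < a) :
    ∃ χ : ℂ → ℝ, (∀ z, χ z ∈ Icc 0 1) ∧ (∀ z, a ≤ ‖z‖ → χ z = 0) ∧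
      ∃ R : ℂ → ℂ, DifferentiableOn ℂ R (Metric.ball 0 (a / 2)) ∧
        ∀ z ∈ Metric.ball (0 : ℂ) (a / 2),
          R z - f z = (1 / Real.pi : ℂ) * cauchyTransform (fun ζ => χ ζ * dbar f ζ) z := by
  let χ : ContDiffBump (0 : ℂ) := ⟨a / 2, a, half_pos ha, half_lt_self ha⟩
  let X : ℂ → ℂ := fun z => χ z
  have hX : ContDiff ℝ 1 X := Complex.ofRealCLM.contDiff.comp χ.contDiff
  have hXs : HasCompactSupport X :=
    χ.hasCompactSupport.comp_left (g := fun x : ℝ => (x : ℂ)) Complex.ofReal_zero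
  have hX1 : ∀ z ∈ Metric.ball (0 : ℂ) (a / 2), X z = 1 := fun z hz => by
    simp [X, χ.one_of_mem_closedBall (Metric.ball_subset_closedBall hz)]
  have hdX : ∀ z ∈ Metric.ball (0 : ℂ) (a / 2), dbar X z = 0 := fun z hz => by
    have hev : X =ᶠ[nhds z] fun _ => 1 := by
      filter_upwards [Metric.isOpen_ball.mem_nhds hz] with w hw using hX1 w hw
    exact dbar_eq_zero_of_hasDerivAt ((hasDerivAt_const z (1 : ℂ)).congr_of_eventuallyEq hev)
  have hg : Continuous fun ζ => f ζ * dbar X ζ := hf.continuous.mul (continuous_dbar hX)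
  have hgs : HasCompactSupport fun ζ => f ζ * dbar X ζ :=
    (hXs.mono' ((subset_tsupport _).trans (tsupport_dbar_subset X))).mul_left
  have hball : Metric.ball (0 : ℂ) (a / 2) ⊆ (tsupport fun ζ => f ζ * dbar X ζ)ᶜ := by
    refine subset_compl_comm.1 (closure_minimal (fun ζ hζ => ?_) Metric.isOpen_ball.isClosed_compl)
    exact fun hζ' => hζ (by simp [hdX ζ hζ'])
  refine ⟨χ, fun z => ⟨χ.nonneg, χ.le_one⟩, fun z hz => χ.zero_of_le_dist (by simpa using hz),
    fun z => -(1 / Real.pi : ℂ) * cauchyTransform (fun ζ => f ζ * dbar X ζ) z,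
    ((differentiableOn_cauchyTransform hg hgs).mono hball).const_mul _, fun z hz => ?_⟩
  have hpompeiu := cauchyTransform_dbar (hX.mul hf) hXs.mul_right z
  have hprod : dbar (fun ζ => X ζ * f ζ) = fun ζ => X ζ * dbar f ζ + f ζ * dbar X ζ :=
    funext fun ζ =>
      dbar_mul (hX.differentiable one_ne_zero ζ) (hf.differentiable one_ne_zero ζ)
  have hXf : Continuous fun ζ => X ζ * dbar f ζ := hX.continuous.mul (continuous_dbar hf)
  rw [hprod, cauchyTransform_add hXf hXs.mul_right hg hgs,
    hX1 z hz, one_mul] at hpompeiu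
  have hpi : (Real.pi : ℂ) ≠ 0 := by exact_mod_cast Real.pi_ne_zero
  field_simp
  linear_combination -hpompeiu

end CauchyPompeiu

section SingularKernels

variable {κ β : ℝ}

lemma rpow_sub_one_mul_inv_le (hκ : κ ≤ 1) {x y : ℝ} (hx : 0 < x) (hy : 0 < y) :
    x ^ (κ - 1) * y⁻¹ ≤ x ^ (κ - 2) + y ^ (κ - 2) := by
  have hsplit : ∀ v : ℝ, 0 < v → v ^ (κ - 2) = v ^ (κ - 1) * v⁻¹ := fun v hv => by
    rw [← Real.rpow_neg_one v, ← Real.rpow_add hv]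
    ring_nf
  rcases le_total x y with h | h
  · calc x ^ (κ - 1) * y⁻¹ ≤ x ^ (κ - 1) * x⁻¹ := by gcongr
      _ = x ^ (κ - 2) := (hsplit x hx).symm
      _ ≤ _ := le_add_of_nonneg_right (by positivity)
  · calc x ^ (κ - 1) * y⁻¹ ≤ y ^ (κ - 1) * y⁻¹ := by
          gcongr ?_ * _
          exact Real.rpow_le_rpow_of_nonpos hy h (by linarith)
      _ = y ^ (κ - 2) := (hsplit y hy).symm
      _ ≤ _ := le_add_of_nonneg_left (by positivity)

lemma integrable_indicator_norm_rpow (hβ : -2 < β) :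
    Integrable ((Metric.ball (0 : ℂ) 1).indicator fun ζ => ‖ζ‖ ^ β) := by
  refine IntegrableOn.integrable_indicator ?_ measurableSet_ball
  refine integrableOn_ball_of_norm_le_rpow (C := 1) (α := -β) (by simp)
    (by simpa using neg_lt.1 hβ) ?_ (measurable_norm.pow_const _).aestronglyMeasurable
  refine Eventually.of_forall fun ζ => ?_
  rw [Real.norm_of_nonneg (by positivity), neg_neg, one_mul]

lemma norm_sub_rpow_le_one_add_indicator (hβ : β ≤ 0) (α ζ : ℂ) :
    ‖ζ - α‖ ^ β ≤ 1 + (Metric.ball (0 : ℂ) 1).indicator (fun ζ => ‖ζ‖ ^ β) (ζ - α) := by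
  by_cases h : ζ - α ∈ Metric.ball 0 1
  · rw [indicator_of_mem h]
    linarith
  · rw [indicator_of_notMem h, add_zero]
    exact Real.rpow_le_one_of_one_le_of_nonpos (by simpa using h) hβ

lemma exists_integral_norm_sub_rpow_le (hβ : -2 < β) (hβ0 : β ≤ 0) :
    ∃ J : ℝ, 0 ≤ J ∧ ∀ α : ℂ, IntegrableOn (fun ζ => ‖ζ - α‖ ^ β) (Metric.ball 0 1) ∧
      ∫ ζ in Metric.ball 0 1, ‖ζ - α‖ ^ β ≤ J := by
  set k : ℂ → ℝ := (Metric.ball 0 1).indicator fun ζ => ‖ζ‖ ^ β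
  have hk0 : ∀ ζ, 0 ≤ k ζ := fun ζ => indicator_nonneg (fun _ _ => by positivity) ζ
  have hk : ∀ α, Integrable fun ζ => k (ζ - α) :=
    fun α => (integrable_indicator_norm_rpow hβ).comp_sub_right α
  have hone : IntegrableOn (fun _ : ℂ => (1 : ℝ)) (Metric.ball 0 1) := integrableOn_const (by simp)
  have hint : ∀ α : ℂ, IntegrableOn (fun ζ => ‖ζ - α‖ ^ β) (Metric.ball 0 1) := fun α => by
    have hmeas : Measurable fun ζ => ‖ζ - α‖ ^ β := (by fun_prop : Measurable _).pow_const β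
    refine (hone.add (hk α).integrableOn).mono' hmeas.aestronglyMeasurable
      (Eventually.of_forall fun ζ => ?_)
    rw [Real.norm_of_nonneg (by positivity)]
    exact norm_sub_rpow_le_one_add_indicator hβ0 α ζ
  refine ⟨volume.real (Metric.ball (0 : ℂ) 1) + ∫ ζ, k ζ,
    add_nonneg measureReal_nonneg (integral_nonneg hk0), fun α => ⟨hint α, ?_⟩⟩
  calc ∫ ζ in Metric.ball 0 1, ‖ζ - α‖ ^ β ≤ ∫ ζ in Metric.ball 0 1, (1 + k (ζ - α)) :=
        integral_mono (hint α) (hone.add (hk α).integrableOn)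
          (norm_sub_rpow_le_one_add_indicator hβ0 α)
    _ = volume.real (Metric.ball (0 : ℂ) 1) + ∫ ζ in Metric.ball 0 1, k (ζ - α) := by
        rw [integral_add hone (hk α).integrableOn, setIntegral_const, smul_eq_mul, mul_one]
    _ ≤ volume.real (Metric.ball (0 : ℂ) 1) + ∫ ζ, k (ζ - α) := by
        exact add_le_add_right
          (setIntegral_le_integral (hk α) (Eventually.of_forall fun ζ => hk0 _)) _
    _ = _ := by rw [integral_sub_right_eq_self]

lemma integral_multiset_sum_map {s : Set ℂ} {F : ℂ → ℂ → ℝ} {J : ℝ}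
    (hF : ∀ α, IntegrableOn (F α) s) (hJ : ∀ α, ∫ ζ in s, F α ζ ≤ J) (S : Multiset ℂ) :
    IntegrableOn (fun ζ => (S.map fun α => F α ζ).sum) s ∧
      ∫ ζ in s, (S.map fun α => F α ζ).sum ≤ Multiset.card S * J := by
  induction S using Multiset.induction_on with
  | empty => simp
  | cons α S ih =>
    simp only [Multiset.map_cons, Multiset.sum_cons, Multiset.card_cons]
    refine ⟨(hF α).add ih.1, ?_⟩
    rw [integral_add (hF α) ih.1]
    push_cast
    linarith [hJ α, ih.2]

lemma norm_div_sub_le_multiset_sum (hκ : κ ≤ 1) {S : Multiset ℂ} {A : ℝ} {a ζ z : ℂ} (hA : 0 ≤ A)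
    (hζS : ζ ∉ S) (hζz : ζ ≠ z) (ha : ‖a‖ ≤ A * (S.map fun α => ‖ζ - α‖ ^ (κ - 1)).sum) :
    ‖a / (ζ - z)‖ ≤ A * (S.map fun α => ‖ζ - α‖ ^ (κ - 2) + ‖ζ - z‖ ^ (κ - 2)).sum := by
  rw [norm_div, div_eq_mul_inv]
  calc ‖a‖ * ‖ζ - z‖⁻¹ ≤ A * (S.map fun α => ‖ζ - α‖ ^ (κ - 1)).sum * ‖ζ - z‖⁻¹ := by gcongr
    _ = A * (S.map fun α => ‖ζ - α‖ ^ (κ - 1) * ‖ζ - z‖⁻¹).sum := by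
        rw [mul_assoc, Multiset.sum_map_mul_right]
    _ ≤ _ := by
        refine mul_le_mul_of_nonneg_left (Multiset.sum_map_le_sum_map _ _ fun α hα => ?_) hA
        have hζα : ζ ≠ α := fun h => hζS (h ▸ hα)
        exact rpow_sub_one_mul_inv_le hκ (norm_pos_iff.2 (sub_ne_zero.2 hζα))
          (norm_pos_iff.2 (sub_ne_zero.2 hζz))

lemma exists_norm_cauchyTransform_le (hκ0 : 0 < κ) (hκ1 : κ ≤ 1) :
    ∃ J : ℝ, 0 ≤ J ∧ ∀ (S : Multiset ℂ) (A : ℝ) (w : ℂ → ℂ), 0 ≤ A →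
      (∀ ζ, 1 ≤ ‖ζ‖ → w ζ = 0) →
      (∀ ζ, ‖ζ‖ < 1 → ζ ∉ S → ‖w ζ‖ ≤ A * (S.map fun α => ‖ζ - α‖ ^ (κ - 1)).sum) →
      ∀ z, ‖cauchyTransform w z‖ ≤ A * (Multiset.card S * J) := by
  obtain ⟨J, hJ0, hJ⟩ :=
    exists_integral_norm_sub_rpow_le (β := κ - 2) (by linarith) (by linarith)
  refine ⟨J + J, by positivity, fun S A w hA hw0 hw z => ?_⟩
  have hF : ∀ α, ∫ ζ in Metric.ball 0 1, (‖ζ - α‖ ^ (κ - 2) + ‖ζ - z‖ ^ (κ - 2)) ≤ J + J :=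
    fun α => by
      rw [integral_add (hJ α).1 (hJ z).1]
      exact add_le_add (hJ α).2 (hJ z).2
  obtain ⟨hint, hle⟩ := integral_multiset_sum_map (fun α => (hJ α).1.add (hJ z).1) hF S
  have hball : ∫ ζ in Metric.ball 0 1, w ζ / (ζ - z) = cauchyTransform w z :=
    setIntegral_eq_integral_of_forall_compl_eq_zero fun ζ hζ => by
      rw [hw0 ζ (by simpa using hζ), zero_div]
  have hfin : (insert z S.toFinset : Set ℂ).Finite := S.toFinset.finite_toSet.insert z
  rw [← hball]
  refine (norm_integral_le_of_norm_le (hint.const_mul A) ?_).trans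
    ((integral_const_mul _ _).trans_le (mul_le_mul_of_nonneg_left hle hA))
  filter_upwards [ae_restrict_mem measurableSet_ball,
    ae_restrict_of_ae (measure_eq_zero_iff_ae_notMem.1 (hfin.measure_zero volume))] with ζ hζ hζS
  simp only [mem_insert_iff, Finset.mem_coe, Multiset.mem_toFinset, not_or] at hζS
  exact norm_div_sub_le_multiset_sum hκ1 hA hζS.2 hζS.1 (hw ζ (by simpa using hζ) hζS.2)

lemma exists_holomorphic_approximation (hκ0 : 0 < κ) (hκ1 : κ ≤ 1) :
    ∃ J : ℝ, 0 ≤ J ∧ ∀ (S : Multiset ℂ) (A a : ℝ) (f : ℂ → ℂ), 0 ≤ A → 0 < a → a ≤ 1 →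
      ContDiff ℝ 1 f →
      (∀ ζ, ‖ζ‖ < a → ζ ∉ S → ‖dbar f ζ‖ ≤ A * (S.map fun α => ‖ζ - α‖ ^ (κ - 1)).sum) →
      ∃ R : ℂ → ℂ, DifferentiableOn ℂ R (Metric.ball 0 (a / 2)) ∧
        ∀ z ∈ Metric.ball (0 : ℂ) (a / 2), ‖R z - f z‖ ≤ A * (Multiset.card S * J) := by
  obtain ⟨J, hJ0, hJ⟩ := exists_norm_cauchyTransform_le hκ0 hκ1
  refine ⟨J, hJ0, fun S A a f hA ha ha1 hf hdbar => ?_⟩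
  obtain ⟨χ, hχ, hχ0, R, hR, hRf⟩ := exists_differentiableOn_sub_eq_cauchyTransform hf ha
  have hpi : ‖(1 / Real.pi : ℂ)‖ ≤ 1 := by
    rw [norm_div, norm_one, Complex.norm_real, Real.norm_of_nonneg Real.pi_pos.le]
    exact (div_le_one Real.pi_pos).2 (by linarith [Real.pi_gt_three])
  refine ⟨R, hR, fun z hz => ?_⟩
  rw [hRf z hz, norm_mul]
  refine (mul_le_of_le_one_left (norm_nonneg _) hpi).trans
    (hJ S A _ hA (fun ζ hζ => by simp [hχ0 ζ (ha1.trans hζ)]) (fun ζ _ hζS => ?_) z)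
  have hsum : 0 ≤ (S.map fun α => ‖ζ - α‖ ^ (κ - 1)).sum :=
    Multiset.sum_nonneg fun x hx => by
      obtain ⟨α, -, rfl⟩ := Multiset.mem_map.1 hx
      positivity
  rcases lt_or_ge ‖ζ‖ a with hζ | hζ
  · rw [norm_mul, Complex.norm_real, Real.norm_of_nonneg (hχ ζ).1]
    exact (mul_le_of_le_one_left (norm_nonneg _) (hχ ζ).2).trans (hdbar ζ hζ hζS)
  · rw [hχ0 ζ hζ, Complex.ofReal_zero, zero_mul, norm_zero]
    positivity

end SingularKernels

section QuotientApproximation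

open Polynomial

variable {j : ℕ} {p q : ℂ → ℂ} {p' q' z ζ α : ℂ} {κ r K L M a : ℝ} {P Q : ℂ[X]}

lemma norm_sq_add_sq_ne_zero (w : ℂ) (hr : 0 < r) : ((‖w‖ ^ 2 + r ^ 2 : ℝ) : ℂ) ≠ 0 :=
  Complex.ofReal_ne_zero.2 (by positivity)

lemma contDiff_regQuotient (hp : ContDiff ℝ 1 p) (hq : ContDiff ℝ 1 q) (hr : 0 < r) :
    ContDiff ℝ 1 fun z => regQuotient (p z) (q z) r := by
  simp only [regQuotient, div_eq_mul_inv]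
  refine (hq.mul (Complex.conjCLE.toContinuousLinearMap.contDiff.comp hp)).mul
    (ContDiff.inv (Complex.ofRealCLM.contDiff.comp ?_) fun z => norm_sq_add_sq_ne_zero _ hr)
  exact ((contDiff_norm_sq ℝ).comp hp).add contDiff_const

lemma contDiff_eval (P : ℂ[X]) : ContDiff ℝ 1 fun z => P.eval z := by
  simpa using (P.contDiff_aeval (𝕜 := ℂ) (R := ℂ) 1).restrict_scalars ℝ

/-- Apply `∂̄` to `regQuotient p q r * (p * conj p + r ^ 2) = q * conj p`. -/
lemma dbar_regQuotient (hp : HasDerivAt p p' z) (hq : HasDerivAt q q' z)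
    (hu : DifferentiableAt ℝ (fun z => regQuotient (p z) (q z) r) z) (hr : 0 < r) :
    dbar (fun z => regQuotient (p z) (q z) r) z * ((‖p z‖ ^ 2 + r ^ 2 : ℝ) : ℂ) ^ 2 =
      q z * (starRingEnd ℂ) p' * (r : ℂ) ^ 2 := by
  set u : ℂ → ℂ := fun z => regQuotient (p z) (q z) r with hudef
  set S : ℂ → ℂ := fun z => p z * (starRingEnd ℂ) (p z) + (r : ℂ) ^ 2 with hSdef
  have hpd : DifferentiableAt ℝ p z := hp.differentiableAt.restrictScalars ℝ
  have hcd : DifferentiableAt ℝ (fun z => (starRingEnd ℂ) (p z)) z :=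
    Complex.conjCLE.toContinuousLinearMap.differentiableAt.comp z hpd
  have hSd : DifferentiableAt ℝ S z := (hpd.mul hcd).add (differentiableAt_const _)
  have hS : ∀ w, S w = ((‖p w‖ ^ 2 + r ^ 2 : ℝ) : ℂ) := fun w => by
    simp only [hSdef, Complex.mul_conj']
    push_cast
    rfl
  have hdS : dbar S z = p z * (starRingEnd ℂ) p' := by
    rw [hSdef, dbar_add (hpd.fun_mul hcd) (differentiableAt_const _), dbar_mul hpd hcd,
      dbar_conj hp, dbar_eq_zero_of_hasDerivAt hp,
      dbar_eq_zero_of_hasDerivAt (hasDerivAt_const z _)]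
    ring
  have huS : (fun w => u w * S w) = fun w => q w * (starRingEnd ℂ) (p w) := by
    ext w
    rw [hS, hudef]
    exact div_mul_cancel₀ _ (norm_sq_add_sq_ne_zero _ hr)
  have hdbar := dbar_mul hu hSd
  rw [huS, dbar_mul (hq.differentiableAt.restrictScalars ℝ) hcd, dbar_conj hp,
    dbar_eq_zero_of_hasDerivAt hq, hdS] at hdbar
  have huSz := congrFun huS z
  have hSz : S z = p z * (starRingEnd ℂ) (p z) + (r : ℂ) ^ 2 := rfl
  rw [← hS]
  linear_combination (-S z) * hdbar - p z * (starRingEnd ℂ) p' * huSz +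
    q z * (starRingEnd ℂ) p' * hSz

lemma norm_dbar_regQuotient (hp : HasDerivAt p p' z) (hq : HasDerivAt q q' z)
    (hu : DifferentiableAt ℝ (fun z => regQuotient (p z) (q z) r) z) (hr : 0 < r) :
    ‖dbar (fun z => regQuotient (p z) (q z) r) z‖ =
      ‖q z‖ * ‖p'‖ * r ^ 2 / (‖p z‖ ^ 2 + r ^ 2) ^ 2 := by
  have h := congrArg norm (dbar_regQuotient hp hq hu hr)
  rw [norm_mul, norm_mul, norm_mul, norm_pow, norm_pow, Complex.norm_real, Complex.norm_real,
    Real.norm_of_nonneg hr.le, Real.norm_of_nonneg (by positivity), RCLike.norm_conj] at h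
  rwa [eq_div_iff (by positivity)]

lemma norm_le_mul_norm_sub_of_eq_zero (hp : Differentiable ℂ p)
    (hM : ∀ z, ‖z‖ ≤ 1 / 4 → ‖p z‖ ≤ M) (hα : p α = 0) (hζ : ‖ζ‖ ≤ 1 / 64) :
    ‖p ζ‖ ≤ 16 * M * ‖ζ - α‖ := by
  have hM0 : 0 ≤ M := (norm_nonneg _).trans (hM ζ (by linarith))
  rcases le_or_gt ‖α‖ (1 / 8) with h | h
  · have hderiv : ∀ z ∈ Metric.closedBall (0 : ℂ) (1 / 8), ‖deriv p z‖ ≤ 16 * M := by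
      intro z hz
      refine (Complex.norm_deriv_le_of_forall_mem_sphere_norm_le (R := 1 / 8) (C := M)
        (by norm_num) hp.diffContOnCl fun w hw => hM w ?_).trans (by linarith)
      linarith [norm_sub_norm_le w z, mem_sphere_iff_norm.1 hw, mem_closedBall_zero_iff.1 hz]
    simpa [hα] using Convex.norm_image_sub_le_of_norm_deriv_le (fun z _ => hp z) hderiv
      (convex_closedBall _ _) (mem_closedBall_zero_iff.2 h)
      (mem_closedBall_zero_iff.2 (hζ.trans (by norm_num)))
  · have hsep : 1 / 16 ≤ ‖ζ - α‖ := by linarith [norm_sub_norm_le α ζ, norm_sub_rev α ζ]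
    nlinarith [hM ζ (by linarith)]

lemma le_mul_rpow_one_sub {x : ℝ} (hκ0 : 0 ≤ κ) (hκ1 : κ ≤ 1) (hx : 0 ≤ x) (hL : 1 ≤ L)
    (hxL : x ≤ L) : x ≤ L * x ^ (1 - κ) := by
  rcases hx.eq_or_lt with rfl | hx
  · positivity
  calc x = x ^ κ * x ^ (1 - κ) := by rw [← Real.rpow_add hx, add_sub_cancel, Real.rpow_one]
    _ ≤ L * x ^ (1 - κ) := by
      gcongr
      calc x ^ κ ≤ L ^ κ := Real.rpow_le_rpow hx.le hxL hκ0
        _ ≤ L ^ (1 : ℝ) := Real.rpow_le_rpow_of_exponent_le hL hκ1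
        _ = L := Real.rpow_one L

lemma norm_eval_derivative_le (hκ0 : 0 ≤ κ) (hκ1 : κ ≤ 1) (hL : 1 ≤ L) (hP : P.eval ζ ≠ 0)
    (hroots : ∀ α ∈ P.roots, ‖P.eval ζ‖ ≤ L * ‖ζ - α‖) :
    ‖P.derivative.eval ζ‖ ≤
      L * ‖P.eval ζ‖ ^ (1 - κ) * (P.roots.map fun α => ‖ζ - α‖ ^ (κ - 1)).sum := by
  have hlog := (IsAlgClosed.splits P).eval_derivative_div_eval_of_ne_zero hP
  rw [div_eq_iff hP] at hlog
  have hsum := norm_multiset_sum_le (P.roots.map fun α => 1 / (ζ - α))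
  rw [Multiset.map_map] at hsum
  rw [hlog, norm_mul]
  refine (mul_le_mul_of_nonneg_right hsum (norm_nonneg _)).trans ?_
  rw [← Multiset.sum_map_mul_right, ← Multiset.sum_map_mul_left]
  refine Multiset.sum_map_le_sum_map _ _ fun α hα => ?_
  have hδ : 0 < ‖ζ - α‖ := norm_pos_iff.2 (sub_ne_zero.2 fun h =>
    hP (h ▸ (mem_roots'.1 hα).2))
  have hratio : ‖P.eval ζ‖ / ‖ζ - α‖ ≤ L := (div_le_iff₀ hδ).2 (hroots α hα)
  rw [Function.comp_apply, norm_div, norm_one, one_div, inv_mul_eq_div]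
  refine (le_mul_rpow_one_sub hκ0 hκ1 (by positivity) hL hratio).trans_eq ?_
  rw [Real.div_rpow (norm_nonneg _) (norm_nonneg _), ← neg_sub 1 κ, Real.rpow_neg hδ.le]
  ring

lemma le_mul_rpow_of_pow_le (hj : j ≠ 0) (hK : 1 ≤ K) {T x : ℝ} (hT : 0 ≤ T)
    (h : x ^ j ≤ K * T ^ (j + 1)) : x ≤ K * T ^ (1 + 2 * (1 / (2 * j : ℝ))) := by
  have hj' : (j : ℝ) ≠ 0 := Nat.cast_ne_zero.2 hj
  refine le_of_pow_le_pow_left₀ hj (by positivity) (h.trans ?_)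
  have hexp : (1 + 2 * (1 / (2 * j : ℝ))) * j = ((j + 1 : ℕ) : ℝ) := by
    push_cast
    field_simp
  rw [mul_pow, ← Real.rpow_mul_natCast hT, hexp, Real.rpow_natCast]
  gcongr
  exact le_self_pow₀ hK hj

lemma rpow_mul_rpow_mul_sq_div_le (hκ : κ ≤ 2) {T : ℝ} (hr : 0 < r) (hrT : r ≤ T) :
    T ^ (1 + 2 * κ) * T ^ (1 - κ) * r ^ 2 / T ^ 4 ≤ r ^ κ := by
  have hT : 0 < T := hr.trans_le hrT
  have hratio : (r / T) ^ (2 - κ) ≤ 1 :=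
    Real.rpow_le_one (by positivity) ((div_le_one hT).2 hrT) (by linarith)
  calc T ^ (1 + 2 * κ) * T ^ (1 - κ) * r ^ 2 / T ^ 4 = r ^ κ * (r / T) ^ (2 - κ) := by
        rw [Real.div_rpow hr.le hT.le, mul_div_assoc', ← Real.rpow_add hr, ← Real.rpow_add hT,
          div_eq_div_iff (by positivity) (by positivity), mul_right_comm, ← Real.rpow_add hT,
          ← Real.rpow_natCast T 4, ← Real.rpow_natCast r 2, mul_comm]
        ring_nf
    _ ≤ r ^ κ := mul_le_of_le_one_right (by positivity) hratio

/-- Away from the zeros of `P`, the estimate `‖Q‖ ≤ K * T ^ (1 + 1 / j)`, `T = max ‖P‖ r`, gains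
more powers of `T` than the logarithmic derivative `P' / P` loses near a zero of `P`. -/
lemma norm_dbar_regQuotient_eval_le (hj : j ≠ 0) (hK : 1 ≤ K) (hL : 1 ≤ L) (hr : 0 < r)
    (hP : P.eval ζ ≠ 0) (hroots : ∀ α ∈ P.roots, ‖P.eval ζ‖ ≤ L * ‖ζ - α‖)
    (hQ : ‖Q.eval ζ‖ ^ j ≤ K * max ‖P.eval ζ‖ r ^ (j + 1)) :
    ‖dbar (fun z => regQuotient (P.eval z) (Q.eval z) r) ζ‖ ≤ K * L * r ^ (1 / (2 * j : ℝ)) *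
      (P.roots.map fun α => ‖ζ - α‖ ^ (1 / (2 * j : ℝ) - 1)).sum := by
  have hj1 : (1 : ℝ) ≤ j := by exact_mod_cast Nat.one_le_iff_ne_zero.2 hj
  set κ : ℝ := 1 / (2 * j : ℝ)
  have hκ0 : 0 < κ := by positivity
  have hκ1 : κ ≤ 1 := (div_le_one (by positivity)).2 (by linarith)
  set T := max ‖P.eval ζ‖ r
  have hT : 0 < T := lt_max_of_lt_right hr
  set S := (P.roots.map fun α => ‖ζ - α‖ ^ (κ - 1)).sum
  have hS : 0 ≤ S := Multiset.sum_nonneg fun x hx => by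
    obtain ⟨α, -, rfl⟩ := Multiset.mem_map.1 hx
    positivity
  have hP' : ‖P.derivative.eval ζ‖ ≤ L * T ^ (1 - κ) * S := by
    refine (norm_eval_derivative_le hκ0.le hκ1 hL hP hroots).trans ?_
    have hmax : ‖P.eval ζ‖ ≤ T := le_max_left _ _
    gcongr
  have hden : T ^ 4 ≤ (‖P.eval ζ‖ ^ 2 + r ^ 2) ^ 2 := by
    calc T ^ 4 = (T ^ 2) ^ 2 := by ring
      _ ≤ _ := by gcongr; exact sq_max_le_add_sq _ _
  rw [norm_dbar_regQuotient (P.hasDerivAt ζ) (Q.hasDerivAt ζ)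
    ((contDiff_regQuotient (contDiff_eval P) (contDiff_eval Q) hr).differentiable one_ne_zero ζ) hr]
  calc _ ≤ K * T ^ (1 + 2 * κ) * (L * T ^ (1 - κ) * S) * r ^ 2 / T ^ 4 := by
        gcongr
        exact le_mul_rpow_of_pow_le hj hK hT.le hQ
    _ = K * L * (T ^ (1 + 2 * κ) * T ^ (1 - κ) * r ^ 2 / T ^ 4) * S := by ring
    _ ≤ K * L * r ^ κ * S := by
        gcongr
        exact rpow_mul_rpow_mul_sq_div_le (by linarith) hr (le_max_right _ _)

lemma exists_holomorphic_sub_regQuotient_le (hj : j ≠ 0) (hK : 1 ≤ K) (hM : 1 ≤ M) (ha : 0 < a)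
    (ha' : a ≤ 1 / 64) :
    ∃ A : ℝ, 0 ≤ A ∧ ∀ (P Q : ℂ[X]) (r : ℝ), 0 < r → (∀ z : ℂ, ‖z‖ ≤ 1 / 4 → ‖P.eval z‖ ≤ M) →
      (∀ z : ℂ, ‖z‖ < a → ‖Q.eval z‖ ^ j ≤ K * max ‖P.eval z‖ r ^ (j + 1)) →
      ∃ R : ℂ → ℂ, DifferentiableOn ℂ R (Metric.ball 0 (a / 2)) ∧
        ∀ z ∈ Metric.ball (0 : ℂ) (a / 2), ‖R z - regQuotient (P.eval z) (Q.eval z) r‖ ≤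
          A * P.natDegree * r ^ (1 / (2 * j : ℝ)) := by
  have hj1 : (1 : ℝ) ≤ j := by exact_mod_cast Nat.one_le_iff_ne_zero.2 hj
  obtain ⟨J, hJ0, hJ⟩ := exists_holomorphic_approximation (κ := 1 / (2 * j : ℝ)) (by positivity)
    ((div_le_one (by positivity)).2 (by linarith))
  refine ⟨K * (16 * M) * J, by positivity, fun P Q r hr hP hQ => ?_⟩
  rcases eq_or_ne P 0 with rfl | hP0
  · refine ⟨fun _ => 0, differentiableOn_const _, fun z _ => ?_⟩
    simp [regQuotient]
  obtain ⟨R, hR, hle⟩ := hJ P.roots (K * (16 * M) * r ^ (1 / (2 * j : ℝ))) a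
    (fun z => regQuotient (P.eval z) (Q.eval z) r) (by positivity) ha (by linarith)
    (contDiff_regQuotient (contDiff_eval P) (contDiff_eval Q) hr) fun ζ hζ hζP =>
      norm_dbar_regQuotient_eval_le hj hK (by linarith) hr (fun h => hζP ((mem_roots hP0).2 h))
        (fun α hα => norm_le_mul_norm_sub_of_eq_zero P.differentiable hP (mem_roots'.1 hα).2
          (hζ.le.trans ha')) (hQ ζ hζ)
  refine ⟨R, hR, fun z hz => (hle z hz).trans ?_⟩
  calc K * (16 * M) * r ^ (1 / (2 * j : ℝ)) * (Multiset.card P.roots * J)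
      ≤ K * (16 * M) * r ^ (1 / (2 * j : ℝ)) * (P.natDegree * J) := by
        gcongr
        exact_mod_cast P.card_roots'
    _ = _ := by ring

end QuotientApproximation

section Scales

open Metric

variable {m n : ℕ → ℝ} {B C b t : ℝ} {φ : ℝ → ℂ} {c d : ℕ → ℂ} {j : ℕ} {z : ℂ}

lemma exists_add_one_mul_pow_le {x : ℝ} (hx : 0 ≤ x) (hx1 : x < 1) :
    ∃ A, 0 < A ∧ ∀ p : ℕ, ((p : ℝ) + 1) * x ^ p ≤ A := by
  have hlim : Tendsto (fun p : ℕ => ((p : ℝ) + 1) * x ^ p) atTop (nhds (0 + 0)) := by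
    simpa only [add_mul, one_mul] using (tendsto_self_mul_const_pow_of_lt_one hx hx1).add
      (tendsto_pow_atTop_nhds_zero_of_lt_one hx hx1)
  obtain ⟨A, hA⟩ := hlim.bddAbove_range
  exact ⟨max A 1, lt_max_of_lt_right one_pos, fun p => le_max_of_le_left (hA ⟨p, rfl⟩)⟩

/-- The accuracy, up to a constant, with which the regularized quotient of the scaled Taylor
polynomials approximates both the original function and a holomorphic one at scale `t`. -/
def scaleError (n : ℕ → ℝ) (C : ℝ) (j : ℕ) (t : ℝ) : ℝ :=
  ((GammaBar n (C * t) : ℝ) + 1) * scaleRadius n C j t ^ (1 / (2 * j : ℝ))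

/-- The regularized quotient of the scaled Taylor polynomials with coefficients `d` and `c`, as a
function of the rescaled variable. -/
def scaleQuotient (n : ℕ → ℝ) (C : ℝ) (j : ℕ) (c d : ℕ → ℂ) (t : ℝ) (z : ℂ) : ℂ :=
  regQuotient ((scaledTaylor c t (GammaBar n (C * t))).eval z)
    ((scaledTaylor d t (GammaBar n (C * t))).eval z) (scaleRadius n C j t)

/-- The constant of `HasTaylorBounds.norm_eval_scaledTaylor_pow_le`. -/
def quotientConst (B : ℝ) (j : ℕ) : ℝ := 1 + Real.exp 4 * (2 * j + 1) * (2 * B) ^ (j + 1)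

/-- The radius of validity of `HasTaylorBounds.norm_eval_scaledTaylor_pow_le`. -/
def quotientRadius (j : ℕ) : ℝ := Real.exp (-(4 * j)) / 4

lemma one_le_quotientConst (hB : 0 ≤ B) (j : ℕ) : 1 ≤ quotientConst B j :=
  le_add_of_nonneg_right (by positivity)

lemma two_mul_le_quotientConst (hB : 1 ≤ B) (j : ℕ) : 2 * B ≤ quotientConst B j := by
  have hexp : 1 ≤ Real.exp 4 := Real.one_le_exp (by norm_num)
  calc 2 * B ≤ (2 * B) ^ (j + 1) := le_self_pow₀ (by linarith) j.succ_ne_zero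
    _ ≤ Real.exp 4 * (2 * j + 1) * (2 * B) ^ (j + 1) :=
        le_mul_of_one_le_left (by positivity)
          (one_le_mul_of_one_le_of_one_le hexp (le_add_of_nonneg_left (by positivity)))
    _ ≤ quotientConst B j := le_add_of_nonneg_left zero_le_one

lemma quotientRadius_pos (j : ℕ) : 0 < quotientRadius j := by unfold quotientRadius; positivity

lemma quotientRadius_le (hj : j ≠ 0) : quotientRadius j ≤ 1 / 64 := by
  have hj1 : (1 : ℝ) ≤ j := Nat.one_le_cast.2 (Nat.one_le_iff_ne_zero.2 hj)
  have hexp : (16 : ℝ) ≤ Real.exp (4 * j) := by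
    have h2 : (2 : ℝ) ≤ Real.exp 1 := by linarith [Real.add_one_le_exp (1 : ℝ)]
    calc (16 : ℝ) = 2 ^ 4 := by norm_num
      _ ≤ Real.exp 1 ^ 4 := by gcongr
      _ = Real.exp (4 * 1) := by rw [← Real.exp_nat_mul]; norm_num
      _ ≤ Real.exp (4 * j) := by gcongr
  rw [quotientRadius, Real.exp_neg]
  linarith [inv_anti₀ (by norm_num) hexp]

namespace IsRegularPair

lemma scaleError_nonneg (h : IsRegularPair m n C) (j : ℕ) (ht : 0 < t) :
    0 ≤ scaleError n C j t := by
  have := h.scaleRadius_pos j ht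
  unfold scaleError
  positivity

lemma scaleRadius_rpow_le_scaleError (h : IsRegularPair m n C) (j : ℕ) (ht : 0 < t) :
    scaleRadius n C j t ^ (1 / (2 * j : ℝ)) ≤ scaleError n C j t :=
  le_mul_of_one_le_left (Real.rpow_nonneg (h.scaleRadius_pos j ht).le _)
    (le_add_of_nonneg_left (Nat.cast_nonneg _))

lemma exists_scaleError_le (h : IsRegularPair m n C) (hj : j ≠ 0) :
    ∃ A, 0 < A ∧ ∀ t, 0 < t → scaleError n C j t ≤
      A * hFun n (C * t) ^ (1 / ((j : ℝ) + 1) * (1 / (2 * j : ℝ))) := by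
  set θ : ℝ := 1 / ((j : ℝ) + 1) * (1 / (2 * j : ℝ)) with hθ
  have hθ0 : 0 < θ := by positivity
  obtain ⟨A, hA, hle⟩ := exists_add_one_mul_pow_le (x := (1 / 4 : ℝ) ^ θ) (by positivity)
    (Real.rpow_lt_one (by norm_num) (by norm_num) hθ0)
  refine ⟨A, hA, fun t ht => ?_⟩
  have hh := h.hFun_pos (t := C * t) (mul_pos h.pos ht)
  have hswap : ((1 / 4 : ℝ) ^ GammaBar n (C * t)) ^ θ = ((1 / 4 : ℝ) ^ θ) ^ GammaBar n (C * t) := by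
    rw [Real.rpow_pow_comm (by norm_num)]
  rw [scaleError, scaleRadius, ← Real.rpow_mul (by positivity), ← hθ,
    Real.mul_rpow (by positivity) hh.le, hswap, ← mul_assoc]
  exact mul_le_mul_of_nonneg_right (hle _) (by positivity)

end IsRegularPair

namespace HasTaylorBounds

lemma norm_scaleQuotient_sub_le (hF : HasTaylorBounds m B b (fun s => φ s ^ j) c)
    (hG : HasTaylorBounds m B b (fun s => φ s ^ (j + 1)) d) (h : IsRegularPair m n C)
    (hj : j ≠ 0) (hB : 1 ≤ B) (ht : 0 < t) (htb : t ≤ b) (hz : ‖z‖ ≤ quotientRadius j)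
    {P' Q' : ℂ} {r' : ℝ} (hr' : 0 ≤ r') (hrr' : r' ≤ scaleRadius n C j t)
    (hP : ‖(scaledTaylor c t (GammaBar n (C * t))).eval z - P'‖ ≤
      2 * B * scaleRadius n C j t ^ (j + 1))
    (hQ : ‖(scaledTaylor d t (GammaBar n (C * t))).eval z - Q'‖ ≤
      2 * B * scaleRadius n C j t ^ (j + 1))
    (hQ' : ‖Q'‖ ^ j ≤ quotientConst B j * max ‖P'‖ r' ^ (j + 1)) :
    ‖scaleQuotient n C j c d t z - regQuotient P' Q' r'‖ ≤
      10 * quotientConst B j ^ 2 * scaleError n C j t := by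
  have hr := h.scaleRadius_pos j ht
  have h2B := two_mul_le_quotientConst hB j
  have hz2 : ‖z‖ ≤ 1 / 2 := by linarith [quotientRadius_le hj]
  refine (norm_regQuotient_sub_le (ρ := scaleRadius n C j t ^ (1 / (2 * j : ℝ))) hj
    (one_le_quotientConst (by linarith) j) (by positivity)
    (Real.rpow_le_one hr.le (h.scaleRadius_le_one j ht) (by positivity)) ?_ hr' hrr'
    ((hF.norm_eval_scaledTaylor_le h ht hz2).trans h2B) (hP.trans (by gcongr))
    (hQ.trans (by gcongr))
    (hF.norm_eval_scaledTaylor_pow_le hG h hB (fun s => pow_right_comm _ _ _) ht htb hz) hQ').trans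
    (by gcongr; exact h.scaleRadius_rpow_le_scaleError j ht)
  rw [← Real.rpow_mul_natCast hr.le, Nat.cast_mul, Nat.cast_ofNat,
    one_div_mul_cancel (by positivity), Real.rpow_one]

lemma norm_scaleQuotient_le (hF : HasTaylorBounds m B b (fun s => φ s ^ j) c)
    (hG : HasTaylorBounds m B b (fun s => φ s ^ (j + 1)) d) (h : IsRegularPair m n C)
    (hj : j ≠ 0) (hB : 1 ≤ B) (ht : 0 < t) (htb : t ≤ b) (hz : ‖z‖ ≤ quotientRadius j) :
    ‖scaleQuotient n C j c d t z‖ ≤ quotientConst B j * (2 * B) := by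
  have hz2 : ‖z‖ ≤ 1 / 2 := by linarith [quotientRadius_le hj]
  refine norm_regQuotient_le hj (one_le_quotientConst (by linarith) j) (by linarith)
    (hF.norm_eval_scaledTaylor_pow_le hG h hB (fun s => pow_right_comm _ _ _) ht htb hz)
    (le_trans ?_ (le_self_pow₀ (by linarith) hj))
  exact max_le (hF.norm_eval_scaledTaylor_le h ht hz2)
    ((h.scaleRadius_le_one j ht).trans (by linarith))

lemma norm_scaleQuotient_ofReal_sub_le (hF : HasTaylorBounds m B b (fun s => φ s ^ j) c)
    (hG : HasTaylorBounds m B b (fun s => φ s ^ (j + 1)) d) (h : IsRegularPair m n C)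
    (hj : j ≠ 0) (hB : 1 ≤ B) (ht : 0 < t) (htb : t ≤ b) {s : ℝ} (hs : |s| ≤ quotientRadius j) :
    ‖scaleQuotient n C j c d t s - φ (t * s)‖ ≤
      10 * quotientConst B j ^ 2 * scaleError n C j t := by
  have hr := h.scaleRadius_pos j ht
  have hs4 : |s| ≤ 1 / 4 := by linarith [quotientRadius_le hj]
  have hdouble : B * scaleRadius n C j t ^ (j + 1) ≤ 2 * B * scaleRadius n C j t ^ (j + 1) := by
    gcongr
    linarith
  have key := norm_scaleQuotient_sub_le hF hG h hj hB ht htb (z := s) (P' := φ (t * s) ^ j)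
    (Q' := φ (t * s) ^ (j + 1)) (by simpa using hs) le_rfl hr.le
    ((norm_sub_rev _ _).le.trans
      ((hF.norm_sub_eval_scaledTaylor_le_scaleRadius h j ht htb hs4).trans hdouble))
    ((norm_sub_rev _ _).le.trans
      ((hG.norm_sub_eval_scaledTaylor_le_scaleRadius h j ht htb hs4).trans hdouble)) ?_
  · rwa [regQuotient_pow_pow_succ] at key
  · rw [max_eq_left (norm_nonneg _), norm_pow, norm_pow, pow_right_comm]
    exact le_mul_of_one_le_left (by positivity) (one_le_quotientConst (by linarith) j)

lemma norm_scaleQuotient_sub_half_le (hF : HasTaylorBounds m B b (fun s => φ s ^ j) c)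
    (hG : HasTaylorBounds m B b (fun s => φ s ^ (j + 1)) d) (h : IsRegularPair m n C)
    (hj : j ≠ 0) (hB : 1 ≤ B) (ht : 0 < t) (htb : t ≤ b)
    (hz : ‖z / t‖ ≤ quotientRadius j) (hz' : ‖z / (t / 2 : ℝ)‖ ≤ quotientRadius j) :
    ‖scaleQuotient n C j c d t (z / t) - scaleQuotient n C j c d (t / 2) (z / (t / 2 : ℝ))‖ ≤
      10 * quotientConst B j ^ 2 * scaleError n C j t := by
  have ht2 := half_pos ht
  have hz8 : ‖z‖ ≤ t / 8 := by
    rw [norm_div, Complex.norm_real, Real.norm_of_nonneg ht.le, div_le_iff₀ ht] at hz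
    nlinarith [quotientRadius_le hj]
  exact norm_scaleQuotient_sub_le hF hG h hj hB ht htb hz (h.scaleRadius_pos j ht2).le
    (h.scaleRadius_half_le j ht) (hF.norm_eval_scaledTaylor_sub_half_le h j ht hz8)
    (hG.norm_eval_scaledTaylor_sub_half_le h j ht hz8)
    (hF.norm_eval_scaledTaylor_pow_le hG h hB (fun s => pow_right_comm _ _ _) ht2
      (by linarith) hz')

lemma exists_holomorphic_sub_scaleQuotient_le (hj : j ≠ 0) (hB : 1 ≤ B) :
    ∃ A, 0 ≤ A ∧ ∀ {m n : ℕ → ℝ} {C b t : ℝ} {φ : ℝ → ℂ} {c d : ℕ → ℂ},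
      HasTaylorBounds m B b (fun s => φ s ^ j) c →
      HasTaylorBounds m B b (fun s => φ s ^ (j + 1)) d → IsRegularPair m n C → 0 < t → t ≤ b →
      ∃ R : ℂ → ℂ, DifferentiableOn ℂ R (ball 0 (quotientRadius j / 2)) ∧
        ∀ z ∈ ball (0 : ℂ) (quotientRadius j / 2),
          ‖R z - scaleQuotient n C j c d t z‖ ≤ A * scaleError n C j t := by
  obtain ⟨A, hA, happrox⟩ := exists_holomorphic_sub_regQuotient_le hj
    (one_le_quotientConst (by linarith) j) (by linarith : 1 ≤ 2 * B) (quotientRadius_pos j)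
    (quotientRadius_le hj)
  refine ⟨A, hA, fun {m n C b t φ c d} hF hG h ht htb => ?_⟩
  obtain ⟨R, hR, hRle⟩ := happrox (scaledTaylor c t (GammaBar n (C * t)))
    (scaledTaylor d t (GammaBar n (C * t))) (scaleRadius n C j t) (h.scaleRadius_pos j ht)
    (fun z hz => hF.norm_eval_scaledTaylor_le h ht (by linarith))
    (fun z hz => hF.norm_eval_scaledTaylor_pow_le hG h hB (fun s => pow_right_comm _ _ _) ht htb
      hz.le)
  refine ⟨R, hR, fun z hz => (hRle z hz).trans ?_⟩
  rw [mul_assoc, scaleError]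
  have hr := h.scaleRadius_pos j ht
  have hdeg : ((scaledTaylor c t (GammaBar n (C * t))).natDegree : ℝ) ≤ GammaBar n (C * t) :=
    Nat.cast_le.2 (natDegree_scaledTaylor_le _ _ _)
  gcongr
  linarith

end HasTaylorBounds

/-- `R t`, for `0 < t ≤ b`, are uniformly bounded holomorphic functions on the discs of radius
`ρ * t` which approximate `φ` on the real axis, as well as each other at consecutive dyadic scales,
with error `ω t`. -/
structure IsHolomorphicApprox (b ρ B : ℝ) (ω : ℝ → ℝ) (φ : ℝ → ℂ) (R : ℝ → ℂ → ℂ) : Prop where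
  differentiableOn : ∀ ⦃t⦄, 0 < t → t ≤ b → DifferentiableOn ℂ (R t) (ball 0 (ρ * t))
  norm_le : ∀ ⦃t⦄, 0 < t → t ≤ b → ∀ z ∈ ball (0 : ℂ) (ρ * t), ‖R t z‖ ≤ B
  norm_sub_le : ∀ ⦃t⦄, 0 < t → t ≤ b → ∀ s : ℝ, |s| < ρ * t → ‖φ s - R t s‖ ≤ ω t
  norm_sub_half_le : ∀ ⦃t⦄, 0 < t → t ≤ b → ∀ z ∈ ball (0 : ℂ) (ρ * (t / 2)),
    ‖R t z - R (t / 2) z‖ ≤ ω t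

lemma div_mem_ball_zero {ρ : ℝ} (ht : 0 < t) (hz : z ∈ ball (0 : ℂ) (ρ * t)) :
    z / t ∈ ball (0 : ℂ) ρ := by
  rwa [mem_ball_zero_iff, norm_div, Complex.norm_real, Real.norm_of_nonneg ht.le, div_lt_iff₀ ht,
    ← mem_ball_zero_iff]

lemma isHolomorphicApprox_of_norm_sub_le {ρ S E α β : ℝ} {ε ω : ℝ → ℝ} {R U : ℝ → ℂ → ℂ}
    (hα : 0 ≤ α) (hβ : 0 ≤ β) (hε : ∀ t, 0 < t → 0 ≤ ε t) (hεω : ∀ t, 0 < t → ε t ≤ ω t)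
    (hεω_half : ∀ t, 0 < t → ε (t / 2) ≤ ω t) (hωE : ∀ t, 0 < t → ω t ≤ E)
    (hR : ∀ t, 0 < t → t ≤ b → DifferentiableOn ℂ (R t) (ball 0 ρ))
    (hRU : ∀ t, 0 < t → t ≤ b → ∀ z ∈ ball (0 : ℂ) ρ, ‖R t z - U t z‖ ≤ α * ε t)
    (hU : ∀ t, 0 < t → t ≤ b → ∀ z ∈ ball (0 : ℂ) ρ, ‖U t z‖ ≤ S)
    (hUφ : ∀ t, 0 < t → t ≤ b → ∀ s : ℝ, |s| < ρ → ‖U t s - φ (t * s)‖ ≤ β * ε t)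
    (hU_half : ∀ t, 0 < t → t ≤ b → ∀ z : ℂ, z / t ∈ ball (0 : ℂ) ρ →
      z / (t / 2 : ℝ) ∈ ball (0 : ℂ) ρ →
        ‖U t (z / t) - U (t / 2) (z / (t / 2 : ℝ))‖ ≤ β * ε t) :
    IsHolomorphicApprox b ρ (S + α * E) (fun t => (2 * α + β) * ω t) φ
      (fun t z => R t (z / t)) := by
  have hαω : ∀ t, 0 < t → α * ε t ≤ α * ω t := fun t ht => by gcongr; exact hεω t ht
  have hβω : ∀ t, 0 < t → β * ε t ≤ β * ω t := fun t ht => by gcongr; exact hεω t ht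
  refine ⟨fun t ht htb => ?_, fun t ht htb z hz => ?_, fun t ht htb s hs => ?_,
    fun t ht htb z hz => ?_⟩
  · exact (hR t ht htb).comp (by fun_prop) fun z hz => div_mem_ball_zero ht hz
  · have hzt := div_mem_ball_zero ht hz
    have hαE : α * ω t ≤ α * E := by gcongr; exact hωE t ht
    linarith [hRU t ht htb _ hzt, hU t ht htb _ hzt, hαω t ht,
      norm_le_insert' (R t (z / t)) (U t (z / t))]
  · have hst : |s / t| < ρ := by rwa [abs_div, abs_of_pos ht, div_lt_iff₀ ht]
    have hclose := hUφ t ht htb (s / t) hst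
    have hRs := hRU t ht htb ((s / t : ℝ) : ℂ)
      (by rwa [mem_ball_zero_iff, Complex.norm_real])
    rw [mul_div_cancel₀ _ ht.ne', norm_sub_rev] at hclose
    rw [norm_sub_rev, Complex.ofReal_div] at hRs
    rw [Complex.ofReal_div] at hclose
    have hω0 : 0 ≤ α * ω t := mul_nonneg hα ((hε t ht).trans (hεω t ht))
    linarith [norm_sub_le_norm_sub_add_norm_sub (φ s) (U t (s / t)) (R t (s / t)), hαω t ht,
      hβω t ht]
  · have ht2 := half_pos ht
    have hz2 := div_mem_ball_zero ht2 hz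
    have hpos : 0 < ρ * (t / 2) := pos_of_mem_ball hz
    have hz1 := div_mem_ball_zero ht (ball_subset_ball (by linarith : ρ * (t / 2) ≤ ρ * t) hz)
    have h₁ := hRU t ht htb _ hz1
    have h₂ := hRU (t / 2) ht2 (by linarith) _ hz2
    have hα_half : α * ε (t / 2) ≤ α * ω t := by gcongr; exact hεω_half t ht
    rw [norm_sub_rev] at h₂
    have htri : ‖R t (z / t) - R (t / 2) (z / (t / 2 : ℝ))‖ ≤ _ :=
      (norm_sub_le_norm_sub_add_norm_sub _ (U t (z / t)) _).trans
        (add_le_add_right (norm_sub_le_norm_sub_add_norm_sub _ (U (t / 2) (z / (t / 2 : ℝ))) _) _)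
    linarith [hU_half t ht htb z hz1 hz2, hαω t ht, hβω t ht]

lemma exists_isHolomorphicApprox_of_scaleError_le (h : IsRegularPair m n C) (hj : j ≠ 0)
    (hB : 1 ≤ B) {ω : ℝ → ℝ} {E : ℝ} (hω : ∀ t, 0 < t → scaleError n C j t ≤ ω t)
    (hω_half : ∀ t, 0 < t → scaleError n C j (t / 2) ≤ ω t) (hE : ∀ t, 0 < t → ω t ≤ E) :
    ∃ S A : ℝ, 0 ≤ S ∧ 0 ≤ A ∧ ∀ {b : ℝ} {φ : ℝ → ℂ} {c d : ℕ → ℂ},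
      HasTaylorBounds m B b (fun s => φ s ^ j) c →
      HasTaylorBounds m B b (fun s => φ s ^ (j + 1)) d →
      ∃ R, IsHolomorphicApprox b (quotientRadius j / 2) S (fun t => A * ω t) φ R := by
  obtain ⟨α, hα, happrox⟩ := HasTaylorBounds.exists_holomorphic_sub_scaleQuotient_le hj hB
  have hK : 0 ≤ quotientConst B j := zero_le_one.trans (one_le_quotientConst (by linarith) j)
  have hE0 : 0 ≤ E :=
    (h.scaleError_nonneg j one_pos).trans ((hω 1 one_pos).trans (hE 1 one_pos))
  have hle : ∀ z ∈ ball (0 : ℂ) (quotientRadius j / 2), ‖z‖ ≤ quotientRadius j := fun z hz =>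
    (mem_ball_zero_iff.1 hz).le.trans (half_le_self (quotientRadius_pos j).le)
  refine ⟨quotientConst B j * (2 * B) + α * E, 2 * α + 10 * quotientConst B j ^ 2,
    by positivity, by positivity, fun {b φ c d} hF hG => ?_⟩
  choose! R hR hRle using fun t ht htb => happrox (t := t) hF hG h ht htb
  refine ⟨_, isHolomorphicApprox_of_norm_sub_le hα (by positivity)
    (fun t ht => h.scaleError_nonneg j ht) hω hω_half hE hR hRle
    (fun t ht htb z hz => hF.norm_scaleQuotient_le hG h hj hB ht htb (hle z hz))
    (fun t ht htb s hs => hF.norm_scaleQuotient_ofReal_sub_le hG h hj hB ht htb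
      (by simpa using hle s (by simpa using hs)))
    (fun t ht htb z hz hz' => hF.norm_scaleQuotient_sub_half_le hG h hj hB ht htb (hle _ hz)
      (hle _ hz'))⟩

lemma exists_isHolomorphicApprox {W : Set (ℕ → ℝ)} (hW : IsWeightMatrix W) (hreg : RRegular W)
    (hmg : RModerateGrowth W) {M : ℕ → ℝ} (hM : M ∈ W) (hj : j ≠ 0) (hB : 1 ≤ B) :
    ∃ L ∈ W, ∃ S A D ρ : ℝ, 0 ≤ S ∧ 0 ≤ A ∧ 0 < D ∧ 0 < ρ ∧
      ∀ {b : ℝ} {φ : ℝ → ℂ} {c d : ℕ → ℂ},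
        HasTaylorBounds (mseq M) B b (fun s => φ s ^ j) c →
        HasTaylorBounds (mseq M) B b (fun s => φ s ^ (j + 1)) d →
        ∃ R, IsHolomorphicApprox b ρ S (fun t => A * hFun (mseq L) (D * t)) φ R := by
  obtain ⟨N, hN, C, hC, hΓ⟩ := hreg.2.2 M hM
  have h : IsRegularPair (mseq M) (mseq N) C := ⟨(hW.2.1 M hM).mseq_pos, (hW.2.1 N hN).mseq_pos,
    (hW.2.1 M hM).mseq_zero, (hW.2.1 N hN).mseq_zero, hreg.1 N hN, hC, hΓ⟩
  obtain ⟨A₁, hA₁, herror⟩ := h.exists_scaleError_le hj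
  obtain ⟨L, hL, C₂, hC₂, hrpow⟩ := exists_hFun_rpow_le hW hreg.1 hmg hN
    (θ := 1 / ((j : ℝ) + 1) * (1 / (2 * j : ℝ))) (by positivity)
  have hLpos := (hW.2.1 L hL).mseq_pos
  have hD : 0 < C₂ * C := mul_pos hC₂ h.pos
  have hω : ∀ t, 0 < t → scaleError (mseq N) C j t ≤ A₁ * hFun (mseq L) (C₂ * C * t) :=
    fun t ht => (herror t ht).trans (by
      rw [mul_assoc C₂]
      exact mul_le_mul_of_nonneg_left (hrpow _ (mul_pos h.pos ht)) hA₁.le)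
  have hω_half : ∀ t, 0 < t →
      scaleError (mseq N) C j (t / 2) ≤ A₁ * hFun (mseq L) (C₂ * C * t) := fun t ht =>
    (hω (t / 2) (half_pos ht)).trans (mul_le_mul_of_nonneg_left (hFun_le_hFun hLpos
      (mul_pos hD (half_pos ht)) (mul_le_mul_of_nonneg_left (half_le_self ht.le) hD.le)) hA₁.le)
  have hle_one : ∀ t, 0 < t → A₁ * hFun (mseq L) (C₂ * C * t) ≤ A₁ := fun t ht =>
    mul_le_of_le_one_right hA₁.le ((hFun_le_mul_pow hLpos (mul_pos hD ht) 0).trans_eq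
      (by rw [pow_zero, mul_one, (hW.2.1 L hL).mseq_zero]))
  obtain ⟨S, A, hS, hA, happrox⟩ :=
    exists_isHolomorphicApprox_of_scaleError_le h hj hB hω hω_half hle_one
  have hρ := quotientRadius_pos j
  refine ⟨L, hL, S, A * A₁, C₂ * C, quotientRadius j / 2, hS, by positivity, hD, by positivity,
    fun {b φ c d} hF hG => ?_⟩
  simpa only [← mul_assoc] using happrox hF hG

end Scales

section ForwardDifferences

open fwdDiff

lemma fwdDiff_iter_comp_addMonoidHom {M N G : Type*} [AddCommMonoid M] [AddCommMonoid N]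
    [AddCommGroup G] (f : N → G) (L : M →+ N) (x : N) (h t : M) (n : ℕ) :
    Δ_[h] ^[n] (fun t => f (x + L t)) t = Δ_[L h] ^[n] f (x + L t) := by
  simp only [fwdDiff_iter_eq_sum_shift, map_add, map_nsmul, add_assoc]

lemma fwdDiff_iter_sub {M G : Type*} [AddCommMonoid M] [AddCommGroup G] (h : M) (f g : M → G)
    (n : ℕ) : Δ_[h] ^[n] (f - g) = Δ_[h] ^[n] f - Δ_[h] ^[n] g := by
  simpa only [fwdDiff_aux.coe_fwdDiffₗ_pow] using map_sub (fwdDiff_aux.fwdDiffₗ M G h ^ n) f g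

lemma norm_fwdDiff_iter_le {M G : Type*} [AddCommMonoid M] [SeminormedAddCommGroup G] {f : M → G}
    {h y : M} {n : ℕ} {B : ℝ} (hf : ∀ k ≤ n, ‖f (y + k • h)‖ ≤ B) :
    ‖Δ_[h] ^[n] f y‖ ≤ 2 ^ n * B := by
  rw [fwdDiff_iter_eq_sum_shift]
  calc _ ≤ ∑ k ∈ Finset.range (n + 1), (n.choose k : ℝ) * B := norm_sum_le_of_le _ fun k hk => ?_
    _ = 2 ^ n * B := by rw [← Finset.sum_mul]; exact_mod_cast congrArg (· * B)
                          (congrArg Nat.cast (Nat.sum_range_choose n))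
  refine (norm_zsmul_le _ _).trans (mul_le_mul ?_ (hf k ?_) (norm_nonneg _) (by positivity))
  · simp [norm_mul]
  · exact Nat.lt_succ_iff.1 (Finset.mem_range.1 hk)

lemma fwdDiff_iter_ofReal_pow (s : ℝ) (n i : ℕ) :
    Δ_[s] ^[n] (fun x : ℝ => (x : ℂ) ^ i) 0 = (s : ℂ) ^ i * Δ_[1] ^[n] (fun z : ℂ => z ^ i) 0 := by
  have hcast := fwdDiff_iter_comp_addMonoidHom (fun z : ℂ => z ^ i) (Complex.ofRealHom : ℝ →+ ℂ)
    0 s 0 n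
  have hscale := fwdDiff_iter_comp_addMonoidHom (fun z : ℂ => z ^ i) (AddMonoidHom.mulLeft (s : ℂ))
    0 1 0 n
  simp only [zero_add, map_zero, AddMonoidHom.coe_mulLeft, mul_one, mul_pow] at hcast hscale
  exact hcast.trans (hscale.symm.trans
    (congrFun (fwdDiff_iter_const_smul 1 ((s : ℂ) ^ i) (fun z : ℂ => z ^ i) n) 0))

lemma fwdDiff_iter_sum_range_mul_ofReal_pow (c : ℕ → ℂ) (s : ℝ) (n : ℕ) :
    Δ_[s] ^[n] (fun x : ℝ => ∑ i ∈ Finset.range n, c i * (x : ℂ) ^ i) 0 = 0 := by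
  have hsum : (fun x : ℝ => ∑ i ∈ Finset.range n, c i * (x : ℂ) ^ i) =
      ∑ i ∈ Finset.range n, c i • fun x : ℝ => (x : ℂ) ^ i := by
    ext x; simp
  rw [hsum, fwdDiff_iter_finsetSum, Finset.sum_apply]
  refine Finset.sum_eq_zero fun i hi => ?_
  rw [fwdDiff_iter_const_smul, Pi.smul_apply, fwdDiff_iter_ofReal_pow,
    fwdDiff_iter_pow_eq_zero_of_lt (Finset.mem_range.1 hi)]
  simp

lemma fwdDiff_iter_sum_range_succ_mul_ofReal_pow (c : ℕ → ℂ) (s : ℝ) (n : ℕ) :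
    Δ_[s] ^[n] (fun x : ℝ => ∑ i ∈ Finset.range (n + 1), c i * (x : ℂ) ^ i) 0 =
      n.factorial * c n * (s : ℂ) ^ n := by
  have hsum : (fun x : ℝ => ∑ i ∈ Finset.range (n + 1), c i * (x : ℂ) ^ i) =
      (fun x : ℝ => ∑ i ∈ Finset.range n, c i * (x : ℂ) ^ i) +
        c n • fun x : ℝ => (x : ℂ) ^ n := by
    ext x; simp [Finset.sum_range_succ]
  rw [hsum, fwdDiff_iter_add, Pi.add_apply, fwdDiff_iter_sum_range_mul_ofReal_pow,
    fwdDiff_iter_const_smul, Pi.smul_apply, fwdDiff_iter_ofReal_pow, fwdDiff_iter_eq_factorial]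
  simp only [zero_add, Pi.natCast_apply, smul_eq_mul]
  ring

lemma norm_fwdDiff_iter_sub_le {φ : ℝ → ℂ} {c : ℕ → ℂ} {s ε : ℝ} {n : ℕ}
    (h : ∀ k ≤ n, ‖φ (k * s) - ∑ i ∈ Finset.range (n + 1), c i * ((k * s : ℝ) : ℂ) ^ i‖ ≤ ε) :
    ‖Δ_[s] ^[n] φ 0 - n.factorial * c n * (s : ℂ) ^ n‖ ≤ 2 ^ n * ε := by
  rw [← fwdDiff_iter_sum_range_succ_mul_ofReal_pow, ← Pi.sub_apply, ← fwdDiff_iter_sub]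
  exact norm_fwdDiff_iter_le fun k hk => by simpa using h k hk

lemma norm_fwdDiff_iter_le_of_norm_sub_le {φ : ℝ → ℂ} {c : ℕ → ℂ} {s ε : ℝ} {n : ℕ}
    (h : ∀ k ≤ n, ‖φ (k * s) - ∑ i ∈ Finset.range n, c i * ((k * s : ℝ) : ℂ) ^ i‖ ≤ ε) :
    ‖Δ_[s] ^[n] φ 0‖ ≤ 2 ^ n * ε := by
  rw [← sub_zero (Δ_[s] ^[n] φ 0), ← fwdDiff_iter_sum_range_mul_ofReal_pow c s n, ← Pi.sub_apply,
    ← fwdDiff_iter_sub]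
  exact norm_fwdDiff_iter_le fun k hk => by simpa using h k hk

open Metric

lemma exists_norm_sub_sum_range_mul_pow_le {g : ℂ → ℂ} {r τ : ℝ}
    (hg : DifferentiableOn ℂ g (ball 0 r)) (hb : ∀ z ∈ ball (0 : ℂ) r, ‖g z‖ ≤ τ) (n : ℕ) :
    ∃ c : ℕ → ℂ, ∀ z ∈ ball (0 : ℂ) r,
      ‖g z - ∑ i ∈ Finset.range n, c i * z ^ i‖ ≤ τ * (2 * ‖z‖ / r) ^ n := by
  rcases le_or_gt r 0 with hr | hr
  · exact ⟨0, by simp [ball_eq_empty.2 hr]⟩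
  induction n generalizing g τ with
  | zero => exact ⟨0, fun z hz => by simpa using hb z hz⟩
  | succ n ih =>
    have hg0 : ‖g 0‖ ≤ τ := hb 0 (mem_ball_self hr)
    have hslope : ∀ z ∈ ball (0 : ℂ) r, ‖dslope g 0 z‖ ≤ 2 * τ / r := fun z hz =>
      Complex.norm_dslope_le_div_of_mapsTo_ball hg (fun w hw => by
        rw [mem_closedBall, dist_eq_norm]
        linarith [norm_sub_le (g w) (g 0), hb w hw]) hz
    obtain ⟨c, hc⟩ := ih
      ((Complex.differentiableOn_dslope (isOpen_ball.mem_nhds (mem_ball_self hr))).2 hg) hslope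
    refine ⟨fun i => i.casesOn (g 0) c, fun z hz => ?_⟩
    have hfactor : g z - ∑ i ∈ Finset.range (n + 1), Nat.casesOn i (g 0) c * z ^ i =
        z * (dslope g 0 z - ∑ i ∈ Finset.range n, c i * z ^ i) := by
      have hdslope : z * dslope g 0 z = g z - g 0 := by simpa using sub_smul_dslope g 0 z
      rw [Finset.sum_range_succ', mul_sub, hdslope, Finset.mul_sum, sub_right_comm, sub_sub]
      simp [pow_succ', mul_left_comm]
    rw [hfactor, norm_mul]
    calc ‖z‖ * ‖dslope g 0 z - ∑ i ∈ Finset.range n, c i * z ^ i‖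
        ≤ ‖z‖ * (2 * τ / r * (2 * ‖z‖ / r) ^ n) := by gcongr; exact hc z hz
      _ = τ * (2 * ‖z‖ / r) ^ (n + 1) := by ring

lemma norm_fwdDiff_iter_ofReal_le {g : ℂ → ℂ} {r τ s : ℝ} {n : ℕ}
    (hg : DifferentiableOn ℂ g (ball 0 r)) (hb : ∀ z ∈ ball (0 : ℂ) r, ‖g z‖ ≤ τ) (hs : 0 ≤ s)
    (hsr : n * s < r) : ‖Δ_[s] ^[n] (fun x : ℝ => g x) 0‖ ≤ τ * (4 * n * s / r) ^ n := by
  obtain ⟨c, hc⟩ := exists_norm_sub_sum_range_mul_pow_le hg hb n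
  have hr : 0 < r := (by positivity : 0 ≤ n * s).trans_lt hsr
  have hτ : 0 ≤ τ := (norm_nonneg _).trans (hb 0 (mem_ball_self hr))
  calc ‖Δ_[s] ^[n] (fun x : ℝ => g x) 0‖ ≤ 2 ^ n * (τ * (2 * (n * s) / r) ^ n) :=
        norm_fwdDiff_iter_le_of_norm_sub_le (c := c) fun k hk => ?_
    _ = τ * (4 * n * s / r) ^ n := by
        rw [mul_left_comm, ← mul_pow, mul_div_assoc']
        ring_nf
  have hks : ‖((k * s : ℝ) : ℂ)‖ ≤ n * s := by
    rw [Complex.norm_real, Real.norm_of_nonneg (by positivity)]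
    gcongr
  refine (hc _ (mem_ball_zero_iff.2 (hks.trans_lt hsr))).trans ?_
  gcongr

end ForwardDifferences

section DifferencesOfApproximations

open fwdDiff Metric

namespace IsHolomorphicApprox

variable {b ρ S Q s : ℝ} {ω : ℝ → ℝ} {φ : ℝ → ℂ} {R : ℝ → ℂ → ℂ} {n i : ℕ}

lemma norm_fwdDiff_iter_approx_le (h : IsHolomorphicApprox b ρ S ω φ R) (hb : 0 < b) (hρ : 0 < ρ)
    (hs : 0 ≤ s) (hi : n * s < ρ * (b / 2 ^ i)) :
    ‖Δ_[s] ^[n] (fun x : ℝ => R (b / 2 ^ i) x) 0‖ ≤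
      ∑ l ∈ Finset.range i, ω (b / 2 ^ l) * (4 * n * s / (ρ * (b / 2 ^ (l + 1)))) ^ n +
        S * (4 * n * s / (ρ * b)) ^ n := by
  induction i with
  | zero =>
    rw [pow_zero, div_one] at hi
    simpa using norm_fwdDiff_iter_ofReal_le (h.differentiableOn hb le_rfl) (h.norm_le hb le_rfl)
      hs hi
  | succ i ih =>
    have hT : 0 < b / 2 ^ i := by positivity
    have hTb : b / 2 ^ i ≤ b := div_le_self hb.le (one_le_pow₀ one_le_two)
    have hhalf : b / 2 ^ (i + 1) = b / 2 ^ i / 2 := by rw [pow_succ, div_div]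
    have hle : b / 2 ^ i / 2 ≤ b / 2 ^ i := half_le_self hT.le
    have hsub : (fun x : ℝ => R (b / 2 ^ (i + 1)) x) = (fun x : ℝ => R (b / 2 ^ i) x) -
        fun x : ℝ => (R (b / 2 ^ i) - R (b / 2 ^ i / 2)) x := by
      ext x; simp [hhalf]
    have hdiff : DifferentiableOn ℂ (R (b / 2 ^ i) - R (b / 2 ^ i / 2))
        (ball 0 (ρ * (b / 2 ^ i / 2))) :=
      ((h.differentiableOn hT hTb).mono (ball_subset_ball (by gcongr))).sub
        (h.differentiableOn (half_pos hT) (hle.trans hTb))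
    rw [hsub, fwdDiff_iter_sub, Pi.sub_apply, Finset.sum_range_succ, add_right_comm, hhalf]
    rw [hhalf] at hi
    exact (_root_.norm_sub_le _ _).trans (add_le_add (ih (hi.trans_le (by gcongr)))
      (norm_fwdDiff_iter_ofReal_le hdiff (h.norm_sub_half_le hT hTb) hs hi))

lemma norm_fwdDiff_iter_le_add_sum (h : IsHolomorphicApprox b ρ S ω φ R) (hb : 0 < b) (hρ : 0 < ρ)
    (hs : 0 ≤ s) (hi : n * s < ρ * (b / 2 ^ i)) :
    ‖Δ_[s] ^[n] φ 0‖ ≤ 2 ^ n * ω (b / 2 ^ i) +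
      (∑ l ∈ Finset.range i, ω (b / 2 ^ l) * (4 * n * s / (ρ * (b / 2 ^ (l + 1)))) ^ n +
        S * (4 * n * s / (ρ * b)) ^ n) := by
  have hsub : φ = (φ - fun x : ℝ => R (b / 2 ^ i) x) + fun x : ℝ => R (b / 2 ^ i) x := by simp
  rw [hsub, fwdDiff_iter_add, Pi.add_apply]
  refine (norm_add_le _ _).trans (add_le_add (norm_fwdDiff_iter_le fun k hk => ?_)
    (h.norm_fwdDiff_iter_approx_le hb hρ hs hi))
  rw [zero_add, nsmul_eq_mul]
  refine IsHolomorphicApprox.norm_sub_le h (by positivity)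
    (div_le_self hb.le (one_le_pow₀ one_le_two)) _ ?_
  rw [abs_of_nonneg (by positivity)]
  exact lt_of_le_of_lt (by gcongr) hi

lemma sum_range_mul_pow_le (hb : 0 < b) (hρ : 0 < ρ) (hs : 0 ≤ s) (hQ : 0 ≤ Q)
    (hω : ∀ t, 0 < t → ω t ≤ Q * t ^ (n + 1)) (i : ℕ) :
    ∑ l ∈ Finset.range i, ω (b / 2 ^ l) * (4 * n * s / (ρ * (b / 2 ^ (l + 1)))) ^ n ≤
      2 * b * Q * (8 / ρ) ^ n * n ^ n * s ^ n := by
  have hgeom : ∑ l ∈ Finset.range i, b / 2 ^ l ≤ 2 * b := by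
    simp_rw [div_eq_mul_one_div b, ← one_div_pow, ← Finset.mul_sum, mul_comm 2 b]
    gcongr
    exact sum_geometric_two_le i
  calc _ ≤ ∑ l ∈ Finset.range i, Q * (8 / ρ) ^ n * n ^ n * s ^ n * (b / 2 ^ l) :=
        Finset.sum_le_sum fun l _ => ?_
    _ ≤ Q * (8 / ρ) ^ n * n ^ n * s ^ n * (2 * b) := by rw [← Finset.mul_sum]; gcongr
    _ = _ := by ring
  have hT : 0 < b / 2 ^ l := by positivity
  have hscale : 4 * n * s / (ρ * (b / 2 ^ (l + 1))) = 8 / ρ * n * s / (b / 2 ^ l) := by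
    field_simp; ring
  calc ω (b / 2 ^ l) * (4 * n * s / (ρ * (b / 2 ^ (l + 1)))) ^ n
      ≤ Q * (b / 2 ^ l) ^ (n + 1) * (8 / ρ * n * s / (b / 2 ^ l)) ^ n := by
        rw [hscale]; gcongr; exact hω _ hT
    _ = Q * (8 / ρ) ^ n * n ^ n * s ^ n * (b / 2 ^ l) := by
        rw [div_pow _ (b / 2 ^ l), mul_pow _ s, mul_pow _ (n : ℝ), pow_succ]; field_simp

/-- The scale `b / 2 ^ i` used for the differences of step `s` is the smallest one at least
`2 (n + 1) s / ρ`. -/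
lemma norm_fwdDiff_iter_le_pow_mul (h : IsHolomorphicApprox b ρ S ω φ R) (hb : 0 < b)
    (hρ : 0 < ρ) (hQ : 0 ≤ Q) (hω : ∀ t, 0 < t → ω t ≤ Q * t ^ (n + 1)) (hs : 0 < s)
    (hsb : s * (2 * (n + 1)) ≤ ρ * b) :
    ‖Δ_[s] ^[n] φ 0‖ ≤ s ^ n * ((2 * b * Q * (8 / ρ) ^ n + S * (4 / (ρ * b)) ^ n) * n ^ n +
      2 ^ n * Q * (4 * (n + 1) / ρ) ^ (n + 1) * s) := by
  obtain ⟨i, hi, hi'⟩ := exists_nat_pow_near (x := ρ * b / (s * (2 * (n + 1)))) (y := (2 : ℝ))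
    ((one_le_div (by positivity)).2 hsb) one_lt_two
  rw [le_div_iff₀' (by positivity), ← le_div_iff₀ (by positivity)] at hi
  rw [div_lt_iff₀' (by positivity), pow_succ] at hi'
  have hT : b / 2 ^ i ≤ 4 * (n + 1) / ρ * s := by
    rw [div_le_iff₀ (by positivity)]
    field_simp
    linarith
  have hns : n * s < ρ * (b / 2 ^ i) := by
    rw [← mul_div_assoc]
    nlinarith [(Nat.cast_nonneg n : (0 : ℝ) ≤ n)]
  refine (h.norm_fwdDiff_iter_le_add_sum hb hρ hs.le hns).trans ?_
  calc _ ≤ 2 ^ n * (Q * (4 * (n + 1) / ρ * s) ^ (n + 1)) +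
        (2 * b * Q * (8 / ρ) ^ n * n ^ n * s ^ n + S * (4 * n * s / (ρ * b)) ^ n) := by
        refine add_le_add ?_ (add_le_add_left (sum_range_mul_pow_le hb hρ hs.le hQ hω i) _)
        have := hω (b / 2 ^ i) (by positivity)
        gcongr
        exact this.trans (by gcongr)
    _ = _ := by
        rw [show 4 * n * s / (ρ * b) = 4 / (ρ * b) * n * s by ring, mul_pow _ s]
        ring

end IsHolomorphicApprox

lemma pow_self_le_exp_pow_mul_factorial (n : ℕ) :
    (n : ℝ) ^ n ≤ Real.exp 1 ^ n * n.factorial := by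
  rw [Real.exp_one_pow, ← div_le_iff₀ (by positivity)]
  exact Real.pow_div_factorial_le_exp n (Nat.cast_nonneg n) n

lemma exists_mseq_succ_mul_pow_self_le {W : Set (ℕ → ℝ)} {L : ℕ → ℝ} (hW : IsWeightMatrix W)
    (hreg : RRegular W) (hL : L ∈ W) : ∃ N ∈ W, ∃ C : ℝ, 0 < C ∧ ∀ n : ℕ,
      mseq L (n + 1) * n ^ n ≤ C ^ (n + 1) * N n ∧ (n : ℝ) ^ n ≤ C ^ (n + 1) * N n := by
  obtain ⟨N, hN, C, hC, hLN⟩ := hreg.2.1 L hL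
  set η := hFun (mseq N) 1
  have hmN := (hW.2.1 N hN).mseq_pos
  have hη : 0 < η := hFun_pos hmN (hreg.1 N hN) one_pos
  refine ⟨N, hN, Real.exp 1 * (C + 1 / η), by positivity, fun n => ⟨?_, ?_⟩⟩
  · have hLn := (hW.2.1 L hL).pos (n + 1)
    calc mseq L (n + 1) * n ^ n
        ≤ L (n + 1) / (n + 1).factorial * (Real.exp 1 ^ n * n.factorial) := by
          unfold mseq; gcongr; exact pow_self_le_exp_pow_mul_factorial n
      _ ≤ L (n + 1) / n.factorial * (Real.exp 1 ^ (n + 1) * n.factorial) := by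
          gcongr
          · exact n.le_succ
          · exact Real.one_le_exp zero_le_one
          · exact n.le_succ
      _ = Real.exp 1 ^ (n + 1) * L (n + 1) := by field_simp
      _ ≤ Real.exp 1 ^ (n + 1) * (C ^ (n + 1) * N n) := by gcongr; exact hLN n
      _ ≤ (Real.exp 1 * (C + 1 / η)) ^ (n + 1) * N n := by
          rw [← mul_assoc, ← mul_pow]
          have := (hW.2.1 N hN).pos n
          gcongr
          exact le_add_of_nonneg_right (by positivity)
  · have hfact : (n.factorial : ℝ) ≤ N n * (1 / η) := by
      have := hFun_le_mul_pow hmN one_pos n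
      rw [one_pow, mul_one, mseq, le_div_iff₀ (by positivity)] at this
      rw [mul_one_div, le_div_iff₀' hη]
      exact this
    have hNn := (hW.2.1 N hN).pos n
    have hη' : 0 < 1 / η := by positivity
    calc (n : ℝ) ^ n ≤ Real.exp 1 ^ n * (N n * (1 / η)) :=
          (pow_self_le_exp_pow_mul_factorial n).trans (by gcongr)
      _ = (Real.exp 1 * 1) ^ n * (1 * (1 / η)) * N n := by ring
      _ ≤ (Real.exp 1 * (C + 1 / η)) ^ n * (Real.exp 1 * (C + 1 / η)) * N n := by
          gcongr
          · linarith
          · exact Real.one_le_exp zero_le_one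
          · linarith
      _ = _ := by rw [pow_succ]

lemma exists_norm_fwdDiff_iter_le {W : Set (ℕ → ℝ)} {M : ℕ → ℝ} {B b : ℝ} {j : ℕ}
    (hW : IsWeightMatrix W) (hreg : RRegular W) (hmg : RModerateGrowth W) (hM : M ∈ W)
    (hj : j ≠ 0) (hB : 1 ≤ B) (hb : 0 < b) :
    ∃ N ∈ W, ∃ A σ : ℝ, 0 < σ ∧ ∀ n : ℕ, ∃ E s₀ : ℝ, 0 < s₀ ∧
      ∀ {φ : ℝ → ℂ} {c d : ℕ → ℂ}, HasTaylorBounds (mseq M) B b (fun s => φ s ^ j) c →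
        HasTaylorBounds (mseq M) B b (fun s => φ s ^ (j + 1)) d → ∀ s, 0 < s → s ≤ s₀ →
          ‖Δ_[s] ^[n] φ 0‖ ≤ s ^ n * (A * σ ^ n * N n + E * s) := by
  obtain ⟨L, hL, S, A, D, ρ, hS, hA, hD, hρ, happrox⟩ :=
    exists_isHolomorphicApprox hW hreg hmg hM hj hB
  obtain ⟨N, hN, C, hC, hLN⟩ := exists_mseq_succ_mul_pow_self_le hW hreg hL
  set α := 8 * D / ρ + 4 / (ρ * b)
  have hLpos := (hW.2.1 L hL).mseq_pos
  refine ⟨N, hN, (2 * b * A * D + S) * C, α * C, by positivity, fun n => ?_⟩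
  set Q := A * (mseq L (n + 1) * D ^ (n + 1)) with hQdef
  have hQ : 0 ≤ Q := by have := hLpos (n + 1); positivity
  have hω : ∀ t, 0 < t → A * hFun (mseq L) (D * t) ≤ Q * t ^ (n + 1) := fun t ht => by
    have := hFun_le_mul_pow hLpos (mul_pos hD ht) (n + 1)
    rw [mul_pow, ← mul_assoc] at this
    rw [hQdef, mul_assoc]
    gcongr
  have hcoeff : (2 * b * Q * (8 / ρ) ^ n + S * (4 / (ρ * b)) ^ n) * n ^ n ≤
      (2 * b * A * D + S) * C * (α * C) ^ n * N n := by
    have hα : 8 * D / ρ ≤ α := le_add_of_nonneg_right (by positivity)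
    have hα' : 4 / (ρ * b) ≤ α := le_add_of_nonneg_left (by positivity)
    calc _ = 2 * b * A * D * (8 * D / ρ) ^ n * (mseq L (n + 1) * n ^ n) +
          S * (4 / (ρ * b)) ^ n * n ^ n := by ring
      _ ≤ 2 * b * A * D * α ^ n * (C ^ (n + 1) * N n) + S * α ^ n * (C ^ (n + 1) * N n) := by
          refine add_le_add (mul_le_mul ?_ (hLN n).1 ?_ ?_) (mul_le_mul ?_ (hLN n).2 ?_ ?_)
          any_goals gcongr
          all_goals have := hLpos (n + 1); positivity
      _ = _ := by rw [mul_pow α C]; ring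
  refine ⟨2 ^ n * Q * (4 * (n + 1) / ρ) ^ (n + 1), ρ * b / (2 * (n + 1)),
    by positivity, fun {φ c d} hF hG s hs hs₀ => ?_⟩
  obtain ⟨R, hR⟩ := happrox hF hG
  refine (hR.norm_fwdDiff_iter_le_pow_mul hb hρ hQ hω hs
    ((le_div_iff₀ (by positivity)).1 hs₀)).trans ?_
  gcongr

end DifferencesOfApproximations

section TaylorAlongLines

open scoped ContDiff

variable {E F : Type*} [NormedAddCommGroup E] [NormedSpace ℝ E] [NormedAddCommGroup F]
  [NormedSpace ℝ F]

lemma norm_sub_sum_range_pow_smul_le {φ : ℕ → ℝ → F} {p : ℕ} {b B : ℝ}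
    (hφ : ∀ k < p, ∀ s ∈ Icc 0 b, HasDerivAt (φ k) (φ (k + 1) s) s)
    (hB : ∀ s ∈ Icc 0 b, ‖φ p s‖ ≤ B) {s : ℝ} (hs : s ∈ Icc 0 b) :
    ‖φ 0 s - ∑ k ∈ Finset.range p, (s ^ k / k.factorial) • φ k 0‖ ≤ B * (s ^ p / p.factorial) := by
  induction p generalizing φ s with
  | zero => simpa using hB s hs
  | succ p ih =>
    have hpow : ∀ (k : ℕ) (t : ℝ), HasDerivAt (fun t : ℝ => t ^ (k + 1) / (k + 1).factorial)
        (t ^ k / k.factorial) t := fun k t => by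
      refine ((hasDerivAt_pow (k + 1) t).div_const _).congr_deriv ?_
      rw [Nat.factorial_succ]
      push_cast
      field_simp
    have hderiv : ∀ t ∈ Icc 0 b, HasDerivAt
        (fun t => φ 0 t - ∑ k ∈ Finset.range (p + 1), (t ^ k / k.factorial) • φ k 0)
        (φ 1 t - ∑ k ∈ Finset.range p, (t ^ k / k.factorial) • φ (k + 1) 0) t := fun t ht => by
      simp_rw [Finset.sum_range_succ', pow_zero]
      refine (hφ 0 p.succ_pos t ht).sub (.add_const _ ?_)
      exact HasDerivAt.fun_sum fun k _ => (hpow k t).smul_const (φ (k + 1) 0)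
    refine image_norm_le_of_norm_deriv_right_le_deriv_boundary
      (fun t ht => (hderiv t ht).continuousAt.continuousWithinAt)
      (fun t ht => (hderiv t (Ico_subset_Icc_self ht)).hasDerivWithinAt)
      (by simp [Finset.sum_range_succ']) (fun t => (hpow p t).const_mul B)
      (fun t ht => ?_) hs
    exact ih (φ := fun k => φ (k + 1)) (fun k hk => hφ (k + 1) (by lia)) hB
      (Ico_subset_Icc_self ht)

lemma hasDerivAt_iteratedFDeriv_add_smul {h : E → F} {x v : E} {k : ℕ} {s : ℝ}
    (hh : ContDiffAt ℝ (k + 1) h (x + s • v)) :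
    HasDerivAt (fun t : ℝ => iteratedFDeriv ℝ k h (x + t • v) fun _ => v)
      (iteratedFDeriv ℝ (k + 1) h (x + s • v) fun _ => v) s := by
  have hline : HasDerivAt (fun t : ℝ => x + t • v) v s := by
    simpa using ((hasDerivAt_id s).smul_const v).const_add x
  have hdiff : DifferentiableAt ℝ (iteratedFDeriv ℝ k h) (x + s • v) :=
    hh.differentiableAt_iteratedFDeriv (by exact_mod_cast k.lt_succ_self)
  exact (hdiff.hasFDerivAt.continuousMultilinear_apply_const _).comp_hasDerivAt s hline

lemma norm_sub_sum_range_iteratedFDeriv_le {h : E → F} {x v : E} {p : ℕ} {B : ℝ}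
    (hh : ∀ t ∈ Icc (0 : ℝ) 1, ContDiffAt ℝ p h (x + t • v))
    (hB : ∀ t ∈ Icc (0 : ℝ) 1, ‖iteratedFDeriv ℝ p h (x + t • v) fun _ => v‖ ≤ B) :
    ‖h (x + v) - ∑ k ∈ Finset.range p, (1 / k.factorial : ℝ) • iteratedFDeriv ℝ k h x fun _ => v‖ ≤
      B / p.factorial := by
  have := norm_sub_sum_range_pow_smul_le
    (φ := fun k t => iteratedFDeriv ℝ k h (x + t • v) fun _ => v)
    (fun k hk t ht => hasDerivAt_iteratedFDeriv_add_smul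
      ((hh t ht).of_le (by exact_mod_cast hk))) hB (right_mem_Icc.2 zero_le_one)
  simpa [div_eq_mul_inv] using this

lemma norm_sub_sum_range_iteratedFDeriv_mul_pow_le {h : E → ℂ} {x v : E} {p : ℕ} {s B : ℝ}
    (hh : ∀ t, |t| ≤ |s| → ContDiffAt ℝ p h (x + t • v))
    (hB : ∀ t, |t| ≤ |s| → ‖iteratedFDeriv ℝ p h (x + t • v) fun _ => v‖ ≤ B) :
    ‖h (x + s • v) - ∑ k ∈ Finset.range p,
      (iteratedFDeriv ℝ k h x fun _ => v) / k.factorial * (s : ℂ) ^ k‖ ≤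
        B / p.factorial * |s| ^ p := by
  have hts : ∀ t ∈ Icc (0 : ℝ) 1, |t * s| ≤ |s| := fun t ht => by
    rw [abs_mul, abs_of_nonneg ht.1]
    exact mul_le_of_le_one_left (abs_nonneg s) ht.2
  have hsmul : ∀ k y, (iteratedFDeriv ℝ k h y fun _ => s • v) =
      s ^ k • iteratedFDeriv ℝ k h y fun _ => v := fun k y => by
    rw [ContinuousMultilinearMap.map_smul_univ, Fin.prod_const]
  have := norm_sub_sum_range_iteratedFDeriv_le (h := h) (x := x) (v := s • v) (p := p)
    (B := |s| ^ p * B) (fun t ht => by rw [smul_smul]; exact hh _ (hts t ht)) fun t ht => by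
      rw [hsmul, norm_smul, norm_pow, Real.norm_eq_abs, smul_smul]
      gcongr
      exact hB _ (hts t ht)
  convert this using 1
  · congr! 3 with k
    rw [hsmul, Complex.real_smul, Complex.real_smul]
    push_cast
    ring
  · ring

lemma hasTaylorBounds_add_smul {h : E → ℂ} {V : Set E} {M : ℕ → ℝ} {C σ b : ℝ} {x v : E}
    (hh : ∀ y ∈ V, ContDiffAt ℝ ∞ h y) (hσ : 0 < σ) (hb : 0 ≤ b)
    (hbound : ∀ k, ∀ y ∈ V, ‖iteratedFDeriv ℝ k h y‖ ≤ C * σ ^ k * M k) (hv : σ * ‖v‖ ≤ 1)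
    (hV : ∀ s, |s| ≤ b → x + s • v ∈ V) :
    HasTaylorBounds (mseq M) C b (fun s => h (x + s • v))
      fun k => (iteratedFDeriv ℝ k h x fun _ => v) / k.factorial := by
  have hdir : ∀ k s, |s| ≤ b → ‖iteratedFDeriv ℝ k h (x + s • v) fun _ => v‖ ≤ C * M k :=
    fun k s hs => by
      have hCM : 0 ≤ C * M k := by
        have := (norm_nonneg _).trans (hbound k _ (hV s hs))
        rw [mul_right_comm] at this
        exact nonneg_of_mul_nonneg_left this (by positivity)
      calc _ ≤ C * σ ^ k * M k * ‖v‖ ^ k := by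
            simpa using (iteratedFDeriv ℝ k h (x + s • v)).le_of_opNorm_le (hbound k _ (hV s hs))
              fun _ => v
        _ = C * M k * (σ * ‖v‖) ^ k := by ring
        _ ≤ C * M k := mul_le_of_le_one_right hCM (pow_le_one₀ (by positivity) hv)
  refine ⟨fun k => ?_, fun p s hs => ?_⟩
  · rw [norm_div, Complex.norm_natCast, mseq, ← mul_div_assoc]
    gcongr
    simpa using hdir k 0 (by simpa using hb)
  · rw [mseq, ← mul_div_assoc]
    exact norm_sub_sum_range_iteratedFDeriv_mul_pow_le
      (fun t ht => (hh _ (hV t (ht.trans hs))).of_le (by exact_mod_cast le_top))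
      fun t ht => hdir p t (ht.trans hs)

end TaylorAlongLines

section DerivativeFromDifferences

open fwdDiff

variable {E : Type*} [NormedAddCommGroup E] [NormedSpace ℝ E]

lemma exists_norm_iteratedFDeriv_add_smul_le {F : Type*} [NormedAddCommGroup F] [NormedSpace ℝ F]
    {h : E → F} {x : E} {n : ℕ} (hh : ContDiffAt ℝ n h x) (v : E) :
    ∃ B δ : ℝ, 0 ≤ B ∧ 0 < δ ∧ ∀ t, |t| ≤ δ →
      ContDiffAt ℝ n h (x + t • v) ∧ ‖iteratedFDeriv ℝ n h (x + t • v) fun _ => v‖ ≤ B := by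
  have hline : Tendsto (fun t : ℝ => x + t • v) (nhds 0) (nhds x) :=
    Continuous.tendsto' (by fun_prop) _ _ (by simp)
  have hbound : ∀ᶠ y in nhds x, ‖iteratedFDeriv ℝ n h y‖ < ‖iteratedFDeriv ℝ n h x‖ + 1 :=
    (hh.continuousAt_iteratedFDeriv le_rfl).norm.eventually_lt_const (lt_add_one _)
  obtain ⟨δ, hδ, hball⟩ := Metric.eventually_nhds_iff_ball.1
    (hline.eventually ((hh.eventually (by simp)).and hbound))
  refine ⟨(‖iteratedFDeriv ℝ n h x‖ + 1) * ‖v‖ ^ n, δ / 2, by positivity, half_pos hδ,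
    fun t ht => ?_⟩
  obtain ⟨hsmooth, hle⟩ := hball t (by simpa using ht.trans_lt (half_lt_self hδ))
  exact ⟨hsmooth, by simpa using
    (iteratedFDeriv ℝ n h (x + t • v)).le_of_opNorm_le hle.le fun _ => v⟩

lemma exists_norm_fwdDiff_iter_sub_iteratedFDeriv_le {h : E → ℂ} {x : E} {n : ℕ}
    (hh : ContDiffAt ℝ (n + 1) h x) (v : E) :
    ∃ C δ : ℝ, 0 < δ ∧ ∀ s, 0 < s → s ≤ δ →
      ‖Δ_[s • v] ^[n] h x - s ^ n • iteratedFDeriv ℝ n h x fun _ => v‖ ≤ s ^ n * (C * s) := by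
  obtain ⟨B, δ, hB, hδ, hδB⟩ := exists_norm_iteratedFDeriv_add_smul_le (n := n + 1)
    (by exact_mod_cast hh) v
  refine ⟨2 ^ n * (B * n ^ (n + 1)), δ / (n + 1), by positivity, fun s hs hsδ => ?_⟩
  rw [le_div_iff₀ (by positivity)] at hsδ
  have htaylor : ∀ k ≤ n, ‖h (x + (k * s : ℝ) • v) - ∑ i ∈ Finset.range (n + 1),
      (iteratedFDeriv ℝ i h x fun _ => v) / i.factorial * ((k * s : ℝ) : ℂ) ^ i‖ ≤
        B * (n * s) ^ (n + 1) := fun k hk => by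
    have hkn : k * s ≤ n * s := by gcongr
    have hle : ∀ t, |t| ≤ |k * s| → |t| ≤ δ := fun t ht => by
      rw [abs_of_nonneg (by positivity : (0 : ℝ) ≤ k * s)] at ht
      linarith
    refine (norm_sub_sum_range_iteratedFDeriv_mul_pow_le (fun t ht => (hδB t (hle t ht)).1)
      fun t ht => (hδB t (hle t ht)).2).trans ?_
    rw [abs_of_nonneg (by positivity)]
    gcongr
    exact div_le_self hB (by exact_mod_cast (n + 1).factorial_pos)
  have hdiff := norm_fwdDiff_iter_sub_le (φ := fun t => h (x + t • v)) htaylor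
  have hline := fwdDiff_iter_comp_addMonoidHom h
    (LinearMap.toSpanSingleton ℝ E v : ℝ →+ E) x s 0 n
  simp only [AddMonoidHom.coe_coe, LinearMap.toSpanSingleton_apply, zero_smul, add_zero] at hline
  rw [hline, mul_div_cancel₀ _ (by exact_mod_cast n.factorial_ne_zero), mul_comm] at hdiff
  rw [Complex.real_smul]
  push_cast
  exact hdiff.trans_eq (by ring)

lemma norm_iteratedFDeriv_apply_le_of_fwdDiff {h : E → ℂ} {x v : E} {n : ℕ} {A D δ : ℝ}
    (hh : ContDiffAt ℝ (n + 1) h x) (hδ : 0 < δ)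
    (hΔ : ∀ s, 0 < s → s ≤ δ → ‖Δ_[s • v] ^[n] h x‖ ≤ s ^ n * (A + D * s)) :
    ‖iteratedFDeriv ℝ n h x fun _ => v‖ ≤ A := by
  obtain ⟨C, δ', hδ', hC⟩ := exists_norm_fwdDiff_iter_sub_iteratedFDeriv_le hh v
  have hlim : Tendsto (fun s : ℝ => A + (C + D) * s) (nhdsWithin 0 (Ioi 0)) (nhds A) :=
    (Continuous.tendsto' (by fun_prop) _ _ (by simp)).mono_left nhdsWithin_le_nhds
  refine ge_of_tendsto hlim ?_
  filter_upwards [Ioc_mem_nhdsGT (lt_min hδ hδ')] with s ⟨hs, hsδ⟩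
  refine le_of_mul_le_mul_left ?_ (pow_pos hs n)
  calc _ = ‖s ^ n • iteratedFDeriv ℝ n h x fun _ => v‖ := by
        rw [norm_smul, Real.norm_of_nonneg (by positivity)]
    _ ≤ ‖Δ_[s • v] ^[n] h x‖ +
        ‖Δ_[s • v] ^[n] h x - s ^ n • iteratedFDeriv ℝ n h x fun _ => v‖ :=
        norm_le_norm_add_norm_sub _ _
    _ ≤ s ^ n * (A + D * s) + s ^ n * (C * s) :=
        add_le_add (hΔ s hs (hsδ.trans (min_le_left _ _))) (hC s hs (hsδ.trans (min_le_right _ _)))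
    _ = _ := by ring

end DerivativeFromDifferences

section SymmetryOfIteratedDerivatives

variable {E F : Type*} [NormedAddCommGroup E] [NormedSpace ℝ E] [NormedAddCommGroup F]
  [NormedSpace ℝ F] {f : E → F} {x : E} {n : ℕ}

lemma iteratedFDeriv_add_two_apply (hf : ContDiffAt ℝ (n + 2) f x) (v : Fin (n + 2) → E) :
    iteratedFDeriv ℝ (n + 2) f x v =
      fderiv ℝ (fderiv ℝ (iteratedFDeriv ℝ n f)) x (v 0) (v 1) (Fin.tail (Fin.tail v)) := by
  have hn : ContDiffAt ℝ 2 (iteratedFDeriv ℝ n f) x :=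
    hf.iteratedFDeriv_right (by rw [add_comm])
  have hdiff : DifferentiableAt ℝ (fderiv ℝ (iteratedFDeriv ℝ n f)) x :=
    (hn.fderiv_right (m := 1) (by norm_num)).differentiableAt one_ne_zero
  rw [(hf.differentiableAt_iteratedFDeriv (by exact_mod_cast Nat.lt_succ_self _)
    ).iteratedFDeriv_succ_apply_left']
  change fderiv ℝ (fun y => fderiv ℝ (iteratedFDeriv ℝ n f) y (v 1) (Fin.tail (Fin.tail v))) x
    (v 0) = _
  rw [fderiv_continuousMultilinear_apply_const_apply
    (hdiff.clm_apply (differentiableAt_const (v 1))), fderiv_clm_apply hdiff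
    (differentiableAt_const _)]
  simp

lemma iteratedFDeriv_comp_swap_zero_one (hf : ContDiffAt ℝ (n + 2) f x) (v : Fin (n + 2) → E) :
    iteratedFDeriv ℝ (n + 2) f x (v ∘ Equiv.swap 0 1) = iteratedFDeriv ℝ (n + 2) f x v := by
  have hsymm : IsSymmSndFDerivAt ℝ (iteratedFDeriv ℝ n f) x :=
    ContDiffAt.isSymmSndFDerivAt (n := 2) (hf.iteratedFDeriv_right (by rw [add_comm])) (by simp)
  rw [iteratedFDeriv_add_two_apply hf, iteratedFDeriv_add_two_apply hf, hsymm.eq]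
  rfl

lemma iteratedFDeriv_comp_swap_castSucc_succ (hf : ContDiffAt ℝ (n + 1) f x) (i : Fin n)
    (v : Fin (n + 1) → E) : iteratedFDeriv ℝ (n + 1) f x (v ∘ Equiv.swap i.castSucc i.succ) =
      iteratedFDeriv ℝ (n + 1) f x v := by
  induction n generalizing x with
  | zero => exact i.elim0
  | succ n ih =>
    cases i using Fin.cases with
    | zero => exact iteratedFDeriv_comp_swap_zero_one (by exact_mod_cast hf) v
    | succ i =>
      have htail : Fin.tail (v ∘ Equiv.swap i.succ.castSucc i.succ.succ) =
          Fin.tail v ∘ Equiv.swap i.castSucc i.succ := by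
        ext l
        simp only [Function.comp_apply, Fin.tail, ← Fin.succ_castSucc, Equiv.swap_apply_def,
          Fin.succ_inj]
        split_ifs <;> rfl
      have hlt : ((n + 1 : ℕ) : WithTop ℕ∞) < ↑(n + 1) + 1 := by exact_mod_cast Nat.lt_succ_self _
      have hdiff := hf.differentiableAt_iteratedFDeriv hlt
      have hih : (fun y => iteratedFDeriv ℝ (n + 1) f y
          (Fin.tail v ∘ Equiv.swap i.castSucc i.succ)) =ᶠ[nhds x]
            fun y => iteratedFDeriv ℝ (n + 1) f y (Fin.tail v) := by
        filter_upwards [(hf.of_le hlt.le).eventually (by simp)] with y hy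
        exact ih (by exact_mod_cast hy) i _
      rw [hdiff.iteratedFDeriv_succ_apply_left', hdiff.iteratedFDeriv_succ_apply_left', htail,
        hih.fderiv_eq]
      rfl

lemma iteratedFDeriv_comp_perm (hf : ContDiffAt ℝ n f x) (σ : Equiv.Perm (Fin n))
    (v : Fin n → E) : iteratedFDeriv ℝ n f x (v ∘ σ) = iteratedFDeriv ℝ n f x v := by
  cases n with
  | zero => congr 1; exact Subsingleton.elim _ _
  | succ n =>
    have hσ : σ ∈ Submonoid.closure (range fun i : Fin n => Equiv.swap i.castSucc i.succ) := by
      rw [Equiv.Perm.mclosure_swap_castSucc_succ]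
      exact Submonoid.mem_top σ
    induction hσ using Submonoid.closure_induction generalizing v with
    | mem σ h =>
      obtain ⟨i, rfl⟩ := h
      exact iteratedFDeriv_comp_swap_castSucc_succ (by exact_mod_cast hf) i v
    | one => rfl
    | mul σ τ _ _ ihσ ihτ => rw [Equiv.Perm.coe_mul, ← Function.comp_assoc, ihτ, ihσ]

end SymmetryOfIteratedDerivatives

section Polarization

lemma multilinearMap_sum_comp_perm {R ι M N : Type*} [Semiring R] [AddCommMonoid M]
    [AddCommGroup N] [Module R M] [Module R N] [Fintype ι] [DecidableEq ι]
    (T : MultilinearMap R (fun _ : ι => M) N) (m : ι → M) :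
    ∑ σ : Equiv.Perm ι, T (m ∘ σ) =
      ∑ t : Finset ι, (-1 : ℤ) ^ t.card • T fun _ => ∑ i ∈ tᶜ, m i := by
  let avoiding (i : ι) : Finset (ι → ι) := {r | ∀ l, r l ≠ i}
  have hmaps : ∀ t : Finset ι, t.inf avoiding = Fintype.piFinset fun _ => tᶜ := fun t => by
    ext r
    simp only [avoiding, Finset.mem_inf, Finset.mem_filter_univ, Fintype.mem_piFinset,
      Finset.mem_compl]
    exact ⟨fun h l hl => h _ hl l rfl, fun h i hi l hl => h l (hl ▸ hi)⟩
  have hincl := Finset.inclusion_exclusion_sum_inf_compl Finset.univ avoiding fun r => T (m ∘ r)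
  simp_rw [hmaps] at hincl
  simp_rw [T.map_sum_finset (fun _ => m), ← Finset.powerset_univ]
  refine Eq.trans (Finset.sum_bij (fun σ _ => ⇑σ) ?_ ?_ ?_ ?_) hincl
  · simpa [avoiding, Finset.mem_inf] using fun σ i => ⟨_, Equiv.apply_symm_apply σ i⟩
  · exact fun _ _ _ _ h => DFunLike.coe_injective h
  · intro r hr
    have hsurj : ∀ i, ∃ l, r l = i := by simpa [avoiding, Finset.mem_inf] using hr
    exact ⟨.ofBijective r (Finite.surjective_iff_bijective.1 hsurj), Finset.mem_univ _, rfl⟩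
  · exact fun _ _ => rfl

lemma norm_continuousMultilinearMap_le_of_unit {ι E F : Type*} [Fintype ι]
    [NormedAddCommGroup E] [NormedSpace ℝ E] [SeminormedAddCommGroup F] [NormedSpace ℝ F]
    {T : ContinuousMultilinearMap ℝ (fun _ : ι => E) F} {C : ℝ} (hC : 0 ≤ C)
    (hT : ∀ m, (∀ i, ‖m i‖ = 1) → ‖T m‖ ≤ C) : ‖T‖ ≤ C := by
  refine ContinuousMultilinearMap.opNorm_le_bound hC fun m => ?_
  by_cases hm : ∃ i, m i = 0
  · obtain ⟨i, hi⟩ := hm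
    rw [T.map_coord_zero i hi, norm_zero]
    positivity
  push Not at hm
  have hscale : T m = (∏ i, ‖m i‖) • T fun i => ‖m i‖⁻¹ • m i := by
    rw [← T.map_smul_univ]
    exact congrArg T (funext fun i => (smul_inv_smul₀ (norm_ne_zero_iff.2 (hm i)) _).symm)
  rw [hscale, norm_smul, Real.norm_of_nonneg (by positivity), mul_comm]
  gcongr
  exact hT _ fun i => norm_smul_inv_norm (hm i)

variable {E F : Type*} [NormedAddCommGroup E] [NormedSpace ℝ E] [SeminormedAddCommGroup F]
  [NormedSpace ℝ F] {n : ℕ} {T : ContinuousMultilinearMap ℝ (fun _ : Fin n => E) F} {κ A : ℝ}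

lemma factorial_mul_norm_continuousMultilinearMap_le_of_symmetric
    (hsymm : ∀ (σ : Equiv.Perm (Fin n)) v, T (v ∘ σ) = T v)
    (hA : ∀ v, ‖v‖ ≤ κ → ‖T fun _ => v‖ ≤ A) {m : Fin n → E} (hm : ∑ i, ‖m i‖ ≤ κ) :
    n.factorial * ‖T m‖ ≤ 2 ^ n * A := by
  have hperm : (n.factorial : ℝ) • T m =
      ∑ t : Finset (Fin n), (-1 : ℤ) ^ t.card • T fun _ => ∑ i ∈ tᶜ, m i := by
    refine Eq.trans ?_ (multilinearMap_sum_comp_perm T.toMultilinearMap m)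
    simp [hsymm, Fintype.card_perm, Nat.cast_smul_eq_nsmul]
  rw [← Real.norm_natCast, ← norm_smul, hperm]
  have hterm : ∀ t ∈ Finset.univ, ‖(-1 : ℤ) ^ t.card • T fun _ => ∑ i ∈ tᶜ, m i‖ ≤ A :=
    fun t _ => by
      refine (norm_zsmul_le _ _).trans ?_
      simpa [norm_pow] using hA _ ((norm_sum_le _ _).trans
        ((Finset.sum_le_univ_sum_of_nonneg fun i => norm_nonneg _).trans hm))
  simpa using norm_sum_le_of_le _ hterm

lemma norm_continuousMultilinearMap_le_of_symmetric
    (hsymm : ∀ (σ : Equiv.Perm (Fin n)) v, T (v ∘ σ) = T v) (hκ : 0 < κ)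
    (hA : ∀ v, ‖v‖ ≤ κ → ‖T fun _ => v‖ ≤ A) : ‖T‖ ≤ (2 * Real.exp 1 / κ) ^ n * A := by
  have hA0 : 0 ≤ A := (norm_nonneg _).trans (hA 0 (by simpa using hκ.le))
  refine norm_continuousMultilinearMap_le_of_unit (by positivity) fun m hm => ?_
  have hsum : ∑ i, ‖(κ / n) • m i‖ ≤ κ := by
    simp only [norm_smul, hm, Finset.sum_const, Finset.card_univ, Fintype.card_fin]
    rw [Real.norm_of_nonneg (by positivity), mul_one, nsmul_eq_mul]
    rw [mul_div_left_comm]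
    exact mul_le_of_le_one_right hκ.le (div_self_le_one _)
  have hpolar := factorial_mul_norm_continuousMultilinearMap_le_of_symmetric hsymm hA hsum
  rw [T.map_smul_univ, norm_smul, Fin.prod_const, Real.norm_of_nonneg (by positivity)] at hpolar
  have hnn : (0 : ℝ) < (n : ℝ) ^ n := by exact_mod_cast Nat.pow_self_pos
  calc ‖T m‖ = n ^ n / κ ^ n * ((κ / n) ^ n * ‖T m‖) := by rw [div_pow]; field_simp
    _ ≤ Real.exp 1 ^ n * n.factorial / κ ^ n * ((κ / n) ^ n * ‖T m‖) := by
        gcongr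
        exact pow_self_le_exp_pow_mul_factorial n
    _ = Real.exp 1 ^ n / κ ^ n * (n.factorial * ((κ / n) ^ n * ‖T m‖)) := by ring
    _ ≤ Real.exp 1 ^ n / κ ^ n * (2 ^ n * A) := by gcongr
    _ = (2 * Real.exp 1 / κ) ^ n * A := by rw [div_pow, mul_pow]; ring

end Polarization

section DifferenceBounds

open fwdDiff
open scoped ContDiff

variable {E : Type*} [NormedAddCommGroup E] [NormedSpace ℝ E]

/-- The `n`-th differences of `f` at points of `U` in directions of norm at most `κ` behave like
those of a function whose `n`-th directional derivatives are bounded by `a n`, up to a relative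
error that is linear in the step and uniform on `U`. -/
def HasFwdDiffBounds (f : E → ℂ) (U : Set E) (κ : ℝ) (a : ℕ → ℝ) : Prop :=
  ∀ n, ∃ D δ : ℝ, 0 < δ ∧ ∀ x ∈ U, ∀ v, ‖v‖ ≤ κ → ∀ s, 0 < s → s ≤ δ →
    ‖Δ_[s • v] ^[n] f x‖ ≤ s ^ n * (a n + D * s)

namespace HasFwdDiffBounds

variable {f : E → ℂ} {U V : Set E} {κ : ℝ} {a : ℕ → ℝ}

lemma mono (hf : HasFwdDiffBounds f U κ a) (hVU : V ⊆ U) : HasFwdDiffBounds f V κ a := fun n =>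
  let ⟨D, δ, hδ, h⟩ := hf n
  ⟨D, δ, hδ, fun x hx => h x (hVU hx)⟩

lemma norm_iteratedFDeriv_le (hf : HasFwdDiffBounds f U κ a) (hκ : 0 < κ) {x : E} (hx : x ∈ U)
    (hsmooth : ContDiffAt ℝ ∞ f x) (n : ℕ) :
    ‖iteratedFDeriv ℝ n f x‖ ≤ (2 * Real.exp 1 / κ) ^ n * a n := by
  obtain ⟨D, δ, hδ, hbound⟩ := hf n
  have hle : ∀ k : ℕ, (k : WithTop ℕ∞) ≤ ∞ := fun k => by exact_mod_cast le_top
  refine norm_continuousMultilinearMap_le_of_symmetric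
    (fun σ v => iteratedFDeriv_comp_perm (hsmooth.of_le (hle n)) σ v) hκ fun v hv => ?_
  exact norm_iteratedFDeriv_apply_le_of_fwdDiff (hsmooth.of_le (by exact_mod_cast hle (n + 1))) hδ
    (hbound x hx v hv)

end HasFwdDiffBounds

end DifferenceBounds

section LimitsOfSmoothFunctions

open scoped ContDiff

variable {E F : Type*} [NormedAddCommGroup E] [NormedSpace ℝ E] [NormedAddCommGroup F]
  [NormedSpace ℝ F]

lemma opNorm_le_of_hasFDerivAt_closedBall {f : E → F} {f' : E → E →L[ℝ] F} {x : E} {h δ ε : ℝ}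
    (hh : 0 < h) (hf : ∀ y ∈ Metric.closedBall x h, HasFDerivAt f (f' y) y)
    (hf' : ∀ y ∈ Metric.closedBall x h, ‖f' y - f' x‖ ≤ δ)
    (hε : ∀ y ∈ Metric.closedBall x h, ‖f y‖ ≤ ε) : ‖f' x‖ ≤ 2 * ε / h + δ := by
  have hx : x ∈ Metric.closedBall x h := Metric.mem_closedBall_self hh.le
  have hε0 : 0 ≤ ε := (norm_nonneg _).trans (hε x hx)
  have hδ0 : 0 ≤ δ := (norm_nonneg _).trans (hf' x hx)
  refine ContinuousLinearMap.opNorm_le_of_unit_norm (by positivity) fun w hw => ?_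
  have hnorm : ‖h • w‖ = h := by rw [norm_smul, hw, mul_one, Real.norm_of_nonneg hh.le]
  have hy : x + h • w ∈ Metric.closedBall x h := by simp [hnorm]
  have hmean := (convex_closedBall x h).norm_image_sub_le_of_norm_hasFDerivWithin_le'
    (fun y hy => (hf y hy).hasFDerivWithinAt) hf' hx hy
  rw [add_sub_cancel_left, hnorm] at hmean
  have hscaled : h * ‖f' x w‖ ≤ 2 * ε + δ * h :=
    calc h * ‖f' x w‖ = ‖f' x (h • w)‖ := by
          rw [map_smul, norm_smul, Real.norm_of_nonneg hh.le]
      _ ≤ ‖f (x + h • w) - f x‖ + ‖f (x + h • w) - f x - f' x (h • w)‖ :=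
          norm_le_norm_add_norm_sub _ _
      _ ≤ (ε + ε) + δ * h :=
          add_le_add ((norm_sub_le _ _).trans (add_le_add (hε _ hy) (hε x hx))) hmean
      _ = 2 * ε + δ * h := by ring
  rw [← mul_le_mul_iff_right₀ hh]
  refine hscaled.trans_eq ?_
  field_simp

lemma uniformCauchySeqOn_of_hasFDerivAt {g : ℕ → E → F} {g' : ℕ → E → E →L[ℝ] F} {c : E}
    {ρ R B : ℝ} (hρR : ρ < R) (hg : ∀ n, ∀ x ∈ Metric.ball c R, HasFDerivAt (g n) (g' n x) x)
    (hlip : ∀ n, ∀ x ∈ Metric.ball c R, ∀ y ∈ Metric.ball c R,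
      ‖g' n y - g' n x‖ ≤ B * ‖y - x‖)
    (hcauchy : UniformCauchySeqOn g atTop (Metric.ball c R)) :
    UniformCauchySeqOn g' atTop (Metric.ball c ρ) := by
  rw [Metric.uniformCauchySeqOn_iff] at hcauchy ⊢
  intro ε hε
  obtain ⟨h, hh, hhR, hhB⟩ : ∃ h, 0 < h ∧ h < R - ρ ∧ 2 * |B| * h ≤ ε / 4 := by
    have hBpos : 0 < 8 * (|B| + 1) := by positivity
    refine ⟨min ((R - ρ) / 2) (ε / (8 * (|B| + 1))), lt_min (by linarith) (by positivity),
      (min_le_left _ _).trans_lt (by linarith), ?_⟩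
    have hmin := (le_div_iff₀ hBpos).1 (min_le_right ((R - ρ) / 2) (ε / (8 * (|B| + 1))))
    have hmin0 : 0 < min ((R - ρ) / 2) (ε / (8 * (|B| + 1))) :=
      lt_min (by linarith) (by positivity)
    linarith
  obtain ⟨N, hN⟩ := hcauchy (h * ε / 8) (by positivity)
  refine ⟨N, fun p hp q hq x hx => ?_⟩
  have hsub : Metric.closedBall x h ⊆ Metric.ball c R := fun y hy => by
    have := dist_triangle y x c
    rw [Metric.mem_ball, Metric.mem_closedBall] at *
    linarith
  have hxR : x ∈ Metric.ball c R := hsub (Metric.mem_closedBall_self hh.le)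
  have hbound := opNorm_le_of_hasFDerivAt_closedBall (f := g p - g q) (f' := g' p - g' q)
    (δ := 2 * |B| * h) hh (fun y hy => (hg p y (hsub hy)).sub (hg q y (hsub hy))) (fun y hy => ?_)
    fun y hy => (dist_eq_norm (g p y) (g q y) ▸ hN p hp q hq y (hsub hy)).le
  · rw [dist_eq_norm]
    refine hbound.trans_lt ?_
    have : 2 * (h * ε / 8) / h = ε / 4 := by field_simp; norm_num
    linarith
  · have hBh : B * ‖y - x‖ ≤ |B| * h :=
      mul_le_mul (le_abs_self B) (mem_closedBall_iff_norm.1 hy) (norm_nonneg _) (abs_nonneg B)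
    calc _ = ‖(g' p y - g' p x) - (g' q y - g' q x)‖ := by
          simp only [Pi.sub_apply]
          congr 1
          abel
      _ ≤ |B| * h + |B| * h := (norm_sub_le _ _).trans (add_le_add
          ((hlip p x hxR y (hsub hy)).trans hBh) ((hlip q x hxR y (hsub hy)).trans hBh))
      _ = 2 * |B| * h := by ring

variable {g : ℕ → E → F} {p : ℕ → E → FormalMultilinearSeries ℝ E F} {c : E} {R : ℝ}

lemma hasFDerivAt_of_hasFTaylorSeriesUpToOn_ball {f : E → F}
    {q : E → FormalMultilinearSeries ℝ E F}
    (hq : HasFTaylorSeriesUpToOn ∞ f q (Metric.ball c R)) (k : ℕ) {x : E}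
    (hx : x ∈ Metric.ball c R) : HasFDerivAt (q · k) (q x k.succ).curryLeft x :=
  (hq.fderivWithin k (by exact_mod_cast ENat.natCast_lt_top k) x hx).hasFDerivAt
    (Metric.isOpen_ball.mem_nhds hx)

lemma uniformCauchySeqOn_of_hasFTaylorSeriesUpToOn
    (hp : ∀ n, HasFTaylorSeriesUpToOn ∞ (g n) (p n) (Metric.ball c R))
    (hbound : ∀ k, ∃ B : ℝ, ∀ n, ∀ x ∈ Metric.ball c R, ‖p n x k‖ ≤ B)
    (hcauchy : UniformCauchySeqOn g atTop (Metric.ball c R)) (k : ℕ) {ρ : ℝ} (hρ : ρ < R) :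
    UniformCauchySeqOn (fun n x => p n x k) atTop (Metric.ball c ρ) := by
  induction k generalizing ρ with
  | zero =>
    intro u hu
    filter_upwards [(continuousMultilinearCurryFin0 ℝ E F).symm.isometry.uniformContinuous
      |>.comp_uniformCauchySeqOn hcauchy u hu] with n hn x hx
    have hxR : x ∈ Metric.ball c R := Metric.ball_subset_ball hρ.le hx
    simpa only [(hp _).zero_eq' hxR, Function.comp_apply] using hn x hxR
  | succ k ih =>
    obtain ⟨r, hρr, hrR⟩ := exists_between hρ
    obtain ⟨B, hB⟩ := hbound (k + 2)
    have hsub : Metric.ball c r ⊆ Metric.ball c R := Metric.ball_subset_ball hrR.le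
    let curry := continuousMultilinearCurryLeftEquiv ℝ (fun _ : Fin (k + 1) => E) F
    have hcurry : UniformCauchySeqOn (fun n x => curry (p n x (k + 1))) atTop
        (Metric.ball c ρ) := by
      refine uniformCauchySeqOn_of_hasFDerivAt (B := B) hρr
        (fun n x hx => hasFDerivAt_of_hasFTaylorSeriesUpToOn_ball (hp n) k (hsub hx))
        (fun n x hx y hy => ?_) (ih hrR)
      rw [← dist_eq_norm, curry.dist_map, dist_eq_norm]
      refine (convex_ball c r).norm_image_sub_le_of_norm_hasFDerivWithin_le (fun z hz =>
        (hasFDerivAt_of_hasFTaylorSeriesUpToOn_ball (hp n) (k + 1) (hsub hz)).hasFDerivWithinAt)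
        (fun z hz => ?_) hx hy
      rw [ContinuousMultilinearMap.curryLeft_norm]
      exact hB n z (hsub hz)
    simpa only [Function.comp_def, curry.symm_apply_apply] using
      curry.symm.isometry.uniformContinuous.comp_uniformCauchySeqOn hcurry

lemma contDiffOn_ball_of_tendstoUniformlyOn [CompleteSpace F] {f : E → F}
    (hp : ∀ n, HasFTaylorSeriesUpToOn ∞ (g n) (p n) (Metric.ball c R))
    (hbound : ∀ k, ∃ B : ℝ, ∀ n, ∀ x ∈ Metric.ball c R, ‖p n x k‖ ≤ B)
    (hlim : TendstoUniformlyOn g f atTop (Metric.ball c R)) :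
    ContDiffOn ℝ ∞ f (Metric.ball c R) := by
  have hcauchy := uniformCauchySeqOn_of_hasFTaylorSeriesUpToOn hp hbound hlim.uniformCauchySeqOn
  have hconv : ∀ x k, ∃ T, x ∈ Metric.ball c R → Tendsto (fun n => p n x k) atTop (nhds T) :=
    fun x k => by
      by_cases hx : x ∈ Metric.ball c R
      · obtain ⟨ρ, hxρ, hρR⟩ := exists_between (Metric.mem_ball.1 hx)
        obtain ⟨T, hT⟩ := cauchySeq_tendsto_of_complete ((hcauchy k hρR).cauchySeq hxρ)
        exact ⟨T, fun _ => hT⟩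
      · exact ⟨0, fun h => absurd h hx⟩
  choose q hq using hconv
  have hunif : ∀ k ρ, ρ < R → TendstoUniformlyOn (fun n x => p n x k) (q · k) atTop
      (Metric.ball c ρ) := fun k ρ hρ =>
    (hcauchy k hρ).tendstoUniformlyOn_of_tendsto fun x hx =>
      hq x k (Metric.ball_subset_ball hρ.le hx)
  have hderiv : ∀ (k : ℕ), ∀ x ∈ Metric.ball c R, HasFDerivAt (q · k) (q x k.succ).curryLeft x := by
    intro k x hx
    obtain ⟨ρ, hxρ, hρR⟩ := exists_between (Metric.mem_ball.1 hx)
    have hsub : Metric.ball c ρ ⊆ Metric.ball c R := Metric.ball_subset_ball hρR.le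
    exact hasFDerivAt_of_tendstoUniformlyOn Metric.isOpen_ball
      ((continuousMultilinearCurryLeftEquiv ℝ (fun _ => E) F).isometry.uniformContinuous
        |>.comp_tendstoUniformlyOn (hunif k.succ ρ hρR))
      (fun n y hy => hasFDerivAt_of_hasFTaylorSeriesUpToOn_ball (hp n) k (hsub hy))
      (fun y hy => hq y k (hsub hy)) hxρ
  refine HasFTaylorSeriesUpToOn.contDiffOn (f' := q) ⟨fun x hx => ?_, fun k _ x hx =>
    (hderiv k x hx).hasFDerivWithinAt, fun k _ x hx =>
    (hderiv k x hx).continuousAt.continuousWithinAt⟩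
  refine tendsto_nhds_unique ?_ (hlim.tendsto_at hx)
  exact (((continuousMultilinearCurryFin0 ℝ E F).continuous.tendsto _).comp (hq x 0 hx)).congr
    fun n => (hp n).zero_eq x hx

end LimitsOfSmoothFunctions

section Mollification

open fwdDiff ContinuousLinearMap
open scoped ContDiff Convolution

variable {E : Type*} [NormedAddCommGroup E]

lemma aestronglyMeasurable_fwdDiff_iter {F : Type*} [NormedAddCommGroup F] [MeasurableSpace E]
    [BorelSpace E] {μ : Measure E} [μ.IsAddRightInvariant] {f : E → F}
    (hf : AEStronglyMeasurable f μ) (h : E) (n : ℕ) :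
    AEStronglyMeasurable (Δ_[h] ^[n] f) μ := by
  induction n with
  | zero => exact hf
  | succ n ih =>
    rw [Function.iterate_succ_apply']
    exact (ih.comp_measurePreserving (measurePreserving_add_right μ h)).sub ih

lemma convolutionExists_fwdDiff {F : Type*} [NormedAddCommGroup F] [NormedSpace ℝ F]
    [MeasurableSpace E] {μ : Measure E} {ψ : E → ℝ} {f : E → F}
    (hf : ConvolutionExists ψ f (lsmul ℝ ℝ) μ) (h : E) :
    ConvolutionExists ψ (Δ_[h] f) (lsmul ℝ ℝ) μ := fun x => by
  have hsub := (hf (x + h)).integrable.sub (hf x).integrable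
  refine hsub.congr (.of_forall fun t => ?_)
  simp [fwdDiff, smul_sub, add_sub_right_comm]

lemma fwdDiff_iter_convolution {F : Type*} [NormedAddCommGroup F] [NormedSpace ℝ F]
    [MeasurableSpace E] {μ : Measure E} {ψ : E → ℝ} {f : E → F}
    (hf : ConvolutionExists ψ f (lsmul ℝ ℝ) μ) (h : E) (n : ℕ) :
    Δ_[h] ^[n] (ψ ⋆[lsmul ℝ ℝ, μ] f) = ψ ⋆[lsmul ℝ ℝ, μ] Δ_[h] ^[n] f := by
  induction n generalizing f with
  | zero => rfl
  | succ n ih =>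
    rw [Function.iterate_succ_apply, Function.iterate_succ_apply,
      ← ih (convolutionExists_fwdDiff hf h)]
    congr 1
    ext x
    rw [fwdDiff, convolution, convolution, ← integral_sub (hf (x + h)) (hf x)]
    refine integral_congr_ae (.of_forall fun t => ?_)
    simp [fwdDiff, smul_sub, add_sub_right_comm]

namespace HasFwdDiffBounds

variable [NormedSpace ℝ E] {f g : E → ℂ} {U : Set E} {κ : ℝ} {a : ℕ → ℝ} {x₀ : E} {r R : ℝ}

lemma exists_norm_le (hf : HasFwdDiffBounds f U κ a) (hκ : 0 ≤ κ) : ∃ C, ∀ x ∈ U, ‖f x‖ ≤ C := by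
  obtain ⟨D, δ, hδ, h⟩ := hf 0
  exact ⟨a 0 + D * δ, fun x hx => by simpa using h x hx 0 (by simpa using hκ) δ hδ le_rfl⟩

lemma exists_norm_sub_le (hf : HasFwdDiffBounds f U κ a) (hκ : 0 < κ) :
    ∃ L η : ℝ, 0 < η ∧ ∀ x ∈ U, ∀ y, ‖y - x‖ ≤ η → ‖f y - f x‖ ≤ L * ‖y - x‖ := by
  obtain ⟨D, δ, hδ, h⟩ := hf 1
  refine ⟨(a 1 + |D| * δ) / κ, κ * δ, by positivity, fun x hx y hy => ?_⟩
  rcases eq_or_ne y x with rfl | hyx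
  · simp
  have hpos : 0 < ‖y - x‖ := norm_pos_iff.2 (sub_ne_zero.2 hyx)
  have hsδ : ‖y - x‖ / κ ≤ δ := (div_le_iff₀' hκ).2 hy
  have hstep : (‖y - x‖ / κ) • (κ / ‖y - x‖) • (y - x) = y - x := by
    rw [smul_smul, div_mul_div_cancel₀ hκ.ne', div_self hpos.ne', one_smul]
  have hv : ‖(κ / ‖y - x‖) • (y - x)‖ ≤ κ := by
    rw [norm_smul, Real.norm_of_nonneg (by positivity), div_mul_cancel₀ _ hpos.ne']
  have hdiff := h x hx _ hv _ (div_pos hpos hκ) hsδ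
  rw [hstep, Function.iterate_one, fwdDiff, add_sub_cancel, pow_one] at hdiff
  calc _ ≤ ‖y - x‖ / κ * (a 1 + D * (‖y - x‖ / κ)) := hdiff
    _ ≤ ‖y - x‖ / κ * (a 1 + |D| * δ) := by gcongr; exact le_abs_self D
    _ = _ := by ring

lemma continuousAt (hf : HasFwdDiffBounds f U κ a) (hκ : 0 < κ) {x : E} (hx : x ∈ U) :
    ContinuousAt f x := by
  obtain ⟨L, η, hη, h⟩ := hf.exists_norm_sub_le hκ
  exact continuousAt_of_locally_lipschitz hη L fun y hy => by
    simpa only [dist_eq_norm] using h x hx y (dist_eq_norm y x ▸ hy.le)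

lemma congr_ball (hf : HasFwdDiffBounds f (Metric.ball x₀ r) κ a) (hκ : 0 ≤ κ) (hrR : r < R)
    (hfg : EqOn f g (Metric.ball x₀ R)) : HasFwdDiffBounds g (Metric.ball x₀ r) κ a := fun n => by
  obtain ⟨D, δ, hδ, h⟩ := hf n
  refine ⟨D, min δ ((R - r) / (n * κ + 1)), lt_min hδ (div_pos (by linarith) (by positivity)),
    fun x hx v hv s hs hsδ => ?_⟩
  have hsR : s * (n * κ + 1) ≤ R - r :=
    (le_div_iff₀ (by positivity)).1 (hsδ.trans (min_le_right _ _))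
  have hmem : ∀ k ≤ n, x + k • s • v ∈ Metric.ball x₀ R := fun k hk => by
    have hshift : ‖k • s • v‖ ≤ n * (s * κ) := by
      rw [← Nat.cast_smul_eq_nsmul ℝ, norm_smul, norm_smul, Real.norm_natCast,
        Real.norm_of_nonneg hs.le]
      gcongr
    rw [mem_ball_iff_norm] at hx ⊢
    have := norm_add_le (x - x₀) (k • s • v)
    rw [sub_add_eq_add_sub] at this
    linarith
  have heq : Δ_[s • v] ^[n] g x = Δ_[s • v] ^[n] f x := by
    rw [fwdDiff_iter_eq_sum_shift, fwdDiff_iter_eq_sum_shift]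
    exact Finset.sum_congr rfl fun k hk => by
      rw [hfg (hmem k (Nat.lt_succ_iff.1 (Finset.mem_range.1 hk)))]
  rw [heq]
  exact h x hx v hv s hs (hsδ.trans (min_le_left _ _))

variable [FiniteDimensional ℝ E] [MeasurableSpace E] [BorelSpace E] {μ : Measure E}
  [μ.IsAddHaarMeasure]

lemma normed_convolution (hf : HasFwdDiffBounds f (Metric.ball x₀ R) κ a)
    (hint : LocallyIntegrable f μ) (φ : ContDiffBump (0 : E)) (hφ : φ.rOut ≤ R - r) :
    HasFwdDiffBounds (φ.normed μ ⋆[lsmul ℝ ℝ, μ] f) (Metric.ball x₀ r) κ a := fun n => by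
  obtain ⟨D, δ, hδ, h⟩ := hf n
  refine ⟨D, δ, hδ, fun x hx v hv s hs hsδ => ?_⟩
  have hball : ∀ y ∈ Metric.ball x φ.rOut, y ∈ Metric.ball x₀ R := fun y hy => by
    have := dist_triangle y x x₀
    rw [Metric.mem_ball] at *
    linarith
  have hexists : ConvolutionExists (φ.normed μ) f (lsmul ℝ ℝ) μ :=
    φ.hasCompactSupport_normed.convolutionExists_left _ φ.continuous_normed hint
  rw [fwdDiff_iter_convolution hexists, ← dist_zero_right]
  refine dist_convolution_le ((norm_nonneg _).trans (h x (hball x (Metric.mem_ball_self φ.rOut_pos))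
    v hv s hs hsδ)) φ.support_normed_eq.subset φ.nonneg_normed φ.integral_normed
    (aestronglyMeasurable_fwdDiff_iter hint.aestronglyMeasurable _ n) fun y hy => ?_
  rw [dist_zero_right]
  exact h y (hball y hy) v hv s hs hsδ

lemma tendstoUniformlyOn_normed_convolution (hf : HasFwdDiffBounds f U κ a) (hκ : 0 < κ)
    (hmeas : AEStronglyMeasurable f μ) {φ : ℕ → ContDiffBump (0 : E)}
    (hφ : Tendsto (fun n => (φ n).rOut) atTop (nhds 0)) :
    TendstoUniformlyOn (fun n => (φ n).normed μ ⋆[lsmul ℝ ℝ, μ] f) f atTop U := by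
  obtain ⟨L, η, hη, h⟩ := hf.exists_norm_sub_le hκ
  rw [Metric.tendstoUniformlyOn_iff]
  intro ε hε
  have hsmall : Tendsto (fun n => |L| * (φ n).rOut) atTop (nhds 0) := by
    simpa using hφ.const_mul |L|
  filter_upwards [hφ.eventually_lt_const hη, hsmall.eventually_lt_const hε] with n hnη hnε x hx
  rw [dist_comm]
  refine (ContDiffBump.dist_normed_convolution_le hmeas fun y hy => ?_).trans_lt hnε
  rw [mem_ball_iff_norm] at hy
  rw [dist_eq_norm]
  refine (h x hx y (hy.trans hnη).le).trans ?_
  gcongr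
  exact le_abs_self L

lemma contDiffOn_ball_of_locallyIntegrable (hf : HasFwdDiffBounds f (Metric.ball x₀ R) κ a)
    (hκ : 0 < κ) (hint : LocallyIntegrable f μ) (hrR : r < R) :
    ContDiffOn ℝ ∞ f (Metric.ball x₀ r) := by
  let φ (n : ℕ) : ContDiffBump (0 : E) :=
    ⟨(R - r) / (n + 1) / 2, (R - r) / (n + 1), half_pos (div_pos (by linarith) (by positivity)),
      half_lt_self (div_pos (by linarith) (by positivity))⟩
  have hφ : ∀ n, (φ n).rOut ≤ R - r := fun n => div_le_self (by linarith) (by simp)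
  have hφ0 : Tendsto (fun n => (φ n).rOut) atTop (nhds 0) := by
    simpa [φ, div_eq_mul_one_div (R - r)] using
      (tendsto_one_div_add_atTop_nhds_zero_nat (𝕜 := ℝ)).const_mul (R - r)
  have hsmooth : ∀ n, ContDiff ℝ ∞ ((φ n).normed μ ⋆[lsmul ℝ ℝ, μ] f) := fun n =>
    (φ n).hasCompactSupport_normed.contDiff_convolution_left _ (φ n).contDiff_normed hint
  refine contDiffOn_ball_of_tendstoUniformlyOn
    (fun n => ((hsmooth n).ftaylorSeries).hasFTaylorSeriesUpToOn _)
    (fun k => ⟨(2 * Real.exp 1 / κ) ^ k * a k, fun n x hx => ?_⟩)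
    ((hf.mono (Metric.ball_subset_ball hrR.le)).tendstoUniformlyOn_normed_convolution hκ
      hint.aestronglyMeasurable hφ0)
  exact (hf.normed_convolution hint (φ n) (hφ n)).norm_iteratedFDeriv_le hκ hx
    (hsmooth n).contDiffAt k

lemma integrable_indicator_ball (hf : HasFwdDiffBounds f (Metric.ball x₀ R) κ a) (hκ : 0 < κ) :
    Integrable ((Metric.ball x₀ R).indicator f) μ := by
  obtain ⟨C, hC⟩ := hf.exists_norm_le hκ.le
  have hcont : ContinuousOn f (Metric.ball x₀ R) := fun x hx =>
    (hf.continuousAt hκ hx).continuousWithinAt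
  have hfinite : IsFiniteMeasure (μ.restrict (Metric.ball x₀ R)) :=
    isFiniteMeasure_restrict.2 measure_ball_lt_top.ne
  exact (integrable_indicator_iff measurableSet_ball).2
    (Integrable.of_bound (hcont.aestronglyMeasurable measurableSet_ball) C
      (ae_restrict_of_forall_mem measurableSet_ball hC))

end HasFwdDiffBounds

lemma HasFwdDiffBounds.contDiffAt [NormedSpace ℝ E] [FiniteDimensional ℝ E] {f : E → ℂ} {U : Set E}
    {κ : ℝ} {a : ℕ → ℝ} (hf : HasFwdDiffBounds f U κ a) (hκ : 0 < κ) {x : E} (hx : U ∈ nhds x) :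
    ContDiffAt ℝ ∞ f x := by
  let : MeasurableSpace E := borel E
  have : BorelSpace E := ⟨rfl⟩
  obtain ⟨R, hR, hRU⟩ := Metric.mem_nhds_iff.1 hx
  have hball : HasFwdDiffBounds f (Metric.ball x R) κ a := hf.mono hRU
  have heq : EqOn f ((Metric.ball x R).indicator f) (Metric.ball x R) :=
    (eqOn_indicator (s := Metric.ball x R)).symm
  have hcut : HasFwdDiffBounds ((Metric.ball x R).indicator f) (Metric.ball x (R / 2)) κ a :=
    (hball.mono (Metric.ball_subset_ball (by linarith))).congr_ball hκ.le (half_lt_self hR) heq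
  have hsmooth := hcut.contDiffOn_ball_of_locallyIntegrable hκ
    (hball.integrable_indicator_ball (μ := Measure.addHaar) hκ).locallyIntegrable
    (half_lt_self (half_pos hR))
  exact (hsmooth.contDiffAt (Metric.ball_mem_nhds x (by positivity))).congr_of_eventuallyEq
    (heq.eventuallyEq_of_mem (Metric.ball_mem_nhds x hR))

end Mollification

section Germs

open fwdDiff
open scoped ContDiff

variable {E : Type*} [NormedAddCommGroup E] [NormedSpace ℝ E] {W : Set (ℕ → ℝ)} {f : E → ℂ} {x₀ : E}

/-- `f` is smooth on `V` and its derivatives there satisfy the Denjoy–Carleman bounds given by the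
sequence `M`, with constants `C` and `σ`. -/
def HasDerivBounds (M : ℕ → ℝ) (C σ : ℝ) (f : E → ℂ) (V : Set E) : Prop :=
  ∀ y ∈ V, ContDiffAt ℝ ∞ f y ∧ ∀ k, ‖iteratedFDeriv ℝ k f y‖ ≤ C * σ ^ k * M k

lemma HasDerivBounds.mono {M M' : ℕ → ℝ} {C C' σ σ' : ℝ} {V V' : Set E}
    (hf : HasDerivBounds M C σ f V) (hC' : 0 ≤ C') (hσ : 0 ≤ σ) (hM : ∀ k, 0 ≤ M k) (hCC' : C ≤ C')
    (hσσ' : σ ≤ σ') (hMM' : ∀ k, M k ≤ M' k) (hV : V' ⊆ V) : HasDerivBounds M' C' σ' f V' :=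
  fun y hy => ⟨(hf y (hV hy)).1, fun k => ((hf y (hV hy)).2 k).trans <| by
    have hσ' := hσ.trans hσσ'
    have := hM k
    have := hMM' k
    gcongr⟩

lemma exists_matrixRoumieuOn_iff [ProperSpace E] (hW : ∀ M ∈ W, ∀ k, 0 ≤ M k) :
    (∃ U, IsOpen U ∧ x₀ ∈ U ∧ MatrixRoumieuOn W f U) ↔
      ∃ M ∈ W, ∃ C σ r : ℝ, 0 < σ ∧ 0 < r ∧ HasDerivBounds M C σ f (Metric.ball x₀ r) := by
  constructor
  · rintro ⟨U, hU, hxU, hsmooth, hbound⟩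
    obtain ⟨r, hr, hrU⟩ := Metric.nhds_basis_closedBall.mem_iff.1 (hU.mem_nhds hxU)
    have hcl : closure (Metric.ball x₀ r) ⊆ Metric.closedBall x₀ r :=
      Metric.closure_ball_subset_closedBall
    obtain ⟨M, hM, C, σ, -, hσ, hle⟩ := hbound (Metric.ball x₀ r) Metric.isOpen_ball
      ((isCompact_closedBall x₀ r).of_isClosed_subset isClosed_closure hcl) (hcl.trans hrU)
    refine ⟨M, hM, C, σ, r, hσ, hr, fun y hy => ?_⟩
    have hyU : y ∈ U := hrU (Metric.ball_subset_closedBall hy)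
    exact ⟨hsmooth.contDiffAt (hU.mem_nhds hyU), fun k =>
      iteratedFDerivWithin_of_isOpen (𝕜 := ℝ) (f := f) k hU hyU ▸ hle y hy k⟩
  · rintro ⟨M, hM, C, σ, r, hσ, hr, hf⟩
    refine ⟨Metric.ball x₀ r, Metric.isOpen_ball, Metric.mem_ball_self hr,
      fun y hy => (hf y hy).1.contDiffWithinAt, fun V _ _ hV =>
        ⟨M, hM, max C 1, σ, by positivity, hσ, fun y hy k => ?_⟩⟩
    have hyr : y ∈ Metric.ball x₀ r := hV (subset_closure hy)
    have := hW M hM k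
    rw [iteratedFDerivWithin_of_isOpen k Metric.isOpen_ball hyr]
    refine ((hf y hyr).2 k).trans ?_
    gcongr
    exact le_max_left C 1

lemma exists_common_hasDerivBounds [ProperSpace E] {g : E → ℂ} (hW : IsWeightMatrix W)
    (hf : ∃ U, IsOpen U ∧ x₀ ∈ U ∧ MatrixRoumieuOn W f U)
    (hg : ∃ U, IsOpen U ∧ x₀ ∈ U ∧ MatrixRoumieuOn W g U) :
    ∃ M ∈ W, ∃ C σ r : ℝ, 1 ≤ C ∧ 0 < σ ∧ 0 < r ∧
      HasDerivBounds M C σ f (Metric.ball x₀ r) ∧ HasDerivBounds M C σ g (Metric.ball x₀ r) := by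
  have hpos : ∀ M ∈ W, ∀ k, 0 ≤ M k := fun M hM k => ((hW.2.1 M hM).2.1 k).le
  rw [exists_matrixRoumieuOn_iff hpos] at hf hg
  obtain ⟨M₁, hM₁, C₁, σ₁, r₁, hσ₁, hr₁, hf⟩ := hf
  obtain ⟨M₂, hM₂, C₂, σ₂, r₂, hσ₂, hr₂, hg⟩ := hg
  obtain ⟨M, hM, hM₁M, hM₂M⟩ : ∃ M ∈ W, (∀ k, M₁ k ≤ M k) ∧ ∀ k, M₂ k ≤ M k :=
    (hW.2.2 M₁ hM₁ M₂ hM₂).elim (fun h => ⟨M₂, hM₂, h, fun _ => le_rfl⟩)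
      fun h => ⟨M₁, hM₁, fun _ => le_rfl, h⟩
  have hC : 1 ≤ max (max C₁ C₂) 1 := le_max_right _ _
  exact ⟨M, hM, max (max C₁ C₂) 1, max σ₁ σ₂, min r₁ r₂, hC, lt_max_of_lt_left hσ₁, lt_min hr₁ hr₂,
    hf.mono (zero_le_one.trans hC) hσ₁.le (hpos M₁ hM₁) (by simp) (le_max_left _ _) hM₁M
      (Metric.ball_subset_ball (min_le_left _ _)),
    hg.mono (zero_le_one.trans hC) hσ₂.le (hpos M₂ hM₂) (by simp) (le_max_right _ _) hM₂M
      (Metric.ball_subset_ball (min_le_right _ _))⟩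

lemma exists_hasFwdDiffBounds (hW : IsWeightMatrix W) (hreg : RRegular W)
    (hmg : RModerateGrowth W) {M : ℕ → ℝ} (hM : M ∈ W) {j : ℕ} (hj : j ≠ 0) {C σ r : ℝ}
    (hC : 1 ≤ C) (hσ : 0 < σ) (hr : 0 < r)
    (hfj : HasDerivBounds M C σ (f ^ j) (Metric.ball x₀ r))
    (hfj' : HasDerivBounds M C σ (f ^ (j + 1)) (Metric.ball x₀ r)) :
    ∃ N ∈ W, ∃ A τ : ℝ, 0 < τ ∧
      HasFwdDiffBounds f (Metric.ball x₀ (r / 2)) (1 / σ) fun n => A * τ ^ n * N n := by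
  obtain ⟨N, hN, A, τ, hτ, hline⟩ := exists_norm_fwdDiff_iter_le hW hreg hmg hM hj hC
    (b := r / 2 * σ) (by positivity)
  refine ⟨N, hN, A, τ, hτ, fun n => ?_⟩
  obtain ⟨D, δ, hδ, hdiff⟩ := hline n
  refine ⟨D, δ, hδ, fun x hx v hv s hs hsδ => ?_⟩
  have hmem : ∀ t, |t| ≤ r / 2 * σ → x + t • v ∈ Metric.ball x₀ r := fun t ht => by
    have hshift : ‖t • v‖ ≤ r / 2 :=
      calc ‖t • v‖ ≤ r / 2 * σ * (1 / σ) := by rw [norm_smul, Real.norm_eq_abs]; gcongr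
        _ = r / 2 := by field_simp
    rw [mem_ball_iff_norm] at hx ⊢
    have := norm_add_le (x - x₀) (t • v)
    rw [sub_add_eq_add_sub] at this
    linarith
  have hσv : σ * ‖v‖ ≤ 1 := (le_div_iff₀' hσ).1 hv
  have htaylor : ∀ {h : E → ℂ}, HasDerivBounds M C σ h (Metric.ball x₀ r) →
      HasTaylorBounds (mseq M) C (r / 2 * σ) (fun s => h (x + s • v))
        fun k => (iteratedFDeriv ℝ k h x fun _ => v) / k.factorial := fun hh =>
    hasTaylorBounds_add_smul (fun y hy => (hh y hy).1) hσ (by positivity)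
      (fun k y hy => (hh y hy).2 k) hσv hmem
  have hrestrict := fwdDiff_iter_comp_addMonoidHom f
    (LinearMap.toSpanSingleton ℝ E v : ℝ →+ E) x s 0 n
  simp only [AddMonoidHom.coe_coe, LinearMap.toSpanSingleton_apply, zero_smul, add_zero]
    at hrestrict
  exact hrestrict ▸ hdiff (htaylor hfj) (htaylor hfj') s hs hsδ

lemma HasFwdDiffBounds.hasDerivBounds [FiniteDimensional ℝ E] {V : Set E} {κ A τ : ℝ} {N : ℕ → ℝ}
    (hf : HasFwdDiffBounds f V κ fun n => A * τ ^ n * N n) (hV : IsOpen V) (hκ : 0 < κ) :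
    HasDerivBounds N A (2 * Real.exp 1 / κ * τ) f V := fun y hy => by
  have hsmooth := hf.contDiffAt hκ (hV.mem_nhds hy)
  exact ⟨hsmooth, fun k => (hf.norm_iteratedFDeriv_le hκ hy hsmooth k).trans_eq
    (by rw [mul_pow]; ring)⟩

end Germs

theorem statement10_general {E : Type*} [NormedAddCommGroup E] [NormedSpace ℝ E]
    [FiniteDimensional ℝ E] {W : Set (ℕ → ℝ)} (hW : IsWeightMatrix W) (hreg : RRegular W)
    (hmg : RModerateGrowth W) {f : E → ℂ} {x₀ : E} {j : ℕ} (hj : j ≠ 0)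
    (h1 : ∃ U, IsOpen U ∧ x₀ ∈ U ∧ MatrixRoumieuOn W (f ^ j) U)
    (h2 : ∃ U, IsOpen U ∧ x₀ ∈ U ∧ MatrixRoumieuOn W (f ^ (j + 1)) U) :
    ∃ U, IsOpen U ∧ x₀ ∈ U ∧ MatrixRoumieuOn W f U := by
  have : ProperSpace E := FiniteDimensional.proper_real E
  obtain ⟨M, hM, C, σ, r, hC, hσ, hr, hfj, hfj'⟩ := exists_common_hasDerivBounds hW h1 h2
  obtain ⟨N, hN, A, τ, hτ, hdiff⟩ :=
    exists_hasFwdDiffBounds hW hreg hmg hM hj hC hσ hr hfj hfj'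
  exact (exists_matrixRoumieuOn_iff fun M hM k => ((hW.2.1 M hM).2.1 k).le).2
    ⟨N, hN, A, 2 * Real.exp 1 / (1 / σ) * τ, r / 2, by positivity, half_pos hr,
      hdiff.hasDerivBounds Metric.isOpen_ball (by positivity)⟩

/-- for an R-regular weight matrix `W` of R-moderate growth containing a
non-quasianalytic weight sequence, the ring of germs at `0 ∈ ℝ^d` of `E^{W}`-functions
(Roumieu) has property (D). -/
theorem statement10 (d : ℕ) (hd : 1 ≤ d) (W : Set (ℕ → ℝ)) (hW : IsWeightMatrix W)
    (hreg : RRegular W) (hmg : RModerateGrowth W)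
    (hnq : ∃ M ∈ W, NonQuasianalytic M)
    (f : EuclideanSpace ℝ (Fin d) → ℂ) (j : ℕ) (hj : 1 ≤ j)
    (h1 : ∃ U : Set (EuclideanSpace ℝ (Fin d)), IsOpen U ∧ 0 ∈ U ∧
      MatrixRoumieuOn W (f ^ j) U)
    (h2 : ∃ U : Set (EuclideanSpace ℝ (Fin d)), IsOpen U ∧ 0 ∈ U ∧
      MatrixRoumieuOn W (f ^ (j + 1)) U) :
    ∃ U : Set (EuclideanSpace ℝ (Fin d)), IsOpen U ∧ 0 ∈ U ∧ MatrixRoumieuOn W f U :=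
  statement10_general hW hreg hmg (Nat.one_le_iff_ne_zero.1 hj) h1 h2
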